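/- arXiv:1808.04923 — 2 statements merged into one kernel-verified Lean document; each statement's English description precedes it below -/
import Mathlib

section
/- There exists a real constant η > 1 such that m(n)^{1/n} → η as n → ∞, and moreover for every ε with 0 < ε < 1/6 there is a constant K > 0 such that for all sufficiently large n, |log m(n) − n·log η| ≤ K·n·exp(−√((1/6 − ε)·log n·log log n)). -/
/-!
Write `M(A)` for the number of maximal primitive subsets of a finite set `A`. Three facts drive the
proof: `M` is monotone, deleting one element divides it by at most `2` (`mpCount_mono`,
`mpCount_insert_le`), and it is multiplicative over sets with no divisibility between them
(`mpCount_union`); it is also invariant under dilation.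

Fix `y` and write every `m ≤ n` uniquely as `r * s` with `r` free of prime factors below `y`
(rough) and `s` composed of such primes (smooth). If `m ∣ m'` and the rough parts differ, then
`m ≤ n / y`; after deletion of these few `m` the blocks of constant `r` are unrelated. Hence
`log m(n) = ∑ g (n / r) + O(n / y)`, the sum being over rough `r ≤ n`, where `g k = log M` of the
smooth numbers up to `k` (`abs_log_mpCount_sub_sum_le`). The increments `h` of `g` are supported on
smooth numbers and lie in `[0, log 2]`, and the sum equals `∑ h s * #{rough r ≤ n / s}`. Legendre's
sieve counts the rough numbers; bounding each rounding error by `min 1 t ≤ t ^ β` (Rankin) gives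
`log m(n) = c_y n + O(n / y + n ^ β E ^ 2)` for all `0 < β ≤ 1`, where `E` is the Euler product
`∏ (1 - p ^ (-β))⁻¹` over `p < y` (`abs_log_sub_approxConst_le`).

Letting `n → ∞` for fixed `y` shows that `c_y` is Cauchy, with limit `c` at distance at most
`log 2 / y`; then `η = exp c`. It exceeds `1` because of the pairs `{r, 2r}` with
`n / 3 < r ≤ n / 2`. Finally `y ≈ exp Y` and `1 - β = 3Y / (2 log n)` with
`Y = √(log n · log log n / 6)` give an error `O(n · exp (-Y))`, since `E` is small by a
Mertens-type bound for `∑ 1 / p` (`exists_rate`).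
-/


/-- A finite set of positive integers is primitive if no element divides another. -/
def IsPrimitive (S : Finset ℕ) : Prop := ∀ a ∈ S, ∀ b ∈ S, a ∣ b → a = b

/-- `maximalPrimCount n` is the number of maximal primitive subsets of `{1, 2, …, n}`:
primitive subsets `S` such that no element of `{1, …, n} \ S` can be added while
keeping the set primitive. -/
noncomputable def maximalPrimCount (n : ℕ) : ℕ :=
  Nat.card {S : Finset ℕ // S ⊆ Finset.Icc 1 n ∧ IsPrimitive S ∧
    ∀ k ∈ Finset.Icc 1 n, k ∉ S → ¬ IsPrimitive (insert k S)}

/-! ### Counting maximal primitive subsets of an arbitrary finite set -/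

open Finset

/-- `S` is a maximal primitive subset of the finite set `A`, maximality being phrased as: every
element of `A` outside `S` is comparable, for divisibility, to some element of `S`. -/
def IsMaxPrim (A S : Finset ℕ) : Prop :=
  S ⊆ A ∧ IsPrimitive S ∧ ∀ k ∈ A, k ∉ S → ∃ s ∈ S, k ∣ s ∨ s ∣ k

open scoped Classical in
/-- The finite set of all maximal primitive subsets of `A`. -/
noncomputable def maxPrims (A : Finset ℕ) : Finset (Finset ℕ) :=
  A.powerset.filter (IsMaxPrim A)

/-- The number of maximal primitive subsets of an arbitrary finite set `A`. -/
noncomputable def mpCount (A : Finset ℕ) : ℕ := (maxPrims A).card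

lemma mem_maxPrims {A S : Finset ℕ} : S ∈ maxPrims A ↔ IsMaxPrim A S := by
  classical
  simp only [maxPrims, mem_filter, mem_powerset, and_iff_right_iff_imp]
  exact fun h => h.1

lemma not_isPrimitive_insert_iff {S : Finset ℕ} {k : ℕ} (hS : IsPrimitive S) (hk : k ∉ S) :
    ¬ IsPrimitive (insert k S) ↔ ∃ s ∈ S, k ∣ s ∨ s ∣ k := by
  constructor
  · intro h
    by_contra! h2
    apply h
    intro a ha b hb hab
    rw [mem_insert] at ha hb
    rcases ha with rfl | ha <;> rcases hb with rfl | hb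
    · rfl
    · exact absurd hab (h2 b hb).1
    · exact absurd hab (h2 a ha).2
    · exact hS a ha b hb hab
  · rintro ⟨s, hs, h⟩ h2
    have hne : k ≠ s := by rintro rfl; exact hk hs
    rcases h with h | h
    · exact hne (h2 k (mem_insert_self _ _) s (mem_insert_of_mem hs) h)
    · exact hne (h2 s (mem_insert_of_mem hs) k (mem_insert_self _ _) h).symm

lemma maximalPrimCount_eq_mpCount (n : ℕ) : maximalPrimCount n = mpCount (Icc 1 n) := by
  rw [maximalPrimCount, mpCount]
  apply Nat.subtype_card
  intro S
  rw [mem_maxPrims, IsMaxPrim]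
  refine and_congr_right fun _ => and_congr_right fun hS => ?_
  exact forall₂_congr fun k _ => forall_congr' fun hk =>
    (not_isPrimitive_insert_iff hS hk).symm

lemma IsPrimitive.subset {S T : Finset ℕ} (hT : IsPrimitive T) (h : S ⊆ T) : IsPrimitive S :=
  fun a ha b hb => hT a (h ha) b (h hb)

/-- Every primitive subset of `B` extends to a maximal one. -/
lemma exists_isMaxPrim_superset {B S : Finset ℕ} (hSB : S ⊆ B) (hS : IsPrimitive S) :
    ∃ T, IsMaxPrim B T ∧ S ⊆ T := by
  classical
  have hmem : S ∈ B.powerset.filter IsPrimitive := by simp [hSB, hS]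
  obtain ⟨T, hST, hT⟩ := (B.powerset.filter IsPrimitive).exists_le_maximal hmem
  have hT1 := hT.prop
  rw [mem_filter, mem_powerset] at hT1
  refine ⟨T, ⟨hT1.1, hT1.2, fun k hk hkT => ?_⟩, hST⟩
  rw [← not_isPrimitive_insert_iff hT1.2 hkT]
  intro h
  have : insert k T ∈ B.powerset.filter IsPrimitive := by
    rw [mem_filter, mem_powerset]
    exact ⟨insert_subset hk hT1.1, h⟩
  exact hkT (hT.le_of_ge this (subset_insert k T) (mem_insert_self k T))

/-- Monotonicity: extending a maximal primitive subset of `A` to one of `B ⊇ A` and intersecting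
with `A` gives the original set back, so distinct sets have distinct extensions. -/
lemma mpCount_mono {A B : Finset ℕ} (h : A ⊆ B) : mpCount A ≤ mpCount B := by
  classical
  refine (card_le_card (t := (maxPrims B).image (· ∩ A)) ?_).trans card_image_le
  intro S hS
  rw [mem_maxPrims] at hS
  obtain ⟨T, hT, hST⟩ := exists_isMaxPrim_superset (hS.1.trans h) hS.2.1
  refine mem_image.2 ⟨T, mem_maxPrims.2 hT, ?_⟩
  refine Subset.antisymm (fun x hx => ?_) (subset_inter hST hS.1)
  rw [mem_inter] at hx
  by_contra hxS
  obtain ⟨s, hs, hxs⟩ := hS.2.2 x hx.2 hxS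
  have : x = s := by
    rcases hxs with hxs | hxs
    · exact hT.2.1 x hx.1 s (hST hs) hxs
    · exact (hT.2.1 s (hST hs) x hx.1 hxs).symm
  exact hxS (this ▸ hs)

/-- A maximal primitive subset of `insert v A` either omits `v`, and is then maximal in `A`, or
it contains `v`, and the rest is maximal among the elements of `A` not comparable to `v`. -/
lemma mpCount_insert_le (v : ℕ) (A : Finset ℕ) : mpCount (insert v A) ≤ 2 * mpCount A := by
  classical
  by_cases hv : v ∈ A
  · rw [insert_eq_of_mem hv]; omega
  set A' := A.filter (fun k => ¬ (k ∣ v ∨ v ∣ k)) with hA'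
  have hsub : maxPrims (insert v A) ⊆ maxPrims A ∪ (maxPrims A').image (insert v) := by
    intro S hS
    rw [mem_maxPrims] at hS
    obtain ⟨h1, h2, h3⟩ := hS
    rw [mem_union]
    by_cases hvS : v ∈ S
    · right
      refine mem_image.2 ⟨S.erase v, mem_maxPrims.2 ⟨?_, h2.subset (erase_subset _ _), ?_⟩,
        insert_erase hvS⟩
      · intro x hx
        rw [mem_erase] at hx
        have hxA := mem_of_mem_insert_of_ne (h1 hx.2) hx.1
        rw [hA', mem_filter]
        refine ⟨hxA, ?_⟩
        rintro (h | h)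
        · exact hx.1 (h2 x hx.2 v hvS h)
        · exact hx.1 (h2 v hvS x hx.2 h).symm
      · intro k hk hkS
        rw [hA', mem_filter] at hk
        have hkv : k ≠ v := by rintro rfl; exact hv hk.1
        obtain ⟨s, hs, hks⟩ := h3 k (mem_insert_of_mem hk.1)
          (fun h => hkS (mem_erase.2 ⟨hkv, h⟩))
        refine ⟨s, mem_erase.2 ⟨?_, hs⟩, hks⟩
        rintro rfl
        exact hk.2 hks
    · left
      refine mem_maxPrims.2 ⟨?_, h2, fun k hk => h3 k (mem_insert_of_mem hk)⟩
      intro x hx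
      exact mem_of_mem_insert_of_ne (h1 hx) (by rintro rfl; exact hvS hx)
  have h1 := card_le_card hsub
  have h2 := card_union_le (maxPrims A) ((maxPrims A').image (insert v))
  have h3 : ((maxPrims A').image (insert v)).card ≤ (maxPrims A').card := card_image_le
  have h4 : mpCount A' ≤ mpCount A := mpCount_mono (filter_subset _ _)
  simp only [mpCount] at *
  omega

lemma mpCount_union_le (A C : Finset ℕ) : mpCount (C ∪ A) ≤ 2 ^ C.card * mpCount A := by
  classical
  induction C using Finset.induction_on with
  | empty => simp
  | insert v C hv ih =>
    rw [insert_union, card_insert_of_notMem hv, pow_succ]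
    have := mpCount_insert_le v (C ∪ A)
    linarith

lemma mpCount_pos (A : Finset ℕ) : 0 < mpCount A := by
  obtain ⟨T, hT, -⟩ := exists_isMaxPrim_superset (B := A) (S := ∅) (empty_subset _)
    (by intro a ha; simp at ha)
  exact card_pos.2 ⟨T, mem_maxPrims.2 hT⟩

lemma mpCount_empty : mpCount ∅ = 1 := by
  have h : maxPrims ∅ = {∅} := by
    ext S
    rw [mem_maxPrims, mem_singleton, IsMaxPrim]
    constructor
    · rintro ⟨h, -⟩
      exact subset_empty.1 h
    · rintro rfl
      exact ⟨subset_rfl, by intro a ha; simp at ha, by simp⟩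
  rw [mpCount, h, card_singleton]

lemma log_mpCount_nonneg (A : Finset ℕ) : 0 ≤ Real.log (mpCount A) :=
  Real.log_natCast_nonneg _

lemma log_mpCount_mono {A B : Finset ℕ} (h : A ⊆ B) :
    Real.log (mpCount A) ≤ Real.log (mpCount B) :=
  Real.log_le_log (by exact_mod_cast mpCount_pos A) (by exact_mod_cast mpCount_mono h)

/-- Deleting elements changes the logarithm of the count by at most `log 2` per element. -/
lemma log_mpCount_le {A B : Finset ℕ} (h : A ⊆ B) :
    Real.log (mpCount B) ≤ Real.log (mpCount A) + Real.log 2 * (B \ A).card := by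
  have h1 := mpCount_union_le A (B \ A)
  rw [sdiff_union_of_subset h] at h1
  have h2 : (mpCount B : ℝ) ≤ 2 ^ (B \ A).card * mpCount A := by exact_mod_cast h1
  have hA : (0 : ℝ) < mpCount A := by exact_mod_cast mpCount_pos A
  have hB : (0 : ℝ) < mpCount B := by exact_mod_cast mpCount_pos B
  have h3 := Real.log_le_log hB h2
  rw [Real.log_mul (by positivity) hA.ne', Real.log_pow] at h3
  linarith

/-- The count is multiplicative over sets with no divisibility between them. -/
lemma mpCount_union {A B : Finset ℕ} (h : ∀ a ∈ A, ∀ b ∈ B, ¬ a ∣ b ∧ ¬ b ∣ a) :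
    mpCount (A ∪ B) = mpCount A * mpCount B := by
  classical
  have hdisj : ∀ x ∈ A, x ∉ B := fun x hx hx' => (h x hx x hx').1 dvd_rfl
  rw [mpCount, mpCount, mpCount, ← card_product]
  refine card_nbij' (fun S => (S ∩ A, S ∩ B)) (fun P => P.1 ∪ P.2) ?_ ?_ ?_ ?_
  · intro S hS
    have hS' := mem_maxPrims.1 (mem_coe.1 hS)
    obtain ⟨h1, h2, h3⟩ := hS'
    rw [mem_coe, mem_product, mem_maxPrims, mem_maxPrims]
    refine ⟨⟨inter_subset_right, h2.subset inter_subset_left, fun k hk hkS => ?_⟩,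
      ⟨inter_subset_right, h2.subset inter_subset_left, fun k hk hkS => ?_⟩⟩
    · obtain ⟨s, hs, hks⟩ := h3 k (mem_union_left _ hk) (fun h => hkS (mem_inter.2 ⟨h, hk⟩))
      refine ⟨s, mem_inter.2 ⟨hs, ?_⟩, hks⟩
      rcases mem_union.1 (h1 hs) with h' | h'
      · exact h'
      · have := h k hk s h'
        tauto
    · obtain ⟨s, hs, hks⟩ := h3 k (mem_union_right _ hk) (fun h => hkS (mem_inter.2 ⟨h, hk⟩))
      refine ⟨s, mem_inter.2 ⟨hs, ?_⟩, hks⟩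
      rcases mem_union.1 (h1 hs) with h' | h'
      · have := h s h' k hk
        tauto
      · exact h'
  · rintro ⟨S, T⟩ hP
    rw [mem_coe, mem_product, mem_maxPrims, mem_maxPrims] at hP
    obtain ⟨⟨s1, s2, s3⟩, ⟨t1, t2, t3⟩⟩ := hP
    simp only at s1 s2 s3 t1 t2 t3
    rw [mem_coe, mem_maxPrims]
    refine ⟨union_subset_union s1 t1, ?_, ?_⟩
    · intro a ha b hb hab
      rcases mem_union.1 ha with ha | ha <;> rcases mem_union.1 hb with hb | hb
      · exact s2 a ha b hb hab
      · exact absurd hab (h a (s1 ha) b (t1 hb)).1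
      · exact absurd hab (h b (s1 hb) a (t1 ha)).2
      · exact t2 a ha b hb hab
    · intro k hk hkS
      simp only [mem_union, not_or] at hkS
      rcases mem_union.1 hk with hk | hk
      · obtain ⟨s, hs, hks⟩ := s3 k hk hkS.1
        exact ⟨s, mem_union_left _ hs, hks⟩
      · obtain ⟨s, hs, hks⟩ := t3 k hk hkS.2
        exact ⟨s, mem_union_right _ hs, hks⟩
  · intro S hS
    have hS' := mem_maxPrims.1 (mem_coe.1 hS)
    simp only
    rw [← inter_union_distrib_left]
    exact inter_eq_left.2 hS'.1
  · rintro ⟨S, T⟩ hP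
    rw [mem_coe, mem_product, mem_maxPrims, mem_maxPrims] at hP
    have s1 := hP.1.1
    have t1 := hP.2.1
    simp only at s1 t1
    simp only [Prod.mk.injEq]
    constructor
    · ext x
      simp only [mem_inter, mem_union]
      constructor
      · rintro ⟨hx | hx, hxA⟩
        · exact hx
        · exact absurd (t1 hx) (hdisj x hxA)
      · exact fun hx => ⟨Or.inl hx, s1 hx⟩
    · ext x
      simp only [mem_inter, mem_union]
      constructor
      · rintro ⟨hx | hx, hxB⟩
        · exact absurd hxB (hdisj x (s1 hx))
        · exact hx
      · exact fun hx => ⟨Or.inr hx, t1 hx⟩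

lemma log_mpCount_biUnion (I : Finset ℕ) (A : ℕ → Finset ℕ)
    (h : ∀ i ∈ I, ∀ j ∈ I, i ≠ j → ∀ a ∈ A i, ∀ b ∈ A j, ¬ a ∣ b) :
    Real.log (mpCount (I.biUnion A)) = ∑ i ∈ I, Real.log (mpCount (A i)) := by
  classical
  induction I using Finset.induction_on with
  | empty => simp [mpCount_empty]
  | insert v I hv ih =>
    rw [biUnion_insert, sum_insert hv, mpCount_union, Nat.cast_mul, Real.log_mul, ih]
    · exact fun i hi j hj => h i (mem_insert_of_mem hi) j (mem_insert_of_mem hj)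
    · exact_mod_cast (mpCount_pos _).ne'
    · exact_mod_cast (mpCount_pos _).ne'
    · intro a ha b hb
      obtain ⟨j, hj, hbj⟩ := mem_biUnion.1 hb
      have hvj : v ≠ j := by rintro rfl; exact hv hj
      exact ⟨h v (mem_insert_self _ _) j (mem_insert_of_mem hj) hvj a ha b hbj,
        h j (mem_insert_of_mem hj) v (mem_insert_self _ _) hvj.symm b hbj a ha⟩

/-- Dilation preserves divisibility, hence the count. -/
lemma mpCount_image_mul {r : ℕ} (hr : 0 < r) (A : Finset ℕ) :
    mpCount (A.image (r * ·)) = mpCount A := by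
  classical
  have hinj : Function.Injective (r * · : ℕ → ℕ) := fun a b hab => Nat.eq_of_mul_eq_mul_left hr hab
  have hmax : ∀ S, IsMaxPrim (A.image (r * ·)) (S.image (r * ·)) ↔ IsMaxPrim A S := by
    intro S
    unfold IsMaxPrim IsPrimitive
    rw [image_subset_image_iff hinj]
    simp only [forall_mem_image, exists_mem_image, hinj.mem_finset_image,
      Nat.mul_dvd_mul_iff_left hr, Nat.mul_left_cancel_iff hr]
  rw [mpCount, mpCount]
  symm
  have hset : maxPrims (A.image (r * ·)) = (maxPrims A).image (fun S => S.image (r * ·)) := by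
    ext T
    rw [mem_maxPrims, mem_image]
    constructor
    · intro hT
      obtain ⟨S, -, rfl⟩ := subset_image_iff.1 hT.1
      exact ⟨S, mem_maxPrims.2 ((hmax S).1 hT), rfl⟩
    · rintro ⟨S, hS, rfl⟩
      exact (hmax S).2 (mem_maxPrims.1 hS)
  rw [hset, card_image_of_injective _ (image_injective hinj)]

/-! ### Decomposition by rough parts -/

/-- The `y`-rough numbers up to `n`: no prime factor is smaller than `y`. -/
def roughUpTo (y n : ℕ) : Finset ℕ :=
  (Icc 1 n).filter (fun r => ∀ p ∈ Nat.primesBelow y, ¬ p ∣ r)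

lemma mem_roughUpTo {y n r : ℕ} :
    r ∈ roughUpTo y n ↔ (1 ≤ r ∧ r ≤ n) ∧ ∀ p ∈ Nat.primesBelow y, ¬ p ∣ r := by
  rw [roughUpTo, mem_filter, mem_Icc]

lemma coprime_of_smooth_of_rough {y s r : ℕ} (hs : s ∈ Nat.smoothNumbers y)
    (hr : ∀ p ∈ Nat.primesBelow y, ¬ p ∣ r) : Nat.Coprime s r := by
  by_contra h
  obtain ⟨p, hp, h1, h2⟩ := Nat.Prime.not_coprime_iff_dvd.1 h
  exact hr p (Nat.mem_primesBelow.2 ⟨Nat.mem_smoothNumbers'.1 hs p hp h1, hp⟩) h2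

lemma exists_rough_mul_smooth (y m : ℕ) (hm : m ≠ 0) :
    ∃ r s, (∀ p ∈ Nat.primesBelow y, ¬ p ∣ r) ∧ s ∈ Nat.smoothNumbers y ∧ r * s = m := by
  have h1 : (1 : ℕ) ∈ Nat.smoothNumbers y :=
    Nat.mem_smoothNumbers'.2 fun p hp h => absurd (Nat.dvd_one.1 h) hp.ne_one
  have h2 : ∀ p ∈ Nat.primesBelow y, ¬ p ∣ 1 :=
    fun p hp h => absurd (Nat.dvd_one.1 h) (Nat.mem_primesBelow.1 hp).2.ne_one
  induction m using Nat.recOnMul with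
  | zero => exact absurd rfl hm
  | one => exact ⟨1, 1, h2, h1, rfl⟩
  | prime q hq =>
    by_cases hqy : q < y
    · refine ⟨1, q, h2, Nat.mem_smoothNumbers'.2 fun p hp h => ?_, one_mul q⟩
      rwa [(Nat.prime_dvd_prime_iff_eq hp hq).1 h]
    · refine ⟨q, 1, fun p hp h => hqy ?_, h1, mul_one q⟩
      rw [Nat.mem_primesBelow] at hp
      rw [← (Nat.prime_dvd_prime_iff_eq hp.2 hq).1 h]
      exact hp.1
  | mul a b iha ihb =>
    obtain ⟨r, s, hr, hs, rfl⟩ := iha (by rintro rfl; simp at hm)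
    obtain ⟨r', s', hr', hs', rfl⟩ := ihb (by rintro rfl; simp at hm)
    refine ⟨r * r', s * s', fun p hp h => ?_, Nat.mul_mem_smoothNumbers hs hs', by ring⟩
    rcases (Nat.mem_primesBelow.1 hp).2.dvd_mul.1 h with h | h
    · exact hr p hp h
    · exact hr' p hp h

/-- The integers up to `n` whose largest `y`-rough divisor is the `y`-rough number `r`. -/
def block (y n r : ℕ) : Finset ℕ := (Nat.smoothNumbersUpTo (n / r) y).image (r * ·)

lemma mem_block {y n r m : ℕ} (hr : 0 < r) :
    m ∈ block y n r ↔ ∃ s ∈ Nat.smoothNumbers y, r * s = m ∧ m ≤ n := by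
  rw [block, mem_image]
  constructor
  · rintro ⟨s, hs, rfl⟩
    rw [Nat.mem_smoothNumbersUpTo, Nat.le_div_iff_mul_le hr, mul_comm] at hs
    exact ⟨s, hs.2, rfl, hs.1⟩
  · rintro ⟨s, hs, rfl, h⟩
    refine ⟨s, ?_, rfl⟩
    rw [Nat.mem_smoothNumbersUpTo, Nat.le_div_iff_mul_le hr, mul_comm]
    exact ⟨h, hs⟩

lemma biUnion_block (y n : ℕ) : (roughUpTo y n).biUnion (block y n) = Icc 1 n := by
  ext m
  rw [mem_biUnion, mem_Icc]
  constructor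
  · rintro ⟨r, hr, hm⟩
    rw [mem_roughUpTo] at hr
    obtain ⟨s, hs, rfl, hle⟩ := (mem_block hr.1.1).1 hm
    exact ⟨Nat.mul_pos hr.1.1 (Nat.pos_of_ne_zero (Nat.ne_zero_of_mem_smoothNumbers hs)), hle⟩
  · rintro ⟨h1, h2⟩
    obtain ⟨r, s, hr, hs, rfl⟩ := exists_rough_mul_smooth y m (by omega)
    have hr0 : 0 < r := Nat.pos_of_mul_pos_right h1
    have hs0 : 0 < s := Nat.pos_of_ne_zero (Nat.ne_zero_of_mem_smoothNumbers hs)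
    refine ⟨r, mem_roughUpTo.2 ⟨⟨hr0, ?_⟩, hr⟩, (mem_block hr0).2 ⟨s, hs, rfl, h2⟩⟩
    exact (Nat.le_mul_of_pos_right r hs0).trans h2

/-- A divisibility between two different blocks involves a rough factor of at least `y`, so the
smaller number is at most `n / y`. -/
lemma mul_le_of_dvd_of_mem_block {y n r r' a b : ℕ} (hr : r ∈ roughUpTo y n)
    (hr' : r' ∈ roughUpTo y n) (hne : r ≠ r') (ha : a ∈ block y n r) (hb : b ∈ block y n r')
    (hab : a ∣ b) : a * y ≤ n := by
  rw [mem_roughUpTo] at hr hr'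
  obtain ⟨s, hs, rfl, hle⟩ := (mem_block hr.1.1).1 ha
  obtain ⟨s', hs', rfl, hle'⟩ := (mem_block hr'.1.1).1 hb
  have h1 : r ∣ r' := (coprime_of_smooth_of_rough hs' hr.2).symm.dvd_of_dvd_mul_right
    ((dvd_mul_right r s).trans hab)
  have h2 : s ∣ s' := (coprime_of_smooth_of_rough hs hr'.2).dvd_of_dvd_mul_left
    ((dvd_mul_left s r).trans hab)
  have h3 : s ≤ s' :=
    Nat.le_of_dvd (Nat.pos_of_ne_zero (Nat.ne_zero_of_mem_smoothNumbers hs')) h2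
  obtain ⟨t, rfl⟩ := h1
  have ht : t ≠ 1 := by rintro rfl; simp at hne
  have ht0 : 0 < t := by
    rcases Nat.eq_zero_or_pos t with rfl | h
    · simp at hr'
    · exact h
  have h4 : y ≤ t := by
    by_contra! hlt
    obtain ⟨p, hp, hpt⟩ := Nat.exists_prime_and_dvd ht
    exact hr'.2 p (Nat.mem_primesBelow.2 ⟨(Nat.le_of_dvd ht0 hpt).trans_lt hlt, hp⟩)
      (hpt.mul_left r)
  calc r * s * y = r * y * s := by ring
    _ ≤ r * t * s' := Nat.mul_le_mul (Nat.mul_le_mul_left r h4) h3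
    _ ≤ n := hle'

/-- The logarithm of the number of maximal primitive subsets of the `y`-smooth numbers up
to `k`. -/
noncomputable def smoothLog (y k : ℕ) : ℝ := Real.log (mpCount (Nat.smoothNumbersUpTo k y))

lemma log_mpCount_block (y n : ℕ) {r : ℕ} (hr : 0 < r) :
    Real.log (mpCount (block y n r)) = smoothLog y (n / r) := by
  rw [block, mpCount_image_mul hr, smoothLog]

/-- Up to an error `n / y · log 2`, the count splits as a product over the blocks: once the at
most `n / y` numbers `m` with `m * y ≤ n` are deleted, different blocks are unrelated. -/
lemma abs_log_mpCount_sub_sum_le (y n : ℕ) (hy : 0 < y) :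
    |Real.log (mpCount (Icc 1 n)) - ∑ r ∈ roughUpTo y n, smoothLog y (n / r)| ≤
      Real.log 2 * (n / y) := by
  set A : ℕ → Finset ℕ := fun r => (block y n r).filter (fun m => n < m * y) with hA
  set B : ℕ → Finset ℕ := fun r => (block y n r).filter (fun m => ¬ n < m * y) with hB
  have hAu : (roughUpTo y n).biUnion A = (Icc 1 n).filter (fun m => n < m * y) := by
    rw [← biUnion_block y n, filter_biUnion]
  have hBu : (roughUpTo y n).biUnion B = (Icc 1 n).filter (fun m => ¬ n < m * y) := by
    rw [← biUnion_block y n, filter_biUnion]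
  have hcard : (((Icc 1 n).filter (fun m => ¬ n < m * y)).card : ℝ) ≤ n / y := by
    have h1 : ((Icc 1 n).filter (fun m => ¬ n < m * y)).card ≤ n / y := by
      have h2 : (Icc 1 n).filter (fun m => ¬ n < m * y) ⊆ Icc 1 (n / y) := by
        intro m hm
        rw [mem_filter, mem_Icc] at hm
        rw [mem_Icc, Nat.le_div_iff_mul_le hy]
        omega
      simpa using card_le_card h2
    exact (Nat.cast_le.2 h1).trans Nat.cast_div_le
  have hlog2 : 0 < Real.log 2 := Real.log_pos one_lt_two
  have hprod : Real.log (mpCount ((Icc 1 n).filter (fun m => n < m * y))) =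
      ∑ r ∈ roughUpTo y n, Real.log (mpCount (A r)) := by
    rw [← hAu]
    apply log_mpCount_biUnion
    intro r hr r' hr' hne a ha b hb hab
    rw [hA, mem_filter] at ha hb
    have := mul_le_of_dvd_of_mem_block hr hr' hne ha.1 hb.1 hab
    omega
  have hfull1 : Real.log (mpCount ((Icc 1 n).filter (fun m => n < m * y))) ≤
      Real.log (mpCount (Icc 1 n)) := log_mpCount_mono (filter_subset _ _)
  have hfull2 : Real.log (mpCount (Icc 1 n)) ≤
      Real.log (mpCount ((Icc 1 n).filter (fun m => n < m * y))) + Real.log 2 * (n / y) := by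
    refine (log_mpCount_le (filter_subset (fun m => n < m * y) _)).trans ?_
    rw [← filter_not]
    gcongr
  have hsum1 : ∑ r ∈ roughUpTo y n, Real.log (mpCount (A r)) ≤
      ∑ r ∈ roughUpTo y n, smoothLog y (n / r) := by
    refine sum_le_sum fun r hr => ?_
    rw [← log_mpCount_block y n (mem_roughUpTo.1 hr).1.1]
    exact log_mpCount_mono (filter_subset _ _)
  have hsum2 : ∑ r ∈ roughUpTo y n, smoothLog y (n / r) ≤
      ∑ r ∈ roughUpTo y n, Real.log (mpCount (A r)) + Real.log 2 * (n / y) := by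
    have h1 : ∑ r ∈ roughUpTo y n, smoothLog y (n / r) ≤
        ∑ r ∈ roughUpTo y n, (Real.log (mpCount (A r)) + Real.log 2 * (B r).card) := by
      refine sum_le_sum fun r hr => ?_
      rw [← log_mpCount_block y n (mem_roughUpTo.1 hr).1.1]
      have := log_mpCount_le (filter_subset (fun m => n < m * y) (block y n r))
      rwa [← filter_not] at this
    have h2 : ∑ r ∈ roughUpTo y n, ((B r).card : ℝ) ≤ n / y := by
      refine le_trans (le_of_eq ?_) hcard
      rw [← hBu, card_biUnion, Nat.cast_sum]
      intro r hr r' hr' hne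
      rw [Function.onFun, disjoint_left]
      intro m hm hm'
      rw [hB, mem_filter] at hm hm'
      have hr1 := mem_roughUpTo.1 hr
      have hr1' := mem_roughUpTo.1 hr'
      -- a common element `r * s = r' * s'` forces `r ∣ r'` and `r' ∣ r`
      obtain ⟨s, hs, h3, -⟩ := (mem_block hr1.1.1).1 hm.1
      obtain ⟨s', hs', h4, -⟩ := (mem_block hr1'.1.1).1 hm'.1
      apply hne
      apply Nat.dvd_antisymm
      · exact (coprime_of_smooth_of_rough hs' hr1.2).symm.dvd_of_dvd_mul_right
          (by rw [h4, ← h3]; exact dvd_mul_right r s)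
      · exact (coprime_of_smooth_of_rough hs hr1'.2).symm.dvd_of_dvd_mul_right
          (by rw [h3, ← h4]; exact dvd_mul_right r' s')
    rw [sum_add_distrib, ← mul_sum] at h1
    have := mul_le_mul_of_nonneg_left h2 hlog2.le
    linarith
  rw [abs_le]
  constructor <;> linarith

/-- The increments of `smoothLog`. -/
noncomputable def smoothInc (y s : ℕ) : ℝ := smoothLog y s - smoothLog y (s - 1)

lemma smoothLog_eq_sum (y k : ℕ) : smoothLog y k = ∑ s ∈ Icc 1 k, smoothInc y s := by
  induction k with
  | zero =>
    have : Nat.smoothNumbersUpTo 0 y = ∅ := by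
      ext s
      rw [Nat.mem_smoothNumbersUpTo]
      simp only [nonpos_iff_eq_zero, notMem_empty, iff_false, not_and]
      rintro rfl h
      exact Nat.ne_zero_of_mem_smoothNumbers h rfl
    simp [smoothLog, this, mpCount_empty]
  | succ k ih =>
    rw [sum_Icc_succ_top (by omega), ← ih, smoothInc, Nat.add_sub_cancel]
    ring

lemma smoothInc_nonneg (y s : ℕ) : 0 ≤ smoothInc y s := by
  rw [smoothInc, sub_nonneg]
  apply log_mpCount_mono
  intro m hm
  rw [Nat.mem_smoothNumbersUpTo] at hm ⊢
  exact ⟨by omega, hm.2⟩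

lemma smoothInc_le (y s : ℕ) : smoothInc y s ≤ Real.log 2 := by
  have h1 : Nat.smoothNumbersUpTo (s - 1) y ⊆ Nat.smoothNumbersUpTo s y := by
    intro m hm
    rw [Nat.mem_smoothNumbersUpTo] at hm ⊢
    exact ⟨by omega, hm.2⟩
  have h2 := log_mpCount_le h1
  have h3 : (Nat.smoothNumbersUpTo s y \ Nat.smoothNumbersUpTo (s - 1) y).card ≤ 1 := by
    refine (card_le_card (t := {s}) ?_).trans (card_singleton s).le
    intro m hm
    rw [mem_sdiff, Nat.mem_smoothNumbersUpTo, Nat.mem_smoothNumbersUpTo] at hm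
    rw [mem_singleton]
    by_contra hne
    exact hm.2 ⟨by omega, hm.1.2⟩
  have h4 : ((Nat.smoothNumbersUpTo s y \ Nat.smoothNumbersUpTo (s - 1) y).card : ℝ) ≤ 1 := by
    exact_mod_cast h3
  have h5 := mul_le_mul_of_nonneg_left h4 (Real.log_pos one_lt_two).le
  rw [smoothInc, smoothLog, smoothLog]
  linarith

lemma smoothInc_eq_zero {y s : ℕ} (hs : s ∉ Nat.smoothNumbers y) : smoothInc y s = 0 := by
  rw [smoothInc, sub_eq_zero, smoothLog, smoothLog]
  congr 3
  ext m
  rw [Nat.mem_smoothNumbersUpTo, Nat.mem_smoothNumbersUpTo]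
  constructor
  · rintro ⟨h1, h2⟩
    refine ⟨?_, h2⟩
    have : m ≠ s := by rintro rfl; exact hs h2
    omega
  · rintro ⟨h1, h2⟩
    exact ⟨by omega, h2⟩

lemma sum_smoothLog_eq (y n : ℕ) :
    ∑ r ∈ roughUpTo y n, smoothLog y (n / r) =
      ∑ s ∈ Icc 1 n, smoothInc y s * (roughUpTo y (n / s)).card := by
  simp_rw [smoothLog_eq_sum, card_eq_sum_ones, Nat.cast_sum, mul_sum, Nat.cast_one, mul_one]
  apply sum_comm'
  intro r s
  rw [mem_roughUpTo, mem_roughUpTo, mem_Icc, mem_Icc]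
  constructor
  · rintro ⟨⟨⟨h1, h2⟩, h3⟩, h4, h5⟩
    rw [Nat.le_div_iff_mul_le h1] at h5
    refine ⟨⟨⟨h1, ?_⟩, h3⟩, h4, ?_⟩
    · rw [Nat.le_div_iff_mul_le h4, mul_comm]; exact h5
    · exact (Nat.le_mul_of_pos_right s h1).trans h5
  · rintro ⟨⟨⟨h1, h2⟩, h3⟩, h4, h5⟩
    rw [Nat.le_div_iff_mul_le h4] at h2
    refine ⟨⟨⟨h1, ?_⟩, h3⟩, h4, ?_⟩
    · exact (Nat.le_mul_of_pos_right r h4).trans h2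
    · rw [Nat.le_div_iff_mul_le h1, mul_comm]; exact h2

/-! ### Counting rough numbers, and the two-parameter estimate -/

/-- Legendre's sieve: inclusion-exclusion over the primes below `y`. -/
lemma card_roughUpTo (y k : ℕ) :
    ((roughUpTo y k).card : ℝ) =
      ∑ T ∈ (Nat.primesBelow y).powerset, (-1) ^ T.card * ((k / ∏ p ∈ T, p : ℕ) : ℝ) := by
  classical
  have h1 : ∀ m : ℕ, (if ∀ p ∈ Nat.primesBelow y, ¬ p ∣ m then (1 : ℝ) else 0) =
      ∑ T ∈ (Nat.primesBelow y).powerset, (-1) ^ T.card * (if ∏ p ∈ T, p ∣ m then 1 else 0) := by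
    intro m
    have h2 : (if ∀ p ∈ Nat.primesBelow y, ¬ p ∣ m then (1 : ℝ) else 0) =
        ∏ p ∈ Nat.primesBelow y, (1 + -(if p ∣ m then (1 : ℝ) else 0)) := by
      split_ifs with h
      · rw [prod_eq_one]
        intro p hp
        rw [if_neg (h p hp)]; simp
      · push Not at h
        obtain ⟨p, hp, hpm⟩ := h
        rw [prod_eq_zero hp]
        rw [if_pos hpm]; simp
    rw [h2, prod_one_add]
    refine sum_congr rfl fun T hT => ?_
    rw [mem_powerset] at hT
    rw [prod_neg]
    congr 1
    split_ifs with h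
    · rw [prod_eq_one]
      intro p hp
      rw [if_pos ((dvd_prod_of_mem _ hp).trans h)]
    · have : ∃ p ∈ T, ¬ p ∣ m := by
        by_contra! h'
        exact h (prod_primes_dvd m
          (fun p hp => (Nat.mem_primesBelow.1 (hT hp)).2.prime) h')
      obtain ⟨p, hp, hpm⟩ := this
      rw [prod_eq_zero hp]
      rw [if_neg hpm]
  rw [roughUpTo, card_filter, Nat.cast_sum]
  simp_rw [Nat.cast_ite, Nat.cast_one, Nat.cast_zero, h1]
  rw [sum_comm]
  refine sum_congr rfl fun T _ => ?_
  rw [← mul_sum, ← sum_filter, sum_const, nsmul_eq_mul, mul_one]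
  congr 2
  exact Nat.Ioc_filter_dvd_card_eq_div k _

/-- Rankin's trick: the rounding error is at most `min 1 t`, hence at most `t ^ β`. -/
lemma abs_floor_sub_le {t β : ℝ} (ht : 0 < t) (h0 : 0 ≤ β) (h1 : β ≤ 1) :
    |(⌊t⌋₊ : ℝ) - t| ≤ t ^ β := by
  have h2 := Nat.floor_le ht.le
  have h3 := Nat.lt_floor_add_one t
  rw [abs_sub_comm, abs_of_nonneg (by linarith)]
  rcases le_total t 1 with h | h
  · have := Real.rpow_le_rpow_of_exponent_ge ht h h1
    rw [Real.rpow_one] at this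
    have h4 : (0 : ℝ) ≤ ⌊t⌋₊ := Nat.cast_nonneg _
    linarith
  · have := Real.one_le_rpow h h0
    linarith

lemma abs_card_roughUpTo_sub_le (y : ℕ) {n s : ℕ} {β : ℝ} (hn : 0 < n) (hs : 0 < s)
    (h0 : 0 ≤ β) (h1 : β ≤ 1) :
    |((roughUpTo y (n / s)).card : ℝ) - (n / s) * ∏ p ∈ Nat.primesBelow y, (1 - (p : ℝ)⁻¹)| ≤
      (n : ℝ) ^ β * (s : ℝ) ^ (-β) * ∏ p ∈ Nat.primesBelow y, (1 + (p : ℝ) ^ (-β)) := by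
  classical
  have h2 : ∏ p ∈ Nat.primesBelow y, (1 - (p : ℝ)⁻¹) =
      ∑ T ∈ (Nat.primesBelow y).powerset, (-1) ^ T.card * ((∏ p ∈ T, p : ℕ) : ℝ)⁻¹ := by
    simp_rw [sub_eq_add_neg, prod_one_add, prod_neg, Nat.cast_prod, prod_inv_distrib]
  rw [card_roughUpTo, h2, mul_sum, ← sum_sub_distrib, prod_one_add, mul_sum]
  refine (abs_sum_le_sum_abs _ _).trans (sum_le_sum fun T hT => ?_)
  rw [mem_powerset] at hT
  have hd : 0 < ∏ p ∈ T, p := prod_pos fun p hp => (Nat.mem_primesBelow.1 (hT hp)).2.pos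
  have h3 : ∏ p ∈ T, (p : ℝ) ^ (-β) = ((∏ p ∈ T, p : ℕ) : ℝ) ^ (-β) := by
    rw [Nat.cast_prod, Real.finsetProd_rpow]
    exact fun p _ => Nat.cast_nonneg p
  rw [h3]
  set d := ∏ p ∈ T, p
  have hnR : (0 : ℝ) < n := by exact_mod_cast hn
  have hsR : (0 : ℝ) < s := by exact_mod_cast hs
  have hdR : (0 : ℝ) < d := by exact_mod_cast hd
  have h4 : (-1 : ℝ) ^ T.card * ((n / s / d : ℕ) : ℝ) - n / s * ((-1) ^ T.card * (d : ℝ)⁻¹) =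
      (-1) ^ T.card * ((⌊(n : ℝ) / s / d⌋₊ : ℝ) - n / s / d) := by
    rw [Nat.floor_div_natCast, Nat.floor_div_natCast, Nat.floor_natCast]
    ring
  rw [h4, abs_mul, abs_pow, abs_neg, abs_one, one_pow, one_mul]
  refine (abs_floor_sub_le (by positivity) h0 h1).trans (le_of_eq ?_)
  rw [Real.div_rpow (by positivity) hdR.le, Real.div_rpow hnR.le hsR.le, Real.rpow_neg hsR.le,
    Real.rpow_neg hdR.le]
  ring

/-- The Euler product over the primes below `y`, equal to the sum of `s ^ (-β)` over the
`y`-smooth numbers `s` when `β > 0`. -/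
noncomputable def eulerProd (y : ℕ) (β : ℝ) : ℝ :=
  ∏ p ∈ Nat.primesBelow y, (1 - (p : ℝ) ^ (-β))⁻¹

lemma hasSum_smooth (y : ℕ) {β : ℝ} (hβ : 0 < β) :
    HasSum (Set.indicator (Nat.smoothNumbers y) (fun s : ℕ => (s : ℝ) ^ (-β)))
      (eulerProd y β) := by
  let f : ℕ →* ℝ :=
    { toFun := fun s => (s : ℝ) ^ (-β)
      map_one' := by simp
      map_mul' := fun a b => by
        rw [Nat.cast_mul, Real.mul_rpow (Nat.cast_nonneg a) (Nat.cast_nonneg b)] }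
  have h := (EulerProduct.summable_and_hasSum_smoothNumbers_prod_primesBelow_geometric (f := f)
    (fun {p} hp => by
      change ‖(p : ℝ) ^ (-β)‖ < 1
      rw [Real.norm_of_nonneg (by positivity)]
      exact Real.rpow_lt_one_of_one_lt_of_neg (by exact_mod_cast hp.one_lt) (by linarith)) y).2
  exact hasSum_subtype_iff_indicator.1 h

lemma smoothInc_mul_le (y s : ℕ) (β : ℝ) : smoothInc y s * (s : ℝ) ^ (-β) ≤
    Real.log 2 * Set.indicator (Nat.smoothNumbers y) (fun s : ℕ => (s : ℝ) ^ (-β)) s := by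
  by_cases hs : s ∈ Nat.smoothNumbers y
  · rw [Set.indicator_of_mem hs]
    exact mul_le_mul_of_nonneg_right (smoothInc_le y s) (by positivity)
  · rw [Set.indicator_of_notMem hs, smoothInc_eq_zero hs]; simp

lemma summable_smoothInc (y : ℕ) {β : ℝ} (hβ : 0 < β) :
    Summable (fun s : ℕ => smoothInc y s * (s : ℝ) ^ (-β)) :=
  Summable.of_nonneg_of_le (fun s => mul_nonneg (smoothInc_nonneg y s) (by positivity))
    (fun s => smoothInc_mul_le y s β) ((hasSum_smooth y hβ).summable.mul_left _)

/-- The approximation to `log η` obtained from the `y`-smooth numbers. -/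
noncomputable def approxConst (y : ℕ) : ℝ :=
  (∏ p ∈ Nat.primesBelow y, (1 - (p : ℝ)⁻¹)) * ∑' s : ℕ, smoothInc y s * (s : ℝ) ^ (-1 : ℝ)

lemma one_add_le_eulerFactor {p : ℕ} (hp : p.Prime) {β : ℝ} (hβ : 0 < β) :
    1 + (p : ℝ) ^ (-β) ≤ (1 - (p : ℝ) ^ (-β))⁻¹ := by
  have h1 : (p : ℝ) ^ (-β) < 1 :=
    Real.rpow_lt_one_of_one_lt_of_neg (by exact_mod_cast hp.one_lt) (by linarith)
  rw [← one_div, le_div_iff₀ (by linarith)]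
  nlinarith [sq_nonneg ((p : ℝ) ^ (-β))]

/-- The two-parameter estimate from which everything follows by choosing `y` and `β`. -/
lemma abs_log_sub_approxConst_le (y n : ℕ) (hy : 0 < y) (hn : 0 < n) {β : ℝ} (h0 : 0 < β)
    (h1 : β ≤ 1) :
    |Real.log (mpCount (Icc 1 n)) - n * approxConst y| ≤
      Real.log 2 * (n / y) + Real.log 2 * ((n : ℝ) ^ β * eulerProd y β ^ 2) := by
  have hA := abs_log_mpCount_sub_sum_le y n hy
  rw [sum_smoothLog_eq] at hA
  set P := ∏ p ∈ Nat.primesBelow y, (1 - (p : ℝ)⁻¹) with hP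
  have hS1 : ∑ s ∈ Icc 1 n, smoothInc y s * ((roughUpTo y (n / s)).card : ℝ) =
      ∑' s : ℕ, smoothInc y s * ((roughUpTo y (n / s)).card : ℝ) := by
    symm
    apply tsum_eq_sum
    intro s hs
    rw [mem_Icc, not_and_or] at hs
    have : n / s = 0 := by
      rcases hs with hs | hs
      · have : s = 0 := by omega
        rw [this, Nat.div_zero]
      · exact Nat.div_eq_of_lt (by omega)
    rw [this]
    simp [roughUpTo]
  have hsum1 : Summable (fun s : ℕ => smoothInc y s * ((roughUpTo y (n / s)).card : ℝ)) := by
    apply summable_of_hasFiniteSupport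
    apply (Icc 1 n).finite_toSet.subset
    intro s hs
    by_contra h
    apply hs
    rw [mem_coe, mem_Icc, not_and_or] at h
    have : n / s = 0 := by
      rcases h with h | h
      · have : s = 0 := by omega
        rw [this, Nat.div_zero]
      · exact Nat.div_eq_of_lt (by omega)
    simp [this, roughUpTo]
  have hsum2 : Summable (fun s : ℕ => (n * P) * (smoothInc y s * (s : ℝ) ^ (-1 : ℝ))) :=
    (summable_smoothInc y one_pos).mul_left _
  have hS2 : n * approxConst y = ∑' s : ℕ, (n * P) * (smoothInc y s * (s : ℝ) ^ (-1 : ℝ)) := by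
    rw [approxConst, tsum_mul_left, mul_assoc]
  set D := ∏ p ∈ Nat.primesBelow y, (1 + (p : ℝ) ^ (-β)) with hD
  have hD0 : 0 ≤ D := prod_nonneg fun p _ => by positivity
  have hDE : D ≤ eulerProd y β := by
    apply prod_le_prod
    · exact fun p _ => by positivity
    · exact fun p hp => one_add_le_eulerFactor (Nat.mem_primesBelow.1 hp).2 h0
  have hterm : ∀ s : ℕ, ‖smoothInc y s * ((roughUpTo y (n / s)).card : ℝ) -
      (n * P) * (smoothInc y s * (s : ℝ) ^ (-1 : ℝ))‖ ≤ ((n : ℝ) ^ β * D * Real.log 2) *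
        Set.indicator (Nat.smoothNumbers y) (fun s : ℕ => (s : ℝ) ^ (-β)) s := by
    intro s
    by_cases hs : s ∈ Nat.smoothNumbers y
    · have hs0 : 0 < s := Nat.pos_of_ne_zero (Nat.ne_zero_of_mem_smoothNumbers hs)
      have h3 := abs_card_roughUpTo_sub_le y hn hs0 h0.le h1
      rw [Real.norm_eq_abs]
      have h4 : smoothInc y s * ((roughUpTo y (n / s)).card : ℝ) -
          (n * P) * (smoothInc y s * (s : ℝ) ^ (-1 : ℝ)) =
          smoothInc y s * (((roughUpTo y (n / s)).card : ℝ) - (n / s) * P) := by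
        rw [Real.rpow_neg_one]; ring
      rw [h4, abs_mul, abs_of_nonneg (smoothInc_nonneg y s), Set.indicator_of_mem hs]
      calc smoothInc y s * |((roughUpTo y (n / s)).card : ℝ) - (n / s) * P|
          ≤ Real.log 2 * ((n : ℝ) ^ β * (s : ℝ) ^ (-β) * D) :=
            mul_le_mul (smoothInc_le y s) h3 (abs_nonneg _) (Real.log_nonneg one_le_two)
        _ = _ := by ring
    · rw [smoothInc_eq_zero hs, Set.indicator_of_notMem hs]; simp
  have hE := (hasSum_smooth y h0).mul_left ((n : ℝ) ^ β * D * Real.log 2)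
  have h5 := tsum_of_norm_bounded hE hterm
  rw [hsum1.tsum_sub hsum2, ← hS1, ← hS2, Real.norm_eq_abs] at h5
  have hE0 : 0 ≤ eulerProd y β := hD0.trans hDE
  have h6 : (n : ℝ) ^ β * D * Real.log 2 * eulerProd y β ≤
      Real.log 2 * ((n : ℝ) ^ β * eulerProd y β ^ 2) := by
    have : (n : ℝ) ^ β * D * Real.log 2 * eulerProd y β =
      Real.log 2 * ((n : ℝ) ^ β * (D * eulerProd y β)) := by ring
    rw [this, sq]
    have := Real.log_nonneg (x := 2) one_le_two
    gcongr
  have h7 := abs_sub_le (Real.log (mpCount (Icc 1 n)))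
    (∑ s ∈ Icc 1 n, smoothInc y s * ((roughUpTo y (n / s)).card : ℝ)) (n * approxConst y)
  linarith

/-! ### Bounds for the Euler product, the limit, and its rate -/

/-- Chebyshev's bound `∏ p ≤ 4 ^ N` over the primes up to `N` shows that a dyadic block of primes
contributes at most `4 / j`. -/
lemma sum_inv_dyadic_le {j : ℕ} (hj : 0 < j) :
    ∑ p ∈ (Nat.primesBelow (2 ^ (j + 1))).filter (fun p => 2 ^ j ≤ p), (p : ℝ)⁻¹ ≤ 4 / j := by
  set F := (Nat.primesBelow (2 ^ (j + 1))).filter (fun p => 2 ^ j ≤ p) with hF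
  have h1 : (2 ^ j) ^ F.card ≤ 4 ^ (2 ^ (j + 1)) := by
    calc (2 ^ j) ^ F.card ≤ ∏ p ∈ F, p := by
          apply pow_card_le_prod
          intro p hp
          exact (mem_filter.1 hp).2
      _ ≤ primorial (2 ^ (j + 1)) := by
          rw [primorial]
          apply prod_le_prod_of_subset_of_one_le'
          · intro p hp
            have h2 := Nat.mem_primesBelow.1 (mem_filter.1 hp).1
            rw [mem_filter, mem_range]
            exact ⟨by omega, h2.2⟩
          · intro p hp _
            exact (mem_filter.1 hp).2.one_le
      _ ≤ _ := primorial_le_four_pow _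
  have h2 : j * F.card ≤ 4 * 2 ^ j := by
    have h3 : (4 : ℕ) ^ (2 ^ (j + 1)) = 2 ^ (4 * 2 ^ j) := by
      rw [show (4 : ℕ) = 2 ^ 2 by norm_num, ← pow_mul]
      congr 1
      ring
    rw [h3, ← pow_mul] at h1
    exact (Nat.pow_le_pow_iff_right (by norm_num)).1 h1
  have h4 : ∑ p ∈ F, (p : ℝ)⁻¹ ≤ ∑ p ∈ F, ((2 : ℝ) ^ j)⁻¹ := by
    apply sum_le_sum
    intro p hp
    have h5 : (2 : ℝ) ^ j ≤ p := by exact_mod_cast (mem_filter.1 hp).2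
    exact inv_anti₀ (by positivity) h5
  rw [sum_const, nsmul_eq_mul] at h4
  refine h4.trans ?_
  have hjR : (0 : ℝ) < j := by exact_mod_cast hj
  have h6 : (j : ℝ) * F.card ≤ 4 * 2 ^ j := by exact_mod_cast h2
  rw [← div_eq_mul_inv, div_le_div_iff₀ (by positivity) hjR]
  linarith

lemma sum_inv_primesBelow_le (J : ℕ) :
    ∑ p ∈ Nat.primesBelow (2 ^ (J + 1)), (p : ℝ)⁻¹ ≤ 4 * (harmonic J : ℝ) := by
  induction J with
  | zero =>
    have : Nat.primesBelow (2 ^ (0 + 1)) = ∅ := by decide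
    rw [this]; simp
  | succ J ih =>
    have h1 := sum_inv_dyadic_le (j := J + 1) (by omega)
    rw [← sum_filter_add_sum_filter_not _ (fun p => 2 ^ (J + 1) ≤ p), harmonic_succ]
    have h2 : (Nat.primesBelow (2 ^ (J + 1 + 1))).filter (fun p => ¬ 2 ^ (J + 1) ≤ p) =
        Nat.primesBelow (2 ^ (J + 1)) := by
      ext p
      rw [mem_filter, Nat.mem_primesBelow, Nat.mem_primesBelow, pow_succ 2 (J + 1)]
      constructor
      · rintro ⟨⟨h, h'⟩, h''⟩
        exact ⟨by omega, h'⟩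
      · rintro ⟨h, h'⟩
        exact ⟨⟨by omega, h'⟩, by omega⟩
    rw [h2]
    push_cast at h1 ⊢
    rw [div_eq_mul_inv] at h1
    linarith

lemma eulerProd_nonneg (y : ℕ) {β : ℝ} (hβ : 0 < β) : 0 ≤ eulerProd y β :=
  prod_nonneg fun p hp => (by positivity : (0 : ℝ) ≤ 1 + (p : ℝ) ^ (-β)).trans
    (one_add_le_eulerFactor (Nat.mem_primesBelow.1 hp).2 hβ)

lemma inv_one_sub_le_exp {x : ℝ} (h0 : 0 ≤ x) (h1 : x ≤ 3 / 4) :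
    (1 - x)⁻¹ ≤ Real.exp (4 * x) := by
  have h2 := Real.add_one_le_exp (4 * x)
  rw [← one_div, div_le_iff₀ (by linarith)]
  nlinarith

/-- The Euler product at `1 - σ` is controlled by `∑ p ^ (σ - 1) ≤ y ^ σ · ∑ p⁻¹`. -/
lemma eulerProd_sq_le {J : ℕ} (hJ : 0 < J) {σ : ℝ} (h0 : 0 ≤ σ) (h1 : σ ≤ 1 / 2) :
    eulerProd (2 ^ J) (1 - σ) ^ 2 ≤
      Real.exp (32 * (2 : ℝ) ^ (J * σ) * (1 + Real.log J)) := by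
  have h2 : eulerProd (2 ^ J) (1 - σ) ≤
      Real.exp (∑ p ∈ Nat.primesBelow (2 ^ J), 4 * (p : ℝ) ^ (-(1 - σ))) := by
    rw [Real.exp_sum, eulerProd]
    apply prod_le_prod
    · intro p hp
      exact (by positivity : (0 : ℝ) ≤ 1 + (p : ℝ) ^ (-(1 - σ))).trans
        (one_add_le_eulerFactor (Nat.mem_primesBelow.1 hp).2 (by linarith))
    · intro p hp
      apply inv_one_sub_le_exp (by positivity)
      have hp2 : (2 : ℝ) ≤ p := by exact_mod_cast (Nat.mem_primesBelow.1 hp).2.two_le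
      calc (p : ℝ) ^ (-(1 - σ)) ≤ (2 : ℝ) ^ (-(1 - σ)) :=
            Real.rpow_le_rpow_of_nonpos (by norm_num) hp2 (by linarith)
        _ ≤ (2 : ℝ) ^ (-(1 / 2) : ℝ) :=
            Real.rpow_le_rpow_of_exponent_le (by norm_num) (by linarith)
        _ ≤ 3 / 4 := by
            rw [Real.rpow_neg (by norm_num), ← Real.sqrt_eq_rpow, inv_le_comm₀ (by positivity)
              (by norm_num)]
            exact Real.le_sqrt_of_sq_le (by norm_num)
  have h3 : ∑ p ∈ Nat.primesBelow (2 ^ J), 4 * (p : ℝ) ^ (-(1 - σ)) ≤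
      16 * (2 : ℝ) ^ (J * σ) * (1 + Real.log J) := by
    have h4 : ∑ p ∈ Nat.primesBelow (2 ^ J), 4 * (p : ℝ) ^ (-(1 - σ)) ≤
        ∑ p ∈ Nat.primesBelow (2 ^ J), (4 * (2 : ℝ) ^ (J * σ)) * (p : ℝ)⁻¹ := by
      apply sum_le_sum
      intro p hp
      have hp0 : (0 : ℝ) < p := by exact_mod_cast (Nat.mem_primesBelow.1 hp).2.pos
      have hp1 : (p : ℝ) ≤ 2 ^ (J : ℝ) := by
        rw [Real.rpow_natCast]
        exact_mod_cast (Nat.mem_primesBelow.1 hp).1.le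
      have h5 : (p : ℝ) ^ (-(1 - σ)) = (p : ℝ) ^ σ * (p : ℝ)⁻¹ := by
        rw [← Real.rpow_neg_one, ← Real.rpow_add hp0]
        congr 1
        ring
      have h6 : (p : ℝ) ^ σ ≤ (2 : ℝ) ^ (J * σ) := by
        rw [Real.rpow_mul (by norm_num)]
        exact Real.rpow_le_rpow hp0.le hp1 h0
      rw [h5, ← mul_assoc]
      gcongr
    obtain ⟨J, rfl⟩ : ∃ K, J = K + 1 := ⟨J - 1, by omega⟩
    have h7 := sum_inv_primesBelow_le J
    have h8 := harmonic_le_one_add_log J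
    have h9 : Real.log J ≤ Real.log (J + 1 : ℕ) := by
      rcases Nat.eq_zero_or_pos J with rfl | h
      · simp
      · apply Real.log_le_log (by exact_mod_cast h)
        push_cast
        linarith
    have h10 : ∑ p ∈ Nat.primesBelow (2 ^ (J + 1)), (p : ℝ)⁻¹ ≤
        4 * (1 + Real.log (J + 1 : ℕ)) := by linarith
    refine h4.trans ?_
    rw [← mul_sum]
    calc (4 * (2 : ℝ) ^ ((J + 1 : ℕ) * σ)) *
          ∑ p ∈ Nat.primesBelow (2 ^ (J + 1)), (p : ℝ)⁻¹
        ≤ (4 * (2 : ℝ) ^ ((J + 1 : ℕ) * σ)) * (4 * (1 + Real.log (J + 1 : ℕ))) := by gcongr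
      _ = _ := by ring
  calc eulerProd (2 ^ J) (1 - σ) ^ 2
      ≤ Real.exp (16 * (2 : ℝ) ^ (J * σ) * (1 + Real.log J)) ^ 2 := by
        have := eulerProd_nonneg (2 ^ J) (β := 1 - σ) (by linarith)
        gcongr
        exact h2.trans (Real.exp_le_exp.2 h3)
    _ = _ := by
        rw [← Real.exp_nat_mul]
        congr 1
        push_cast
        ring

open Filter Topology

lemma abs_div_sub_approxConst_le (y n : ℕ) (hy : 0 < y) (hn : 0 < n) :
    |Real.log (mpCount (Icc 1 n)) / n - approxConst y| ≤ Real.log 2 / y +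
      Real.log 2 * eulerProd y (1 / 2) ^ 2 * (n : ℝ) ^ (-(1 / 2) : ℝ) := by
  have h := abs_log_sub_approxConst_le y n hy hn (β := 1 / 2) (by norm_num) (by norm_num)
  have hnR : (0 : ℝ) < n := by exact_mod_cast hn
  have h1 : Real.log (mpCount (Icc 1 n)) / n - approxConst y =
      (Real.log (mpCount (Icc 1 n)) - n * approxConst y) / n := by
    field_simp
  rw [h1, abs_div, abs_of_pos hnR, div_le_iff₀ hnR]
  refine h.trans (le_of_eq ?_)
  have h2 : (n : ℝ) ^ (1 / 2 : ℝ) = (n : ℝ) ^ (-(1 / 2) : ℝ) * n := by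
    nth_rewrite 3 [← Real.rpow_one (n : ℝ)]
    rw [← Real.rpow_add hnR]
    norm_num
  rw [h2]
  ring

lemma tendsto_error (y : ℕ) :
    Tendsto (fun n : ℕ => Real.log 2 / y +
      Real.log 2 * eulerProd y (1 / 2) ^ 2 * (n : ℝ) ^ (-(1 / 2) : ℝ)) atTop
      (𝓝 (Real.log 2 / y)) := by
  have h := ((tendsto_rpow_neg_atTop (y := 1 / 2) (by norm_num)).comp
    tendsto_natCast_atTop_atTop).const_mul (Real.log 2 * eulerProd y (1 / 2) ^ 2)
  have h' := h.const_add (Real.log 2 / y)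
  simpa using h'

/-- The constants `approxConst y` form a Cauchy sequence, since each of them is within
`log 2 / y` of `log m(n) / n`, up to an error that vanishes as `n → ∞`. -/
lemma exists_limit : ∃ c : ℝ, ∀ y : ℕ, 0 < y → |approxConst y - c| ≤ Real.log 2 / y := by
  have h1 : ∀ y z : ℕ, 0 < y → 0 < z →
      |approxConst y - approxConst z| ≤ Real.log 2 / y + Real.log 2 / z := by
    intro y z hy hz
    refine ge_of_tendsto ((tendsto_error y).add (tendsto_error z)) ?_
    filter_upwards [eventually_gt_atTop 0] with n hn
    have h2 := abs_div_sub_approxConst_le y n hy hn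
    have h3 := abs_div_sub_approxConst_le z n hz hn
    rw [abs_sub_comm] at h2
    exact (abs_sub_le _ _ _).trans (add_le_add h2 h3)
  have h0 : Tendsto (fun y : ℕ => Real.log 2 / y) atTop (𝓝 0) :=
    tendsto_const_div_atTop_nhds_zero_nat _
  have hC : CauchySeq approxConst := by
    rw [Metric.cauchySeq_iff']
    intro ε hε
    have h2 := (h0.eventually (gt_mem_nhds (half_pos hε))).and (eventually_gt_atTop 0)
    obtain ⟨N, hN⟩ := eventually_atTop.1 h2
    refine ⟨N, fun n hn => ?_⟩
    rw [Real.dist_eq]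
    have := h1 n N (hN n hn).2 (hN N le_rfl).2
    have := (hN n hn).1
    have := (hN N le_rfl).1
    linarith
  obtain ⟨c, hc⟩ := cauchySeq_tendsto_of_complete hC
  refine ⟨c, fun y hy => ?_⟩
  have h2 : Tendsto (fun z : ℕ => |approxConst y - approxConst z|) atTop
      (𝓝 |approxConst y - c|) := (hc.const_sub _).abs
  have h3 : Tendsto (fun z : ℕ => Real.log 2 / y + Real.log 2 / z) atTop
      (𝓝 (Real.log 2 / y)) := by simpa using h0.const_add (Real.log 2 / y)
  refine le_of_tendsto_of_tendsto h2 h3 ?_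
  filter_upwards [eventually_gt_atTop 0] with z hz
  exact h1 y z hy hz

lemma tendsto_log_div {c : ℝ} (hc : ∀ y : ℕ, 0 < y → |approxConst y - c| ≤ Real.log 2 / y) :
    Tendsto (fun n : ℕ => Real.log (mpCount (Icc 1 n)) / n) atTop (𝓝 c) := by
  rw [Metric.tendsto_atTop']
  intro ε hε
  have h0 : Tendsto (fun y : ℕ => Real.log 2 / y) atTop (𝓝 0) :=
    tendsto_const_div_atTop_nhds_zero_nat _
  obtain ⟨y, hy1, hy⟩ :=
    ((h0.eventually (gt_mem_nhds (half_pos hε))).and (eventually_gt_atTop 0)).exists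
  have h2 := ((tendsto_error y).eventually (gt_mem_nhds hy1)).and (eventually_gt_atTop 0)
  obtain ⟨N, hN⟩ := eventually_atTop.1 h2
  refine ⟨N, fun n hn => ?_⟩
  obtain ⟨h3, h4⟩ := hN n hn.le
  have h5 := abs_div_sub_approxConst_le y n hy h4
  have h6 := hc y hy
  rw [Real.dist_eq]
  have := abs_sub_le (Real.log (mpCount (Icc 1 n)) / n) (approxConst y) c
  linarith

lemma two_le_mpCount_pair {r : ℕ} (hr : 0 < r) : 2 ≤ mpCount {r, 2 * r} := by
  classical
  have hne : r ≠ 2 * r := by omega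
  have hsingle : ∀ x, IsPrimitive {x} := by
    intro x a ha b hb _
    rw [mem_singleton] at ha hb
    rw [ha, hb]
  have hsub : ({{r}, {2 * r}} : Finset (Finset ℕ)) ⊆ maxPrims {r, 2 * r} := by
    intro S hS
    rw [mem_insert, mem_singleton] at hS
    rw [mem_maxPrims]
    rcases hS with rfl | rfl
    · refine ⟨by simp, hsingle _, fun k hk _ => ⟨r, mem_singleton_self _, Or.inr ?_⟩⟩
      rw [mem_insert, mem_singleton] at hk
      rcases hk with rfl | rfl
      · exact dvd_rfl
      · exact dvd_mul_left _ _
    · refine ⟨by simp, hsingle _, fun k hk _ => ⟨2 * r, mem_singleton_self _, Or.inl ?_⟩⟩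
      rw [mem_insert, mem_singleton] at hk
      rcases hk with rfl | rfl
      · exact dvd_mul_left _ _
      · exact dvd_rfl
  have h := card_le_card hsub
  rwa [card_pair (by simpa using hne)] at h

/-- The pairs `{r, 2r}` with `2k < r ≤ 3k` are pairwise unrelated, and each offers two choices. -/
lemma le_log_mpCount (k : ℕ) : k * Real.log 2 ≤ Real.log (mpCount (Icc 1 (6 * k))) := by
  have h1 : (Ioc (2 * k) (3 * k)).biUnion (fun r => ({r, 2 * r} : Finset ℕ)) ⊆
      Icc 1 (6 * k) := by
    intro m hm
    rw [mem_biUnion] at hm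
    obtain ⟨r, hr, hm⟩ := hm
    rw [mem_Ioc] at hr
    rw [mem_insert, mem_singleton] at hm
    rw [mem_Icc]
    omega
  refine le_trans ?_ (log_mpCount_mono h1)
  rw [log_mpCount_biUnion]
  · calc (k : ℝ) * Real.log 2 = ∑ r ∈ Ioc (2 * k) (3 * k), Real.log 2 := by
          rw [sum_const, Nat.card_Ioc, nsmul_eq_mul]
          congr 2
          omega
      _ ≤ _ := by
          apply sum_le_sum
          intro r hr
          rw [mem_Ioc] at hr
          apply Real.log_le_log (by norm_num)
          exact_mod_cast two_le_mpCount_pair (by omega)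
  · rintro r hr r' hr' hne a ha b hb ⟨t, rfl⟩
    rw [mem_Ioc] at hr hr'
    rw [mem_insert, mem_singleton] at ha hb
    have ht : t < 3 := by
      by_contra! ht
      have : a * 3 ≤ a * t := Nat.mul_le_mul_left a ht
      omega
    interval_cases t <;> omega

lemma limit_pos {c : ℝ}
    (hc : Tendsto (fun n : ℕ => Real.log (mpCount (Icc 1 n)) / n) atTop (𝓝 c)) : 0 < c := by
  have h1 : Tendsto (fun k : ℕ => 6 * k) atTop atTop :=
    tendsto_id.const_mul_atTop' (by norm_num)
  have h2 := hc.comp h1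
  have hlog2 : 0 < Real.log 2 := Real.log_pos one_lt_two
  refine lt_of_lt_of_le (by positivity : 0 < Real.log 2 / 6) (ge_of_tendsto h2 ?_)
  filter_upwards [eventually_gt_atTop 0] with k hk
  have h3 := le_log_mpCount k
  have hkR : (0 : ℝ) < k := by exact_mod_cast hk
  simp only [Function.comp_apply]
  push_cast
  rw [div_le_div_iff₀ (by norm_num) (by positivity)]
  linarith

/-- The choice `y = 2 ^ J ≈ exp Y` and `β = 1 - 3Y / (2 log n)`, where
`Y = √(log n · log log n / 6)`. Then `n ^ β = n · exp (-3Y/2)`, while `y ^ (1 - β)` is of order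
`(log n) ^ (1/4)`, so that the Euler product is at most `exp (Y / 2)`. -/
lemma exists_rate {c : ℝ} (hc : ∀ y : ℕ, 0 < y → |approxConst y - c| ≤ Real.log 2 / y) :
    ∃ N : ℕ, ∀ n : ℕ, N ≤ n → |Real.log (mpCount (Icc 1 n)) - n * c| ≤
      3 * n * Real.exp (-Real.sqrt (1 / 6 * Real.log n * Real.log (Real.log n))) := by
  have hlim1 : ∀ᶠ t : ℝ in atTop, 64 * Real.exp 1 * (1 + t) ≤ Real.exp (t / 4) := by
    have h1 : Tendsto (fun s : ℝ => Real.exp s / s ^ 1) atTop atTop :=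
      Real.tendsto_exp_div_pow_atTop 1
    have h2 : Tendsto (fun t : ℝ => t / 4) atTop atTop := tendsto_id.atTop_div_const (by norm_num)
    filter_upwards [(h1.comp h2).eventually_ge_atTop (64 * Real.exp 1 * 8),
      eventually_ge_atTop 1] with t ht ht1
    simp only [Function.comp_apply, pow_one] at ht
    rw [le_div_iff₀ (by linarith)] at ht
    have := Real.exp_pos 1
    nlinarith
  have hL : Tendsto (fun n : ℕ => Real.log n) atTop atTop :=
    Real.tendsto_log_atTop.comp tendsto_natCast_atTop_atTop
  have ht : Tendsto (fun n : ℕ => Real.log (Real.log n)) atTop atTop :=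
    Real.tendsto_log_atTop.comp hL
  obtain ⟨N, hN⟩ := eventually_atTop.1 (((ht.eventually hlim1).and
    (ht.eventually_ge_atTop 6)).and ((hL.eventually_ge_atTop 3).and (eventually_gt_atTop 0)))
  refine ⟨N, fun n hn => ?_⟩
  obtain ⟨⟨h1, h2⟩, h3, h4⟩ := hN n hn
  have hnR : (0 : ℝ) < n := by exact_mod_cast h4
  set L := Real.log n with hLdef
  set t := Real.log L with htdef
  set Y := Real.sqrt (1 / 6 * L * t) with hYdef
  have hLpos : 0 < L := by linarith
  have hLexp : Real.exp t = L := Real.exp_log hLpos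
  have hYsq : Y ^ 2 = 1 / 6 * L * t := Real.sq_sqrt (by positivity)
  have hY0 : 0 ≤ Y := Real.sqrt_nonneg _
  have hYlow : Real.exp (t / 2) ≤ Y := by
    apply Real.le_sqrt_of_sq_le
    have : Real.exp (t / 2) ^ 2 = L := by
      rw [← Real.exp_nat_mul, ← hLexp]
      congr 1
      push_cast
      ring
    rw [this]
    nlinarith
  have hYpos : 0 < Y := (Real.exp_pos _).trans_le hYlow
  have hYup : 3 * Y ≤ L := by
    have h5 : t + 1 ≤ L := by rw [← hLexp]; exact Real.add_one_le_exp t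
    have h5' : t / 2 + 1 ≤ Real.exp (t / 2) := Real.add_one_le_exp _
    have h5'' : 2 * t ≤ L := by
      have : Real.exp (t / 2) * Real.exp (t / 2) = L := by
        rw [← Real.exp_add, add_halves, hLexp]
      nlinarith
    apply abs_le_of_sq_le_sq' _ hLpos.le |>.2
    rw [mul_pow, hYsq]
    nlinarith
  set J := ⌈Y / Real.log 2⌉₊ with hJdef
  set σ := 3 * Y / (2 * L) with hσdef
  have hlog2 : 0 < Real.log 2 := Real.log_pos one_lt_two
  have hlog2' : Real.log 2 < 1 := by have := Real.log_two_lt_d9; linarith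
  have hlog2'' : 1 / 2 < Real.log 2 := by have := Real.log_two_gt_d9; linarith
  have hJpos : 0 < J := Nat.ceil_pos.2 (by positivity)
  have hJ1 : Y ≤ J * Real.log 2 := by
    have := Nat.le_ceil (Y / Real.log 2)
    rwa [div_le_iff₀ hlog2] at this
  have hJ2 : (J : ℝ) * Real.log 2 ≤ Y + Real.log 2 := by
    have := Nat.ceil_lt_add_one (by positivity : 0 ≤ Y / Real.log 2)
    rw [← hJdef] at this
    have h5 := mul_le_mul_of_nonneg_right this.le hlog2.le
    rwa [add_mul, div_mul_cancel₀ _ hlog2.ne', one_mul] at h5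
  have hJL : (J : ℝ) ≤ L := by nlinarith
  have hlogJ : Real.log J ≤ t := Real.log_le_log (by exact_mod_cast hJpos) hJL
  have hlogJ0 : 0 ≤ Real.log J := Real.log_natCast_nonneg J
  have hσ0 : 0 ≤ σ := by positivity
  have hσ1 : σ ≤ 1 / 2 := by
    rw [hσdef, div_le_div_iff₀ (by positivity) (by norm_num)]
    linarith
  have hσY : σ * Y = t / 4 := by
    have : σ * Y = 3 * Y ^ 2 / (2 * L) := by rw [hσdef]; ring
    rw [this, hYsq]
    field_simp
    norm_num
  have hσL : σ * L = 3 / 2 * Y := by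
    rw [hσdef]
    field_simp
  have hpow : (2 : ℝ) ^ (J * σ) ≤ Real.exp 1 * Real.exp (t / 4) := by
    rw [Real.rpow_def_of_pos (by norm_num), ← Real.exp_add]
    apply Real.exp_le_exp.2
    nlinarith
  have hexp : 32 * (2 : ℝ) ^ (J * σ) * (1 + Real.log J) ≤ Y / 2 := by
    calc 32 * (2 : ℝ) ^ (J * σ) * (1 + Real.log J)
        ≤ 32 * (Real.exp 1 * Real.exp (t / 4)) * (1 + t) := by gcongr
      _ = (64 * Real.exp 1 * (1 + t)) * Real.exp (t / 4) / 2 := by ring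
      _ ≤ Real.exp (t / 4) * Real.exp (t / 4) / 2 := by gcongr
      _ = Real.exp (t / 2) / 2 := by
          rw [← Real.exp_add]
          congr 2
          ring
      _ ≤ Y / 2 := by linarith
  have hE := (eulerProd_sq_le hJpos hσ0 hσ1).trans (Real.exp_le_exp.2 hexp)
  have hnβ : (n : ℝ) ^ (1 - σ) = n * Real.exp (-(3 / 2 * Y)) := by
    rw [Real.rpow_sub hnR, Real.rpow_one, Real.rpow_def_of_pos hnR, ← hLdef, mul_comm L, hσL,
      Real.exp_neg, div_eq_mul_inv]
  have hmain := abs_log_sub_approxConst_le (2 ^ J) n (by positivity) h4 (β := 1 - σ)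
    (by linarith) (by linarith)
  have hyinv : (1 : ℝ) / (2 ^ J : ℕ) ≤ Real.exp (-Y) := by
    rw [Real.exp_neg, one_div]
    apply inv_anti₀ (Real.exp_pos _)
    push_cast
    rw [← Real.rpow_natCast, Real.rpow_def_of_pos (by norm_num)]
    apply Real.exp_le_exp.2
    linarith
  have hsecond : (n : ℝ) ^ (1 - σ) * eulerProd (2 ^ J) (1 - σ) ^ 2 ≤ n * Real.exp (-Y) := by
    rw [hnβ]
    calc (n : ℝ) * Real.exp (-(3 / 2 * Y)) * eulerProd (2 ^ J) (1 - σ) ^ 2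
        ≤ n * Real.exp (-(3 / 2 * Y)) * Real.exp (Y / 2) := by gcongr
      _ = n * Real.exp (-Y) := by
          rw [mul_assoc, ← Real.exp_add]
          congr 2
          ring
  have hfirst : (n : ℝ) / (2 ^ J : ℕ) ≤ n * Real.exp (-Y) := by
    calc (n : ℝ) / (2 ^ J : ℕ) = n * (1 / (2 ^ J : ℕ)) := by ring
      _ ≤ _ := by gcongr
  have hcy : |n * approxConst (2 ^ J) - n * c| ≤ Real.log 2 * (n / (2 ^ J : ℕ)) := by
    rw [← mul_sub, abs_mul, abs_of_pos hnR]
    calc (n : ℝ) * |approxConst (2 ^ J) - c| ≤ n * (Real.log 2 / (2 ^ J : ℕ)) := by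
          gcongr
          exact hc _ (by positivity)
      _ = _ := by ring
  have htri := abs_sub_le (Real.log (mpCount (Icc 1 n))) (n * approxConst (2 ^ J)) (n * c)
  have hX : 0 ≤ n * Real.exp (-Y) := by positivity
  nlinarith

theorem maximal_primitive_count_asymptotic :
    ∃ η : ℝ, 1 < η ∧
      Filter.Tendsto (fun n : ℕ => (maximalPrimCount n : ℝ) ^ ((n : ℝ)⁻¹))
        Filter.atTop (nhds η) ∧
      ∀ ε : ℝ, 0 < ε → ε < 1 / 6 →
        ∃ K : ℝ, 0 < K ∧ ∃ N : ℕ, ∀ n : ℕ, N ≤ n →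
          |Real.log (maximalPrimCount n) - (n : ℝ) * Real.log η| ≤
            K * n * Real.exp (-Real.sqrt ((1 / 6 - ε) * Real.log n * Real.log (Real.log n))) := by
  obtain ⟨c, hc⟩ := exists_limit
  have hlim := tendsto_log_div hc
  refine ⟨Real.exp c, Real.one_lt_exp_iff.2 (limit_pos hlim), ?_, fun ε h0 h1 => ?_⟩
  · refine ((Real.continuous_exp.tendsto c).comp hlim).congr fun n => ?_
    have : (0 : ℝ) < mpCount (Icc 1 n) := by exact_mod_cast mpCount_pos _
    rw [maximalPrimCount_eq_mpCount, Real.rpow_def_of_pos this, Function.comp_apply,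
      div_eq_mul_inv]
  · obtain ⟨N, hN⟩ := exists_rate hc
    -- once `log n ≥ 1`, also `log (log n) ≥ 0`, so lowering `1 / 6` to `1 / 6 - ε` only weakens
    -- the bound
    have hL : Tendsto (fun n : ℕ => Real.log n) atTop atTop :=
      Real.tendsto_log_atTop.comp tendsto_natCast_atTop_atTop
    obtain ⟨N', hN'⟩ := eventually_atTop.1 (hL.eventually_ge_atTop 1)
    refine ⟨3, by norm_num, max N N', fun n hn => ?_⟩
    rw [maximalPrimCount_eq_mpCount, Real.log_exp]
    refine (hN n ((le_max_left _ _).trans hn)).trans ?_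
    have h2 := hN' n ((le_max_right _ _).trans hn)
    have h3 : 0 ≤ Real.log (Real.log n) := Real.log_nonneg h2
    gcongr
    linarith
end

section
/- The lower limit liminf_{n→∞} Q(n)^{1/n} is strictly greater than 1.572939. -/
/-- `Q n` is the number of primitive subsets of `{1, 2, …, n}`. -/
noncomputable def Q (n : ℕ) : ℕ :=
  Nat.card {S : Finset ℕ // S ⊆ Finset.Icc 1 n ∧ IsPrimitive S}

namespace PrimitiveCount

noncomputable section

open scoped FinsetFamily

/-! ### Up-closed sets under divisibility -/

/-- The subsets `U` of `V` that contain every multiple in `V` of each of their elements. -/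
def ups (V : Finset ℕ) : Finset (Finset ℕ) :=
  V.powerset.filter fun U => ∀ a ∈ U, ∀ b ∈ V, a ∣ b → b ∈ U

lemma mem_ups {V U : Finset ℕ} : U ∈ ups V ↔ U ⊆ V ∧ ∀ a ∈ U, ∀ b ∈ V, a ∣ b → b ∈ U := by
  simp [ups]

lemma ups_card_pos (V : Finset ℕ) : 0 < (ups V).card :=
  Finset.card_pos.2 ⟨∅, by simp [mem_ups]⟩

lemma ups_empty : (ups ∅).card = 1 := by
  rw [Finset.card_eq_one]
  refine ⟨∅, ?_⟩
  ext U
  simp [mem_ups]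

/-- An up-closed set is determined by its minimal elements, which form a primitive set. -/
lemma ups_card_le_Q (n : ℕ) : (ups (Finset.Icc 1 n)).card ≤ Q n := by
  classical
  unfold Q
  rw [← Nat.card_eq_finsetCard]
  have hfin : Finite {S : Finset ℕ // S ⊆ Finset.Icc 1 n ∧ IsPrimitive S} :=
    Set.Finite.subset (Finset.finite_toSet (Finset.Icc 1 n).powerset)
      (fun S hS => Finset.mem_coe.2 (Finset.mem_powerset.2 hS.1))
  let f : ups (Finset.Icc 1 n) →
      {S : Finset ℕ // S ⊆ Finset.Icc 1 n ∧ IsPrimitive S} := fun U =>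
    ⟨U.1.filter fun a => ∀ b ∈ U.1, b ∣ a → b = a, by
      refine ⟨(Finset.filter_subset _ _).trans (mem_ups.1 U.2).1, ?_⟩
      intro a ha b hb hab
      exact (Finset.mem_filter.1 hb).2 a (Finset.mem_filter.1 ha).1 hab⟩
  -- every element of an up-closed set is a multiple of a minimal one
  have key : ∀ U ∈ ups (Finset.Icc 1 n), ∀ a ∈ U, ∃ b ∈ U.filter (fun a => ∀ b ∈ U, b ∣ a → b = a),
      b ∣ a := by
    intro U hU a
    induction a using Nat.strong_induction_on with
    | _ a ih =>
      intro ha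
      by_cases h : ∀ b ∈ U, b ∣ a → b = a
      · exact ⟨a, Finset.mem_filter.2 ⟨ha, h⟩, dvd_rfl⟩
      · push Not at h
        obtain ⟨b, hb, hba, hne⟩ := h
        have ha0 : 0 < a := (Finset.mem_Icc.1 ((mem_ups.1 hU).1 ha)).1
        obtain ⟨x, hx, hxb⟩ := ih b (lt_of_le_of_ne (Nat.le_of_dvd ha0 hba) hne) hb
        exact ⟨x, hx, hxb.trans hba⟩
  have sub : ∀ U ∈ ups (Finset.Icc 1 n), ∀ W ∈ ups (Finset.Icc 1 n),
      U.filter (fun a => ∀ b ∈ U, b ∣ a → b = a) = W.filter (fun a => ∀ b ∈ W, b ∣ a → b = a) →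
      U ⊆ W := by
    intro U hU W hW h a ha
    obtain ⟨b, hb, hba⟩ := key U hU a ha
    rw [h] at hb
    exact (mem_ups.1 hW).2 b (Finset.mem_filter.1 hb).1 a ((mem_ups.1 hU).1 ha) hba
  refine Nat.card_le_card_of_injective f ?_
  intro U W h
  have h' := congrArg Subtype.val h
  exact Subtype.ext (Finset.Subset.antisymm (sub _ U.2 _ W.2 h') (sub _ W.2 _ U.2 h'.symm))

/-- The subsets in `ups V` containing every multiple of `m` lying in `V`. -/
def upsOver (m : ℕ) (V : Finset ℕ) : Finset (Finset ℕ) :=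
  (ups V).filter fun U => ∀ b ∈ V, m ∣ b → b ∈ U

lemma ups_insert_card {m : ℕ} {V : Finset ℕ} (hm : m ∉ V) (h : ∀ v ∈ V, ¬ v ∣ m) :
    (ups (insert m V)).card = (ups V).card + (upsOver m V).card := by
  classical
  have h1 : (ups (insert m V)).filter (fun U => m ∉ U) = ups V := by
    ext U
    simp only [Finset.mem_filter, mem_ups]
    constructor
    · rintro ⟨⟨hU, hc⟩, hmU⟩
      refine ⟨fun a ha => ?_, fun a ha b hb hab => hc a ha b (Finset.mem_insert_of_mem hb) hab⟩
      rcases Finset.mem_insert.1 (hU ha) with rfl | h'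
      · exact absurd ha hmU
      · exact h'
    · rintro ⟨hU, hc⟩
      refine ⟨⟨hU.trans (Finset.subset_insert _ _), fun a ha b hb hab => ?_⟩, fun h' => hm (hU h')⟩
      rcases Finset.mem_insert.1 hb with rfl | h'
      · exact absurd hab (h a (hU ha))
      · exact hc a ha b h' hab
  have h2 : ((ups (insert m V)).filter (fun U => ¬ m ∉ U)).card = (upsOver m V).card := by
    symm
    refine Finset.card_bij (fun U _ => insert m U) ?_ ?_ ?_
    · intro U hU
      simp only [upsOver, Finset.mem_filter, mem_ups] at hU ⊢
      obtain ⟨⟨hU, hc⟩, ho⟩ := hU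
      refine ⟨⟨Finset.insert_subset_insert _ hU, fun a ha b hb hab => ?_⟩, by simp⟩
      rcases Finset.mem_insert.1 hb with rfl | hbV
      · simp
      · refine Finset.mem_insert_of_mem ?_
        rcases Finset.mem_insert.1 ha with rfl | haU
        · exact ho b hbV hab
        · exact hc a haU b hbV hab
    · intro U hU W hW hUW
      have hU' : m ∉ U := fun h' => hm ((mem_ups.1 (Finset.mem_filter.1 hU).1).1 h')
      have hW' : m ∉ W := fun h' => hm ((mem_ups.1 (Finset.mem_filter.1 hW).1).1 h')
      rw [← Finset.erase_insert hU', ← Finset.erase_insert hW', hUW]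
    · intro U hU
      simp only [Finset.mem_filter, mem_ups, not_not] at hU
      obtain ⟨⟨hU, hc⟩, hmU⟩ := hU
      refine ⟨U.erase m, ?_, Finset.insert_erase hmU⟩
      simp only [upsOver, Finset.mem_filter, mem_ups]
      refine ⟨⟨fun a ha => ?_, fun a ha b hb hab => ?_⟩, fun b hb hab => ?_⟩
      · obtain ⟨hne, ha⟩ := Finset.mem_erase.1 ha
        exact (Finset.mem_insert.1 (hU ha)).resolve_left hne
      · exact Finset.mem_erase.2 ⟨fun h' => hm (h' ▸ hb),
          hc a (Finset.mem_of_mem_erase ha) b (Finset.mem_insert_of_mem hb) hab⟩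
      · exact Finset.mem_erase.2 ⟨fun h' => hm (h' ▸ hb),
          hc m hmU b (Finset.mem_insert_of_mem hb) hab⟩
  rw [← Finset.card_filter_add_card_filter_not (s := ups (insert m V)) (fun U => m ∉ U), h1, h2]

/-- Restricting to an up-closed `W ⊆ V` that contains the multiples of `m` only lowers the ratio
by which adjoining `m` multiplies the number of up-closed sets. This is Daykin's inequality in the
lattice of finite sets. -/
lemma ups_supermodular {m : ℕ} {V W : Finset ℕ} (hm : m ∉ V) (h : ∀ v ∈ V, ¬ v ∣ m)
    (hW : W ∈ ups V) (hmul : ∀ v ∈ V, m ∣ v → v ∈ W) :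
    (ups (insert m W)).card * (ups V).card ≤ (ups (insert m V)).card * (ups W).card := by
  classical
  obtain ⟨hWV, hWc⟩ := mem_ups.1 hW
  rw [ups_insert_card hm h, ups_insert_card (fun h' => hm (hWV h')) fun v hv => h v (hWV hv)]
  have key := Finset.le_card_infs_mul_card_sups (upsOver m W) (ups V)
  have h1 : upsOver m W ⊼ ups V ⊆ ups W := by
    intro U hU
    obtain ⟨S, hS, T, hT, rfl⟩ := Finset.mem_infs.1 hU
    simp only [upsOver, Finset.mem_filter, mem_ups] at hS hT ⊢
    refine ⟨fun a ha => hS.1.1 (Finset.mem_inter.1 ha).1, fun a ha b hb hab => ?_⟩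
    exact Finset.mem_inter.2 ⟨hS.1.2 a (Finset.mem_inter.1 ha).1 b hb hab,
      hT.2 a (Finset.mem_inter.1 ha).2 b (hWV hb) hab⟩
  have h2 : upsOver m W ⊻ ups V ⊆ upsOver m V := by
    intro U hU
    obtain ⟨S, hS, T, hT, rfl⟩ := Finset.mem_sups.1 hU
    simp only [upsOver, Finset.mem_filter, mem_ups] at hS hT ⊢
    refine ⟨⟨fun a ha => ?_, fun a ha b hb hab => ?_⟩, fun b hb hab => ?_⟩
    · rcases Finset.mem_union.1 ha with h' | h'
      · exact hWV (hS.1.1 h')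
      · exact hT.1 h'
    · rcases Finset.mem_union.1 ha with h' | h'
      · exact Finset.mem_union_left _ (hS.1.2 a h' b (hWc a (hS.1.1 h') b hb hab) hab)
      · exact Finset.mem_union_right _ (hT.2 a h' b hb hab)
    · exact Finset.mem_union_left _ (hS.2 b (hmul b hb hab) hab)
  have h3 := key.trans (Nat.mul_le_mul (Finset.card_le_card h1) (Finset.card_le_card h2))
  nlinarith

/-- Scaling invariance: only the divisibility relation on the set matters. -/
lemma ups_card_image (f : ℕ → ℕ) (L : Finset ℕ) (hf : ∀ a ∈ L, ∀ b ∈ L, f a ∣ f b ↔ a ∣ b) :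
    (ups (L.image f)).card = (ups L).card := by
  classical
  have hinj : ∀ a ∈ L, ∀ b ∈ L, f a = f b → a = b := fun a ha b hb h =>
    Nat.dvd_antisymm ((hf a ha b hb).1 h.dvd) ((hf b hb a ha).1 h.symm.dvd)
  symm
  refine Finset.card_bij (fun U _ => U.image f) ?_ ?_ ?_
  · intro U hU
    obtain ⟨hU, hc⟩ := mem_ups.1 hU
    refine mem_ups.2 ⟨Finset.image_subset_image hU, fun x hx y hy hxy => ?_⟩
    obtain ⟨a, ha, rfl⟩ := Finset.mem_image.1 hx
    obtain ⟨b, hb, rfl⟩ := Finset.mem_image.1 hy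
    exact Finset.mem_image_of_mem _ (hc a ha b hb ((hf a (hU ha) b hb).1 hxy))
  · have sub : ∀ U ∈ ups L, ∀ W ∈ ups L, U.image f = W.image f → U ⊆ W := by
      intro U hU W hW h a ha
      have h1 : f a ∈ W.image f := h ▸ Finset.mem_image_of_mem f ha
      obtain ⟨b, hb, hba⟩ := Finset.mem_image.1 h1
      rw [← hinj b ((mem_ups.1 hW).1 hb) a ((mem_ups.1 hU).1 ha) hba]
      exact hb
    exact fun U hU W hW h => Finset.Subset.antisymm (sub U hU W hW h) (sub W hW U hU h.symm)
  · intro X hX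
    obtain ⟨hX, hc⟩ := mem_ups.1 hX
    refine ⟨L.filter fun a => f a ∈ X, ?_, ?_⟩
    · refine mem_ups.2 ⟨Finset.filter_subset _ _, fun a ha b hb hab => ?_⟩
      obtain ⟨haL, haX⟩ := Finset.mem_filter.1 ha
      exact Finset.mem_filter.2 ⟨hb, hc _ haX _ (Finset.mem_image_of_mem _ hb)
        ((hf a haL b hb).2 hab)⟩
    · ext x
      constructor
      · intro hx
        obtain ⟨a, ha, rfl⟩ := Finset.mem_image.1 hx
        exact (Finset.mem_filter.1 ha).2
      · intro hx
        obtain ⟨a, ha, rfl⟩ := Finset.mem_image.1 (hX hx)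
        exact Finset.mem_image_of_mem _ (Finset.mem_filter.2 ⟨ha, hx⟩)

/-! ### The gain of a single integer -/

/-- The increment of `log #ups` when `m` is adjoined to `{m + 1, …, n}`. -/
def gain (n m : ℕ) : ℝ :=
  Real.log (ups (Finset.Icc m n)).card - Real.log (ups (Finset.Icc (m + 1) n)).card

lemma insert_Icc_succ {m n : ℕ} (h : m ≤ n) :
    insert m (Finset.Icc (m + 1) n) = Finset.Icc m n := by
  ext x
  simp only [Finset.mem_insert, Finset.mem_Icc]
  omega

lemma not_dvd_of_mem_Icc_succ {m n : ℕ} (hm : 0 < m) : ∀ v ∈ Finset.Icc (m + 1) n, ¬ v ∣ m := by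
  intro v hv hvm
  have := Nat.le_of_dvd hm hvm
  have := (Finset.mem_Icc.1 hv).1
  omega

lemma gain_nonneg {n m : ℕ} (hm : 0 < m) (h : m ≤ n) : 0 ≤ gain n m := by
  unfold gain
  rw [← insert_Icc_succ h, ups_insert_card (by simp) (not_dvd_of_mem_Icc_succ hm), sub_nonneg]
  refine Real.log_le_log (by exact_mod_cast ups_card_pos _) ?_
  push_cast
  linarith [Nat.cast_nonneg (α := ℝ) (upsOver m (Finset.Icc (m + 1) n)).card]

lemma sum_gain (n : ℕ) :
    ∑ m ∈ Finset.Icc 1 n, gain n m = Real.log (ups (Finset.Icc 1 n)).card := by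
  have h1 : Finset.Icc 1 n = Finset.Ico 1 (n + 1) := by
    ext x
    simp only [Finset.mem_Icc, Finset.mem_Ico]
    omega
  rw [h1, Finset.sum_Ico_eq_sum_range]
  simp only [gain, Nat.add_sub_cancel]
  have := Finset.sum_range_sub' (fun i => Real.log (ups (Finset.Icc (1 + i) n)).card) n
  simp only [← add_assoc] at this
  rw [← h1, this, Finset.Icc_eq_empty (a := 1 + n) (by omega), ups_empty]
  simp

/-- The denominator of `m / 720` in lowest terms. -/
def classOf (m : ℕ) : ℕ := 720 / Nat.gcd 720 m

/-- The local lower bound: a vertex `j` of the finite model `L` stands for the integer `m * j / 720`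
and the vertex `720` stands for `m`. -/
lemma gain_ge {c lo hi m n : ℕ} {L : Finset ℕ} (hm : 0 < m) (hc : classOf m = c)
    (hL : ∀ j ∈ L, c ∣ j ∧ 720 ≤ j ∧ j ≤ lo) (h720 : 720 ∈ L)
    (hcl : ∀ j ∈ L, ∀ t, 0 < t → j * t < hi → j * t ∈ L)
    (hlo : m * lo ≤ 720 * n) (hhi : 720 * n < m * hi) :
    Real.log (ups L).card - Real.log (ups (L.erase 720)).card ≤ gain n m := by
  classical
  obtain ⟨g, hg⟩ : ∃ g, Nat.gcd 720 m = g := ⟨_, rfl⟩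
  have hg0 : 0 < g := hg ▸ Nat.gcd_pos_of_pos_left _ (by norm_num)
  have hgc : g * c = 720 := by
    rw [← hc, classOf, hg]
    exact Nat.mul_div_cancel' (hg ▸ Nat.gcd_dvd_left _ _)
  obtain ⟨m', hm'⟩ : g ∣ m := hg ▸ Nat.gcd_dvd_right _ _
  have hc0 : 0 < c := Nat.pos_of_ne_zero (by rintro rfl; simp at hgc)
  have hm'0 : 0 < m' := Nat.pos_of_ne_zero (by rintro rfl; simp at hm'; omega)
  have h720lo : 720 ≤ lo := (hL 720 h720).2.2
  have hmn : m ≤ n := by nlinarith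
  set f : ℕ → ℕ := fun j => m' * (j / c) with hf
  have hf720 : f 720 = m := by
    simp only [hf]
    rw [← hgc, Nat.mul_div_cancel _ hc0, hm', mul_comm]
  have hfj : ∀ j, c ∣ j → 720 * f j = m * j := by
    rintro j ⟨i, rfl⟩
    simp only [hf]
    rw [Nat.mul_div_cancel_left _ hc0, ← hgc, hm']
    ring
  have hdvd : ∀ a ∈ L, ∀ b ∈ L, f a ∣ f b ↔ a ∣ b := by
    intro a ha b hb
    rw [← Nat.mul_dvd_mul_iff_left (a := 720) (by norm_num), hfj a (hL a ha).1, hfj b (hL b hb).1,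
      Nat.mul_dvd_mul_iff_left hm]
  have himg : L.image f = insert m ((L.erase 720).image f) := by
    conv_lhs => rw [← Finset.insert_erase h720]
    rw [Finset.image_insert, hf720]
  have hW : (L.erase 720).image f ∈ ups (Finset.Icc (m + 1) n) := by
    refine mem_ups.2 ⟨fun x hx => ?_, fun x hx y hy hxy => ?_⟩
    · obtain ⟨j, hj, rfl⟩ := Finset.mem_image.1 hx
      obtain ⟨hne, hj⟩ := Finset.mem_erase.1 hj
      obtain ⟨h1, h2, h3⟩ := hL j hj
      have h4 := hfj j h1
      have h5 : m * 721 ≤ m * j := Nat.mul_le_mul_left _ (by omega)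
      have h6 : m * j ≤ m * lo := Nat.mul_le_mul_left _ h3
      rw [Finset.mem_Icc]
      constructor <;> omega
    · obtain ⟨j, hj, rfl⟩ := Finset.mem_image.1 hx
      obtain ⟨hne, hj⟩ := Finset.mem_erase.1 hj
      obtain ⟨h1, h2, h3⟩ := hL j hj
      obtain ⟨t, rfl⟩ := hxy
      have hy' := Finset.mem_Icc.1 hy
      have ht : 0 < t := Nat.pos_of_ne_zero (by rintro rfl; simp at hy')
      have h4 : 720 * (f j * t) = m * (j * t) := by rw [← mul_assoc, hfj j h1, mul_assoc]
      have h5 : j * t < hi := by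
        by_contra hcon
        have := Nat.mul_le_mul_left m (not_lt.1 hcon)
        omega
      have h6 := hcl j hj t ht h5
      refine Finset.mem_image.2 ⟨j * t, Finset.mem_erase.2 ⟨?_, h6⟩, ?_⟩
      · have : j * 1 ≤ j * t := Nat.mul_le_mul_left _ ht
        omega
      · have := hfj (j * t) (h1.mul_right t)
        omega
  have hmul : ∀ v ∈ Finset.Icc (m + 1) n, m ∣ v → v ∈ (L.erase 720).image f := by
    rintro v hv ⟨t, rfl⟩
    obtain ⟨hv1, hv2⟩ := Finset.mem_Icc.1 hv
    have ht : 2 ≤ t := by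
      by_contra hcon
      have : m * t ≤ m * 1 := Nat.mul_le_mul_left _ (by omega)
      omega
    have h5 : 720 * t < hi := by
      by_contra hcon
      have := Nat.mul_le_mul_left m (not_lt.1 hcon)
      have h7 : m * (720 * t) = 720 * (m * t) := by ring
      omega
    have h6 := hcl 720 h720 t (by omega) h5
    refine Finset.mem_image.2 ⟨720 * t, Finset.mem_erase.2 ⟨by omega, h6⟩, ?_⟩
    have := hfj (720 * t) ((hL 720 h720).1.mul_right t)
    have h7 : m * (720 * t) = 720 * (m * t) := by ring
    omega
  have key := ups_supermodular (by simp) (not_dvd_of_mem_Icc_succ hm) hW hmul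
  rw [insert_Icc_succ hmn, ← himg, ups_card_image f L hdvd,
    ups_card_image f (L.erase 720) fun a ha b hb =>
      hdvd a (Finset.mem_of_mem_erase ha) b (Finset.mem_of_mem_erase hb)] at key
  have pos : ∀ V : Finset ℕ, (0 : ℝ) < (ups V).card := fun V => by exact_mod_cast ups_card_pos V
  have key' : ((ups L).card : ℝ) * (ups (Finset.Icc (m + 1) n)).card ≤
      (ups (Finset.Icc m n)).card * (ups (L.erase 720)).card := by exact_mod_cast key
  have := Real.log_le_log (mul_pos (pos _) (pos _)) key'
  rw [Real.log_mul (pos _).ne' (pos _).ne', Real.log_mul (pos _).ne' (pos _).ne'] at this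
  unfold gain
  linarith

/-! ### Densities of integers -/

lemma classOf_periodic (c : ℕ) : Function.Periodic (fun m => classOf m = c) 720 := by
  intro m
  simp only [classOf]
  rw [Nat.gcd_add_self_right]

lemma card_class_Ico {c φ : ℕ} (h : Nat.count (fun m => classOf m = c) 720 = φ) (a q : ℕ) :
    ((Finset.Ico a (a + 720 * q)).filter fun m => classOf m = c).card = φ * q := by
  induction q with
  | zero => simp
  | succ q ih =>
    have hu : Finset.Ico a (a + 720 * (q + 1)) =
        Finset.Ico a (a + 720 * q) ∪ Finset.Ico (a + 720 * q) (a + 720 * q + 720) := by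
      rw [Finset.Ico_union_Ico_eq_Ico (by omega) (by omega), mul_add, mul_one, add_assoc]
    rw [hu, Finset.filter_union, Finset.card_union_of_disjoint
      (Finset.disjoint_filter_filter (Finset.Ico_disjoint_Ico_consecutive _ _ _)), ih,
      Nat.filter_Ico_card_eq_of_periodic _ _ _ (classOf_periodic c), h]
    ring

/-- The integers `m ≤ n` satisfying `cl` with `720 n / m ∈ [lo, hi)`. -/
def window (cl : ℕ → Prop) (lo hi n : ℕ) : Finset ℕ :=
  open Classical in (Finset.Icc 1 n).filter fun m => cl m ∧ m * lo ≤ 720 * n ∧ 720 * n < m * hi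

lemma mem_window {cl : ℕ → Prop} {lo hi n m : ℕ} :
    m ∈ window cl lo hi n ↔ (1 ≤ m ∧ m ≤ n) ∧ cl m ∧ m * lo ≤ 720 * n ∧ 720 * n < m * hi := by
  classical
  simp [window]

lemma gain_nonneg_of_mem_window {cl : ℕ → Prop} {lo hi n m : ℕ} (h : m ∈ window cl lo hi n) :
    0 ≤ gain n m :=
  gain_nonneg (mem_window.1 h).1.1 (mem_window.1 h).1.2

lemma card_window {c φ lo hi : ℕ} (h : Nat.count (fun m => classOf m = c) 720 = φ)
    (hlo : 720 ≤ lo) (hhi : 0 < hi) (n : ℕ) :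
    φ * (n * (1 / lo - 1 / hi : ℝ) - 2) ≤ (window (fun m => classOf m = c) lo hi n).card := by
  obtain ⟨a, ha⟩ : ∃ a, a = 720 * n / hi + 1 := ⟨_, rfl⟩
  obtain ⟨b, hb⟩ : ∃ b, b = 720 * n / lo + 1 := ⟨_, rfl⟩
  obtain ⟨q, hq⟩ : ∃ q, q = (b - a) / 720 := ⟨_, rfl⟩
  have h1 : ((Finset.Ico a (a + 720 * q)).filter fun m => classOf m = c) ⊆
      window (fun m => classOf m = c) lo hi n := by
    intro m hm
    obtain ⟨hm, hmc⟩ := Finset.mem_filter.1 hm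
    obtain ⟨hm1, hm2⟩ := Finset.mem_Ico.1 hm
    have ha1 : 1 ≤ a := ha ▸ Nat.le_add_left 1 _
    have hmb : m ≤ 720 * n / lo := by omega
    have h2 : m * lo ≤ 720 * n := (Nat.le_div_iff_mul_le (by omega)).1 hmb
    refine mem_window.2 ⟨⟨by omega, ?_⟩, hmc, h2, ?_⟩
    · have := Nat.mul_le_mul_left m hlo
      omega
    · exact (Nat.div_lt_iff_lt_mul hhi).1 (by omega)
  have h2 : φ * q ≤ (window (fun m => classOf m = c) lo hi n).card :=
    (card_class_Ico h a q).symm.le.trans (Finset.card_le_card h1)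
  have h3 : (φ : ℝ) * q ≤ (window (fun m => classOf m = c) lo hi n).card := by exact_mod_cast h2
  refine le_trans (mul_le_mul_of_nonneg_left ?_ (Nat.cast_nonneg φ)) h3
  have h4 : (b : ℝ) - a ≤ 720 * q + 720 := by
    have : b ≤ a + (720 * q + 720) := by omega
    have : (b : ℝ) ≤ a + (720 * q + 720) := by exact_mod_cast this
    linarith
  have h5 : (a : ℝ) ≤ 720 * n / hi + 1 := by
    have := Nat.cast_div_le (α := ℝ) (m := 720 * n) (n := hi)
    push_cast at this
    rw [ha]
    push_cast
    linarith
  have h6 : (720 * n / lo : ℝ) ≤ b := by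
    have h8 : 720 * n ≤ b * lo := by
      have := Nat.lt_div_mul_add (a := 720 * n) (b := lo) (by omega)
      rw [hb, add_mul, one_mul]
      exact this.le
    have : ((720 * n : ℕ) : ℝ) ≤ b * lo := by exact_mod_cast h8
    push_cast at this
    rwa [div_le_iff₀ (by exact_mod_cast (show 0 < lo by omega))]
  have h7 : (n * (1 / lo - 1 / hi : ℝ) - 2) = (720 * n / lo - 720 * n / hi) / 720 - 2 := by ring
  rw [h7]
  linarith

/-- The total gain over the window is at least `r * n - O(1)`. -/
def Dense (cl : ℕ → Prop) (lo hi : ℕ) (r : ℝ) : Prop :=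
  ∃ C : ℝ, ∀ n : ℕ, r * n - C ≤ ∑ m ∈ window cl lo hi n, gain n m

lemma Dense.zero (cl : ℕ → Prop) (lo hi : ℕ) : Dense cl lo hi 0 :=
  ⟨0, fun n => by
    simpa using Finset.sum_nonneg fun m hm => gain_nonneg_of_mem_window hm⟩

lemma Dense.mono {cl : ℕ → Prop} {lo hi : ℕ} {r s : ℝ} (h : Dense cl lo hi r) (hs : s ≤ r) :
    Dense cl lo hi s := by
  obtain ⟨C, hC⟩ := h
  refine ⟨C, fun n => le_trans ?_ (hC n)⟩
  have := mul_le_mul_of_nonneg_right hs (Nat.cast_nonneg (α := ℝ) n)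
  linarith

/-- Disjoint windows inside a common one contribute the sum of their rates, since gains are nonnegative. -/
lemma Dense.glue {cl cl₁ cl₂ : ℕ → Prop} {lo hi lo₁ hi₁ lo₂ hi₂ : ℕ} {r s : ℝ}
    (h₁ : Dense cl₁ lo₁ hi₁ r) (h₂ : Dense cl₂ lo₂ hi₂ s)
    (hd : ∀ n, Disjoint (window cl₁ lo₁ hi₁ n) (window cl₂ lo₂ hi₂ n))
    (hs₁ : ∀ n, window cl₁ lo₁ hi₁ n ⊆ window cl lo hi n)
    (hs₂ : ∀ n, window cl₂ lo₂ hi₂ n ⊆ window cl lo hi n) : Dense cl lo hi (r + s) := by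
  classical
  obtain ⟨C, hC⟩ := h₁
  obtain ⟨D, hD⟩ := h₂
  refine ⟨C + D, fun n => ?_⟩
  have h := Finset.sum_le_sum_of_subset_of_nonneg (f := gain n)
    (Finset.union_subset (hs₁ n) (hs₂ n)) fun m hm _ => gain_nonneg_of_mem_window hm
  rw [Finset.sum_union (hd n)] at h
  linarith [hC n, hD n]

lemma Dense.split {cl : ℕ → Prop} {lo mid hi : ℕ} {r s : ℝ} (h₁ : Dense cl lo mid r)
    (h₂ : Dense cl mid hi s) (hl : lo ≤ mid) (hh : mid ≤ hi) : Dense cl lo hi (r + s) := by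
  refine h₁.glue h₂ (fun n => ?_) (fun n m hm => ?_) (fun n m hm => ?_)
  · rw [Finset.disjoint_left]
    intro m hm hm'
    exact absurd (mem_window.1 hm').2.2.1 (not_le.2 (mem_window.1 hm).2.2.2)
  · obtain ⟨h, hc, h1, h2⟩ := mem_window.1 hm
    exact mem_window.2 ⟨h, hc, h1, h2.trans_le (Nat.mul_le_mul_left _ hh)⟩
  · obtain ⟨h, hc, h1, h2⟩ := mem_window.1 hm
    exact mem_window.2 ⟨h, hc, (Nat.mul_le_mul_left _ hl).trans h1, h2⟩

lemma Dense.union {cl₁ cl₂ cl : ℕ → Prop} {lo hi : ℕ} {r s : ℝ} (h₁ : Dense cl₁ lo hi r)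
    (h₂ : Dense cl₂ lo hi s) (hd : ∀ m, cl₁ m → ¬ cl₂ m) (hs₁ : ∀ m, cl₁ m → cl m)
    (hs₂ : ∀ m, cl₂ m → cl m) : Dense cl lo hi (r + s) := by
  refine h₁.glue h₂ (fun n => ?_) (fun n m hm => ?_) (fun n m hm => ?_)
  · rw [Finset.disjoint_left]
    intro m hm hm'
    exact hd m (mem_window.1 hm).2.1 (mem_window.1 hm').2.1
  · obtain ⟨h, hc, h1⟩ := mem_window.1 hm
    exact mem_window.2 ⟨h, hs₁ m hc, h1⟩
  · obtain ⟨h, hc, h1⟩ := mem_window.1 hm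
    exact mem_window.2 ⟨h, hs₂ m hc, h1⟩

/-- The gain bound of the finite model `L` holds for every `m` of class `c` with `720 n / m ∈ [lo, hi)`, and
there are `φ (1 / lo - 1 / hi) n + O(1)` such `m`. -/
lemma Dense.cell {c φ lo hi : ℕ} {L : Finset ℕ}
    (h : Nat.count (fun m => classOf m = c) 720 = φ)
    (hL : ∀ j ∈ L, c ∣ j ∧ 720 ≤ j ∧ j ≤ lo) (h720 : 720 ∈ L)
    (hcl : ∀ j ∈ L, ∀ t, 0 < t → j * t < hi → j * t ∈ L) (hhi : 0 < hi)
    (hN : (ups (L.erase 720)).card ≤ (ups L).card) :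
    Dense (fun m => classOf m = c) lo hi (φ * ((1 / lo - 1 / hi) *
      (Real.log (ups L).card - Real.log (ups (L.erase 720)).card))) := by
  set r := Real.log (ups L).card - Real.log (ups (L.erase 720)).card with hr
  have hr0 : 0 ≤ r := sub_nonneg.2
    (Real.log_le_log (by exact_mod_cast ups_card_pos _) (by exact_mod_cast hN))
  refine ⟨2 * φ * r, fun n => ?_⟩
  have h1 := Finset.card_nsmul_le_sum (window (fun m => classOf m = c) lo hi n) (gain n) r
    fun m hm => by
      obtain ⟨⟨hm1, -⟩, hc, h2, h3⟩ := mem_window.1 hm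
      exact gain_ge hm1 hc hL h720 hcl h2 h3
  rw [nsmul_eq_mul] at h1
  refine le_trans ?_ h1
  have := mul_le_mul_of_nonneg_right (card_window h (hL 720 h720).2.2 hhi n) hr0
  nlinarith

/-! ### The computation -/

/-- Equal to `f n` (`force_eq`). The kernel has to evaluate `n` to a literal before it can unfold the
recursor, so that `f` receives a number and not an unevaluated expression. For the same reason the
functions of this part are written with explicit recursors and in continuation-passing style. -/
def force {α : Type} (n : ℕ) (f : ℕ → α) : α :=
  Nat.rec (f 0) (fun k _ => f (Nat.succ k)) n

/-- A place in the state of the sweep: the vertex it currently holds (`0` if none), the number of bit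
positions by which switching it on shifts the state, and the bit masks of the states in which it is
on and off. -/
structure Slot where
  vert : ℕ
  shift : ℕ
  one : ℕ
  zero : ℕ

/-- The instruction that adds the vertex `vert` to the sweep. `shift` and `one` are those of the slot it
takes over; `down` is the mask of the states in which `vert` may stay off, and `up` the mask of the
states in which it may be put in. -/
structure Ins where
  vert : ℕ
  shift : ℕ
  one : ℕ
  down : ℕ
  up : ℕ

/-- One step of the sweep on the packed table `A`. The old content of the slot is forgotten by adding
up the two halves of the table, then the new vertex is brought in. A vertex `≥ hi` does not belong to
the model; it is switched on once and for all, which constrains no other vertex. -/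
def step (hi : ℕ) (e : Ins) (A : ℕ) (k : ℕ → ℕ) : ℕ :=
  force (Nat.add (Nat.sub A (Nat.land A e.one)) (Nat.shiftRight (Nat.land A e.one) e.shift)) fun A =>
  cond (Nat.ble hi e.vert) (force (Nat.shiftLeft A e.shift) k)
    (force (Nat.add (Nat.land A e.down) (Nat.shiftLeft (Nat.land A e.up) e.shift)) k)

/-- The packed table after all instructions. -/
def run (hi : ℕ) (L : List Ins) : ℕ → ℕ :=
  List.rec (fun A => A) (fun e _ ih A => step hi e A ih) L

/-- `b = a * q` with `a ≠ 0` and `q` one of the primes up to `17`; the binary digits of `141484` are the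
indicator function of these primes. -/
def isEdge (a b : ℕ) : Bool :=
  cond (Nat.beq (Nat.mod b a) 0) (Nat.testBit 141484 (Nat.div b a)) false

/-- Intersects `D` with the off-masks of the slots holding `v / q` and `U` with the on-masks of the slots
holding `v * q`, for the primes `q` of `isEdge`. -/
def scan (v : ℕ) (fr : List Slot) : ℕ → ℕ → (ℕ → ℕ → ℕ) → ℕ :=
  List.rec (fun D U k => k D U)
    (fun s _ ih D U k =>
      cond (isEdge s.vert v) (force (Nat.land D s.zero) fun D => ih D U k)
        (cond (isEdge v s.vert) (force (Nat.land U s.one) fun U => ih D U k) (ih D U k))) fr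

/-- The vertex `u` has no edge to or from a vertex of `L`. -/
def allFree (u : ℕ) (L : List (ℕ × ℕ)) : Bool :=
  List.rec true (fun e _ ih => cond (isEdge u e.1) false (cond (isEdge e.1 u) false ih)) L

/-- Puts `v` into slot number `j` of `fr`; `k` receives the old slot and the new list. -/
def setSlot (v : ℕ) (fr : List Slot) : ℕ → (Slot → List Slot → ℕ) → ℕ :=
  List.rec (fun _ _ => 0)
    (fun s t ih j k => Nat.rec (k s (⟨v, s.shift, s.one, s.zero⟩ :: t))
      (fun j _ => ih j fun s' t' => k s' (s :: t')) j) fr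

/-- Passes on the off-mask of the slot that holds `720`. -/
def baseZero (fr : List Slot) : (ℕ → ℕ) → ℕ :=
  List.rec (fun _ => 0) (fun s _ ih k => cond (Nat.beq s.vert 720) (k s.zero) (ih k)) fr

/-- Compiles a list of pairs (vertex, slot) to instructions, together with the off-mask of `720` in the
final state. The value is `0` if a vertex is pushed out of its slot before all its neighbours have
been added, or if `720` is pushed out at all. -/
def build (full : ℕ) (L : List (ℕ × ℕ)) : List Slot → (List Ins → ℕ → ℕ) → ℕ :=
  List.rec (fun fr k => baseZero fr fun z => k [] z)
    (fun e t ih fr k =>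
      setSlot e.1 fr e.2 fun s fr' =>
      scan e.1 fr' full full fun D U =>
      cond (allFree s.vert (e :: t))
        (ih fr' fun p z => k (⟨e.1, s.shift, s.one, D, U⟩ :: p) z) 0) L

/-- `45045 * q ^ 13` times the first seven terms of the series `∑ (p / q) ^ (2 * i + 1) / (2 * i + 1)`. -/
def logNum (p q : ℕ) : ℕ :=
  45045 * p * q ^ 12 + 15015 * p ^ 3 * q ^ 10 + 9009 * p ^ 5 * q ^ 8 + 6435 * p ^ 7 * q ^ 6
    + 5005 * p ^ 9 * q ^ 4 + 4095 * p ^ 11 * q ^ 2 + 3465 * p ^ 13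

/-- Computed contributions are integers, in units of `1 / scale`. -/
def scale : ℕ := 10 ^ 15

/-- A lower bound for `scale * (1 / lo - 1 / hi) * (log a - log b)`, by the series
`log (a / b) = 2 artanh ((a - b) / (a + b))`. -/
def logCell (a b lo hi : ℕ) : ℕ :=
  2 * (hi - lo) * scale * logNum (a - b) (a + b) / (lo * hi * 45045 * (a + b) ^ 13)

/-- The contribution of one cell: `a` counts the closed sets of the model cut off at `hi` and `b` those
without `720`. All bit positions are multiples of `128`, so the entries of the packed table are added
up by reducing modulo `2 ^ 128 - 1`. -/
def cellVal (z : ℕ) (p : List Ins) (lo hi : ℕ) : ℕ :=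
  force (run hi p 1) fun A =>
  force (A % (2 ^ 128 - 1)) fun a =>
  force (Nat.land A z % (2 ^ 128 - 1)) fun b => logCell a b lo hi

/-- The sum of `cellVal` over the cells into which the points of `Y` divide `[lo, top)`. -/
def cells (z : ℕ) (p : List Ins) (top : ℕ) (Y : List ℕ) : ℕ → ℕ :=
  List.rec (fun lo => cellVal z p lo top) (fun y _ ih lo => cellVal z p lo y + ih y) Y

/-- Insertion into a sorted list. -/
def ins (a : ℕ) (L : List ℕ) : List ℕ :=
  List.rec [a] (fun b t ih => cond (Nat.ble a b) (a :: b :: t) (b :: ih)) L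

/-- The sorted list of the vertices of `L`. -/
def isort (L : List (ℕ × ℕ)) : List ℕ :=
  List.rec [] (fun a _ ih => ins a.1 ih) L

/-- `List.filter` in continuation-passing style (`filt_eq`). -/
def filt (p : ℕ × ℕ → Bool) (L : List (ℕ × ℕ)) : (List (ℕ × ℕ) → ℕ) → ℕ :=
  List.rec (fun k => k []) (fun a _ ih k => cond (p a) (ih fun l => k (a :: l)) (ih k)) L

/-- All ones in the `512` blocks of `128` bits that make up the packed table for nine slots. -/
def full : ℕ := 2 ^ 65536 - 1

/-- `n` empty slots, the first of which has number `j`; slot `j` shifts by `128 * 2 ^ j`. -/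
def slots (full : ℕ) (n : ℕ) : ℕ → (List Slot → ℕ) → ℕ :=
  Nat.rec (fun _ k => k [])
    (fun _ ih j k =>
      force (128 * 2 ^ j) fun sh =>
      force (full / (2 ^ sh + 1)) fun z =>
      force (full - z) fun o => ih (j + 1) fun t => k (⟨0, sh, o, z⟩ :: t)) n

/-- The divisors `c` of `720`, each with the number of residues modulo `720` in its class. -/
def classes : List (ℕ × ℕ) :=
  [(1, 1), (2, 1), (3, 2), (4, 2), (5, 4), (6, 2), (8, 4), (9, 6), (10, 4), (12, 4), (15, 8),
   (16, 8), (18, 6), (20, 8), (24, 8), (30, 8), (36, 12), (40, 16), (45, 24), (48, 16), (60, 16),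
   (72, 24), (80, 32), (90, 24), (120, 32), (144, 48), (180, 48), (240, 64), (360, 96),
   (720, 192)]

/-- `scale` times the contribution to the window `[720 k, 720 (k + 1))` of the integers in a single
residue modulo `720` of class `c`. -/
def classSum (full : ℕ) (fr : List Slot) (k c : ℕ) (R : List (ℕ × ℕ)) : ℕ :=
  filt (fun e => Nat.beq (Nat.mod e.1 c) 0) R fun Rc =>
  filt (fun e => Nat.ble (Nat.succ (720 * k)) e.1) Rc fun Y =>
  build full Rc fr fun p z => cells z p (720 * (k + 1)) (isort Y) (720 * k)

/-- The contributions of the classes in `cs`, weighted by the class sizes. -/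
def classesSum (full : ℕ) (fr : List Slot) (k : ℕ) (R : List (ℕ × ℕ)) (cs : List (ℕ × ℕ)) : ℕ :=
  List.rec 0 (fun d _ ih => Nat.add (Nat.mul d.2 (classSum full fr k d.1 R)) ih) cs

/-- `scale` times the contribution of the window `[720 k, 720 (k + 1))`, summed over all classes. -/
def levelSum (k : ℕ) (R : List (ℕ × ℕ)) : ℕ :=
  force full fun full => slots full 9 0 fun fr => classesSum full fr k R classes

/-- `R` is a legitimate vertex list for level `k`: it has distinct vertices in `[720, 720 (k + 1))`, among
them `720`, and below `720 (k + 1)` it is closed under multiplication by the primes up to `17`. -/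
def okList (k : ℕ) (R : List (ℕ × ℕ)) : Bool :=
  decide (R.length ≤ 126) && decide ((R.map Prod.fst).Nodup) && (R.map Prod.fst).contains 720 &&
  (R.map Prod.fst).all fun v => Nat.ble 720 v && Nat.blt v (720 * (k + 1)) &&
    [2, 3, 5, 7, 11, 13, 17].all fun q =>
      Nat.ble (720 * (k + 1)) (v * q) || (R.map Prod.fst).contains (v * q)

/-! ### Masks on packed families -/

lemma sum_blocks_lt {f : ℕ → ℕ} (hf : ∀ s, f s < 2 ^ 128) (n : ℕ) :
    ∑ s ∈ Finset.range n, 2 ^ (128 * s) * f s < 2 ^ (128 * n) := by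
  induction n with
  | zero => simp
  | succ n ih =>
    rw [Finset.sum_range_succ, mul_add, mul_one, pow_add]
    have := Nat.mul_le_mul_left (2 ^ (128 * n)) (Nat.succ_le_of_lt (hf n))
    rw [Nat.mul_succ] at this
    omega

lemma land_blocks {f g : ℕ → ℕ} (hf : ∀ s, f s < 2 ^ 128) (hg : ∀ s, g s < 2 ^ 128) (n : ℕ) :
    (∑ s ∈ Finset.range n, 2 ^ (128 * s) * f s) &&& (∑ s ∈ Finset.range n, 2 ^ (128 * s) * g s) =
      ∑ s ∈ Finset.range n, 2 ^ (128 * s) * (f s &&& g s) := by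
  have hfg : ∀ s, f s &&& g s < 2 ^ 128 := fun s => Nat.and_lt_two_pow _ (hg s)
  induction n with
  | zero => simp
  | succ n ih =>
    rw [Finset.sum_range_succ, Finset.sum_range_succ, Finset.sum_range_succ, ← ih,
      add_comm _ (2 ^ (128 * n) * f n), add_comm _ (2 ^ (128 * n) * g n),
      add_comm _ (2 ^ (128 * n) * (f n &&& g n))]
    refine Nat.eq_of_testBit_eq fun i => ?_
    rw [Nat.testBit_and, Nat.testBit_two_pow_mul_add _ (sum_blocks_lt hf n),
      Nat.testBit_two_pow_mul_add _ (sum_blocks_lt hg n),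
      Nat.testBit_two_pow_mul_add _ (ih ▸ sum_blocks_lt hfg n)]
    split <;> simp [Nat.testBit_and]

/-- All ones in the blocks `s < n` with `p s`. -/
def blockMask (p : ℕ → Bool) (n : ℕ) : ℕ :=
  Nat.rec 0 (fun s ih => cond (p s) (2 ^ (128 * s) * (2 ^ 128 - 1) + ih) ih) n

lemma blockMask_eq (p : ℕ → Bool) (n : ℕ) :
    blockMask p n = ∑ s ∈ Finset.range n, 2 ^ (128 * s) * (if p s then 2 ^ 128 - 1 else 0) := by
  induction n with
  | zero => rfl
  | succ n ih =>
    rw [Finset.sum_range_succ, ← ih]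
    change cond (p n) (2 ^ (128 * n) * (2 ^ 128 - 1) + blockMask p n) (blockMask p n) = _
    cases p n <;> simp [add_comm]

/-- When the table entries do not overflow their `128` bits, conjunction with a block mask selects the sets
whose table index satisfies `p`. -/
lemma land_blockMask {ι : Type} (T : Finset ι) (m : ι → ℕ) (n : ℕ) (hm : ∀ U ∈ T, m U < n)
    (hT : T.card < 2 ^ 128) (p : ℕ → Bool) :
    (∑ U ∈ T, 2 ^ (128 * m U)) &&& blockMask p n =
      ∑ U ∈ T.filter (fun U => p (m U) = true), 2 ^ (128 * m U) := by
  classical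
  have key : ∀ S ⊆ T, ∑ U ∈ S, 2 ^ (128 * m U) =
      ∑ s ∈ Finset.range n, 2 ^ (128 * s) * (S.filter fun U => m U = s).card := by
    intro S hS
    rw [← Finset.sum_fiberwise_of_maps_to (s := S) (t := Finset.range n) (g := m)
      fun U hU => Finset.mem_range.2 (hm U (hS hU))]
    refine Finset.sum_congr rfl fun s _ => ?_
    rw [Finset.sum_congr rfl fun U hU => by rw [(Finset.mem_filter.1 hU).2], Finset.sum_const,
      smul_eq_mul, mul_comm]
  have hlt : ∀ s, (T.filter fun U => m U = s).card < 2 ^ 128 := fun s =>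
    (Finset.card_filter_le _ _).trans_lt hT
  rw [key T subset_rfl, key _ (Finset.filter_subset _ _), blockMask_eq,
    land_blocks hlt fun s => by split <;> norm_num]
  refine Finset.sum_congr rfl fun s _ => ?_
  congr 1
  split
  · rename_i h
    rw [Nat.and_two_pow_sub_one_eq_mod, Nat.mod_eq_of_lt (hlt s), Finset.filter_filter]
    congr 1
    ext U
    simp only [Finset.mem_filter]
    exact ⟨fun h' => ⟨h'.1, by rw [h'.2]; exact h, h'.2⟩, fun h' => ⟨h'.1, h'.2.2⟩⟩
  · rename_i h
    rw [Nat.and_zero, Finset.filter_filter]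
    symm
    rw [Finset.card_eq_zero, Finset.filter_eq_empty_iff]
    rintro U - ⟨h1, h2⟩
    rw [h2] at h1
    exact h h1

lemma force_eq {α : Type} (n : ℕ) (f : ℕ → α) : force n f = f n := by
  cases n <;> rfl

/-- All ones in the blocks whose index has bit `j` equal to zero. -/
def zeroMask (j : ℕ) : ℕ := full / (2 ^ (128 * 2 ^ j) + 1)

lemma zeroMask_eq : ∀ j < 9, zeroMask j = blockMask (fun s => !s.testBit j) 512 := by
  decide +kernel

lemma oneMask_eq : ∀ j < 9, full - zeroMask j = blockMask (fun s => s.testBit j) 512 := by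
  decide +kernel

lemma full_eq : full = blockMask (fun _ => true) 512 := by
  decide +kernel

/-- `fr` consists of consecutive slots, the first of which has number `j`. -/
def Shape : ℕ → List Slot → Prop
  | _, [] => True
  | j, s :: t => (s.shift = 128 * 2 ^ j ∧ s.one = full - zeroMask j ∧ s.zero = zeroMask j) ∧
      Shape (j + 1) t

/-- The bit position that encodes the state of the slots in which the vertices satisfying `q` are
switched on. -/
def code (fr : List Slot) (q : ℕ → Bool) : ℕ :=
  (fr.map fun s => if q s.vert then s.shift else 0).sum

/-- The binary number whose bit `i` records whether the content of the `i`-th slot satisfies `q`. -/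
def stateOf : List Slot → (ℕ → Bool) → ℕ
  | [], _ => 0
  | s :: t, q => Nat.bit (q s.vert) (stateOf t q)

lemma stateOf_lt (fr : List Slot) (q : ℕ → Bool) : stateOf fr q < 2 ^ fr.length := by
  induction fr with
  | nil => simp [stateOf]
  | cons s t ih =>
    rw [stateOf, Nat.bit_val, List.length_cons, pow_succ]
    have : (q s.vert).toNat ≤ 1 := Bool.toNat_le _
    omega

lemma code_eq {j : ℕ} {fr : List Slot} (h : Shape j fr) (q : ℕ → Bool) :
    code fr q = 128 * (2 ^ j * stateOf fr q) := by
  induction fr generalizing j with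
  | nil => simp [code, stateOf]
  | cons s t ih =>
    have := ih h.2
    simp only [code, List.map_cons, List.sum_cons, stateOf] at this ⊢
    rw [this, h.1.1, Nat.bit_val, pow_succ]
    cases q s.vert <;> simp <;> ring

lemma exists_slot_index {j : ℕ} {fr : List Slot} (h : Shape j fr) {s : Slot} (hs : s ∈ fr) :
    ∃ i < fr.length, s.one = full - zeroMask (j + i) ∧ s.zero = zeroMask (j + i) ∧
      ∀ q, (stateOf fr q).testBit i = q s.vert := by
  induction fr generalizing j with
  | nil => simp at hs
  | cons a t ih =>
    rcases List.mem_cons.1 hs with rfl | hs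
    · exact ⟨0, by simp, h.1.2.1, h.1.2.2, fun q => by rw [stateOf, Nat.testBit_bit_zero]⟩
    · obtain ⟨i, hi, h1, h2, h3⟩ := ih h.2 hs
      refine ⟨i + 1, by simpa using hi, ?_, ?_, fun q => by
        rw [stateOf, Nat.testBit_bit_succ, h3]⟩
      · rw [h1, Nat.add_right_comm, add_assoc]
      · rw [h2, Nat.add_right_comm, add_assoc]

/-- Intersecting a packed family with `M` keeps exactly the members satisfying `φ`. -/
def IsMask (fr : List Slot) (M : ℕ) (φ : (ℕ → Bool) → Prop) : Prop :=
  ∀ (T : Finset (Finset ℕ)) (q : Finset ℕ → ℕ → Bool), T.card < 2 ^ 128 →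
    (∑ U ∈ T, 2 ^ code fr (q U)) &&& M =
      ∑ U ∈ open Classical in T.filter (fun U => φ (q U)), 2 ^ code fr (q U)

lemma isMask_of_bits {fr : List Slot} (h : Shape 0 fr) (h9 : fr.length = 9)
    {p : ℕ → Bool} {φ : (ℕ → Bool) → Prop} (hp : ∀ q, p (stateOf fr q) = true ↔ φ q) :
    IsMask fr (blockMask p 512) φ := by
  classical
  intro T q hT
  simp only [code_eq h, pow_zero, one_mul]
  rw [land_blockMask T (fun U => stateOf fr (q U)) 512
    (fun U _ => by have := stateOf_lt fr (q U); rw [h9] at this; exact this) hT p]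
  exact Finset.sum_congr (Finset.filter_congr fun U _ => hp _) fun _ _ => rfl

lemma isMask_one {fr : List Slot} (h : Shape 0 fr) (h9 : fr.length = 9) {s : Slot} (hs : s ∈ fr) :
    IsMask fr s.one fun q => q s.vert = true := by
  obtain ⟨i, hi, h1, -, h3⟩ := exists_slot_index h hs
  rw [h1, zero_add, oneMask_eq i (h9 ▸ hi)]
  exact isMask_of_bits h h9 fun q => by rw [h3]

lemma isMask_zero {fr : List Slot} (h : Shape 0 fr) (h9 : fr.length = 9) {s : Slot} (hs : s ∈ fr) :
    IsMask fr s.zero fun q => q s.vert = false := by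
  obtain ⟨i, hi, -, h2, h3⟩ := exists_slot_index h hs
  rw [h2, zero_add, zeroMask_eq i (h9 ▸ hi)]
  exact isMask_of_bits h h9 fun q => by rw [h3]; simp

lemma isMask_full {fr : List Slot} (h : Shape 0 fr) (h9 : fr.length = 9) :
    IsMask fr full fun _ => True := by
  rw [full_eq]
  exact isMask_of_bits h h9 fun q => by simp

lemma IsMask.land {fr : List Slot} {M N : ℕ} {φ ψ : (ℕ → Bool) → Prop} (hM : IsMask fr M φ)
    (hN : IsMask fr N ψ) : IsMask fr (Nat.land M N) fun q => φ q ∧ ψ q := by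
  classical
  intro T q hT
  have : Nat.land M N = M &&& N := rfl
  rw [this, ← Nat.and_assoc, hM T q hT, hN _ q ((Finset.card_filter_le _ _).trans_lt hT),
    Finset.filter_filter]
  exact Finset.sum_congr (by ext U; simp) fun _ _ => rfl

lemma IsMask.congr {fr : List Slot} {M : ℕ} {φ ψ : (ℕ → Bool) → Prop} (hM : IsMask fr M φ)
    (h : ∀ q, φ q ↔ ψ q) : IsMask fr M ψ := by
  have : φ = ψ := funext fun q => propext (h q)
  exact this ▸ hM

/-! ### Correctness of the sweep -/

lemma isEdge_iff {a b : ℕ} :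
    isEdge a b = true ↔ a ≠ 0 ∧ ∃ q ∈ [2, 3, 5, 7, 11, 13, 17], b = a * q := by
  unfold isEdge
  constructor
  · intro h
    rw [Bool.cond_false_right, Bool.and_eq_true] at h
    obtain ⟨h1, h2⟩ := h
    have h1' : b % a = 0 := Nat.eq_of_beq_eq_true h1
    have h2' : Nat.testBit 141484 (b / a) = true := h2
    obtain ⟨t, ht⟩ := Nat.dvd_of_mod_eq_zero h1'
    have ha : a ≠ 0 := by
      rintro rfl
      rw [Nat.div_zero] at h2'
      exact absurd h2' (by decide)
    rw [ht, Nat.mul_div_cancel_left _ (Nat.pos_of_ne_zero ha)] at h2'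
    have ht18 : t < 18 := by
      by_contra hcon
      have : 141484 < 2 ^ t := lt_of_lt_of_le (by norm_num)
        (Nat.pow_le_pow_right (n := 2) (by norm_num) (not_lt.1 hcon))
      rw [Nat.testBit_lt_two_pow this] at h2'
      exact absurd h2' (by decide)
    refine ⟨ha, t, ?_, ht⟩
    clear ht h1 h2 h1'
    revert h2'
    revert t
    decide
  · rintro ⟨ha, q, hq, rfl⟩
    have h1 : Nat.mod (a * q) a = 0 := Nat.mul_mod_right a q
    have h2 : Nat.div (a * q) a = q := Nat.mul_div_cancel_left q (Nat.pos_of_ne_zero ha)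
    have h3 : ∀ q ∈ [2, 3, 5, 7, 11, 13, 17], Nat.testBit 141484 q = true := by decide
    rw [h1, h2]
    exact h3 q hq

lemma isEdge_pos {a b : ℕ} (h : isEdge a b = true) : 0 < a ∧ a < b := by
  obtain ⟨ha, q, hq, rfl⟩ := isEdge_iff.1 h
  have h2 : ∀ q ∈ [2, 3, 5, 7, 11, 13, 17], 2 ≤ q := by decide
  have h2 := h2 q hq
  refine ⟨Nat.pos_of_ne_zero ha, ?_⟩
  nlinarith [Nat.pos_of_ne_zero ha]

lemma isEdge_self (a : ℕ) : ¬ isEdge a a = true := fun h => lt_irrefl _ (isEdge_pos h).2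

/-- The subsets of `P` closed under the edges of the model. -/
def edgeUps (P : Finset ℕ) : Finset (Finset ℕ) :=
  P.powerset.filter fun U => ∀ a ∈ U, ∀ b ∈ P, isEdge a b = true → b ∈ U

lemma mem_edgeUps {P U : Finset ℕ} :
    U ∈ edgeUps P ↔ U ⊆ P ∧ ∀ a ∈ U, ∀ b ∈ P, isEdge a b = true → b ∈ U := by
  simp [edgeUps]

lemma card_edgeUps_le (P : Finset ℕ) : (edgeUps P).card ≤ 2 ^ P.card :=
  (Finset.card_filter_le _ _).trans (Finset.card_powerset P).le

/-- The sweep recursion: `v` may be left out when no chosen vertex has an edge to `v`, and adjoined when every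
vertex that `v` has an edge to is chosen. -/
lemma sum_edgeUps_insert {P : Finset ℕ} {v : ℕ} (hv : v ∉ P) (F : Finset ℕ → ℕ) :
    ∑ U ∈ edgeUps (insert v P), F U =
      ∑ U ∈ (edgeUps P).filter (fun U => ∀ a ∈ U, ¬ isEdge a v = true), F U +
      ∑ U ∈ (edgeUps P).filter (fun U => ∀ b ∈ P, isEdge v b = true → b ∈ U), F (insert v U) := by
  rw [edgeUps, Finset.sum_filter, Finset.sum_powerset_insert hv, edgeUps, Finset.filter_filter,
    Finset.filter_filter, Finset.sum_filter, Finset.sum_filter]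
  congr 1
  · refine Finset.sum_congr rfl fun U hU => ?_
    have hU := Finset.mem_powerset.1 hU
    refine if_congr ⟨fun h => ⟨fun a ha b hb => h a ha b (Finset.mem_insert_of_mem hb),
      fun a ha hav => hv (hU (h a ha v (Finset.mem_insert_self _ _) hav))⟩,
      fun h a ha b hb hab => ?_⟩ rfl rfl
    rcases Finset.mem_insert.1 hb with rfl | hb
    · exact absurd hab (h.2 a ha)
    · exact h.1 a ha b hb hab
  · refine Finset.sum_congr rfl fun U hU => ?_
    have hU := Finset.mem_powerset.1 hU
    refine if_congr ⟨fun h => ⟨fun a ha b hb hab => ?_, fun b hb hab => ?_⟩,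
      fun h a ha b hb hab => ?_⟩ rfl rfl
    · exact (Finset.mem_insert.1 (h a (Finset.mem_insert_of_mem ha) b
        (Finset.mem_insert_of_mem hb) hab)).resolve_left (by rintro rfl; exact hv hb)
    · exact (Finset.mem_insert.1 (h v (Finset.mem_insert_self _ _) b
        (Finset.mem_insert_of_mem hb) hab)).resolve_left (by rintro rfl; exact hv hb)
    · rcases Finset.mem_insert.1 hb with rfl | hbP
      · exact Finset.mem_insert_self _ _
      · refine Finset.mem_insert_of_mem ?_
        rcases Finset.mem_insert.1 ha with rfl | haU
        · exact h.2 b hbP hab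
        · exact h.1 a haU b hbP hab

/-- The switch state of a vertex: vertices `≥ hi` are outside the counted set and act as if they
belonged to every closed set. -/
def on (hi : ℕ) (U : Finset ℕ) (u : ℕ) : Bool := decide (u ∈ U) || Nat.ble hi u

lemma on_iff {hi : ℕ} {U : Finset ℕ} {u : ℕ} : on hi U u = true ↔ u ∈ U ∨ hi ≤ u := by
  simp [on]

lemma on_false_iff {hi : ℕ} {U : Finset ℕ} {u : ℕ} : on hi U u = false ↔ u ∉ U ∧ u < hi := by
  rw [← Bool.not_eq_true, on_iff]
  push Not
  rfl

/-- The packed generating number of the family `T`. -/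
def packed (hi : ℕ) (fr : List Slot) (T : Finset (Finset ℕ)) : ℕ :=
  ∑ U ∈ T, 2 ^ code fr (on hi U)

lemma code_slot (l r : List Slot) (s : Slot) (q : ℕ → Bool) :
    code (l ++ s :: r) q = code (l ++ r) q + if q s.vert then s.shift else 0 := by
  simp only [code, List.map_append, List.map_cons, List.sum_append, List.sum_cons]
  omega

/-- Merging the two states of a slot forgets its content. -/
lemma packed_forget {hi : ℕ} {l r : List Slot} {s : Slot} {T : Finset (Finset ℕ)}
    (hM : IsMask (l ++ s :: r) s.one fun q => q s.vert = true) (hT : T.card < 2 ^ 128) :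
    let A := packed hi (l ++ s :: r) T
    Nat.add (Nat.sub A (Nat.land A s.one)) (Nat.shiftRight (Nat.land A s.one) s.shift) =
      packed hi (l ++ r) T := by
  classical
  intro A
  have h1 : Nat.land A s.one = 2 ^ s.shift *
      ∑ U ∈ T.filter (fun U => on hi U s.vert = true), 2 ^ code (l ++ r) (on hi U) := by
    refine (hM T (on hi) hT).trans ?_
    rw [Finset.mul_sum]
    refine Finset.sum_congr (by ext U; simp) fun U hU => ?_
    rw [code_slot, if_pos (Finset.mem_filter.1 hU).2, pow_add, mul_comm]
  have h2 : A = Nat.land A s.one +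
      ∑ U ∈ T.filter (fun U => ¬ on hi U s.vert = true), 2 ^ code (l ++ r) (on hi U) := by
    rw [h1, Finset.mul_sum]
    refine (Finset.sum_filter_add_sum_filter_not T (fun U => on hi U s.vert = true) _).symm.trans ?_
    congr 1
    · refine Finset.sum_congr rfl fun U hU => ?_
      rw [code_slot, if_pos (Finset.mem_filter.1 hU).2, pow_add, mul_comm]
    · refine Finset.sum_congr rfl fun U hU => ?_
      rw [code_slot, if_neg (Finset.mem_filter.1 hU).2, add_zero]
  have h3 : Nat.shiftRight (Nat.land A s.one) s.shift =
      ∑ U ∈ T.filter (fun U => on hi U s.vert = true), 2 ^ code (l ++ r) (on hi U) := by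
    rw [h1]
    refine (Nat.shiftRight_eq_div_pow _ _).trans ?_
    rw [Nat.mul_div_cancel_left _ (by positivity)]
  have h4 : Nat.sub A (Nat.land A s.one) =
      ∑ U ∈ T.filter (fun U => ¬ on hi U s.vert = true), 2 ^ code (l ++ r) (on hi U) :=
    Nat.sub_eq_of_eq_add' h2
  rw [h3, h4, packed, ← Finset.sum_filter_add_sum_filter_not T (fun U => on hi U s.vert = true)]
  exact Nat.add_comm _ _

lemma setSlot_spec (v : ℕ) (fr : List Slot) : ∀ (j : ℕ) (k : Slot → List Slot → ℕ),
    setSlot v fr j k = 0 ∨ ∃ l s r, fr = l ++ s :: r ∧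
      setSlot v fr j k = k s (l ++ ⟨v, s.shift, s.one, s.zero⟩ :: r) := by
  induction fr with
  | nil => exact fun j k => Or.inl rfl
  | cons a t ih =>
    intro j k
    cases j with
    | zero => exact Or.inr ⟨[], a, t, rfl, rfl⟩
    | succ j =>
      rcases ih j (fun s' t' => k s' (a :: t')) with h | ⟨l, s, r, rfl, h⟩
      · exact Or.inl h
      · exact Or.inr ⟨a :: l, s, r, rfl, h⟩

lemma shape_set {j : ℕ} {l r : List Slot} {s : Slot} (h : Shape j (l ++ s :: r)) (v : ℕ) :
    Shape j (l ++ ⟨v, s.shift, s.one, s.zero⟩ :: r) := by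
  induction l generalizing j with
  | nil => exact h
  | cons a l ih => exact ⟨h.1, ih h.2⟩

/-- Scanning the remembered vertices accumulates two masks: `D'` selects the states in which `v` may be left
out, `U'` those in which `v` may be adjoined. -/
lemma scan_spec (v : ℕ) (fr₀ : List Slot) (hs : Shape 0 fr₀) (h9 : fr₀.length = 9)
    (L : List Slot) : ∀ (D U : ℕ) (k : ℕ → ℕ → ℕ) (φ ψ : (ℕ → Bool) → Prop),
    (∀ s ∈ L, isEdge s.vert v = true ∨ isEdge v s.vert = true → s ∈ fr₀) →
    IsMask fr₀ D φ → IsMask fr₀ U ψ →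
    ∃ D' U', scan v L D U k = k D' U' ∧
      IsMask fr₀ D' (fun q => φ q ∧ ∀ s ∈ L, isEdge s.vert v = true → q s.vert = false) ∧
      IsMask fr₀ U' (fun q => ψ q ∧ ∀ s ∈ L, isEdge v s.vert = true → q s.vert = true) := by
  induction L with
  | nil =>
    intro D U k φ ψ _ hD hU
    exact ⟨D, U, rfl, hD.congr (by simp), hU.congr (by simp)⟩
  | cons a t ih =>
    intro D U k φ ψ hL hD hU
    have hL' : ∀ s ∈ t, isEdge s.vert v = true ∨ isEdge v s.vert = true → s ∈ fr₀ :=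
      fun s hs => hL s (List.mem_cons_of_mem _ hs)
    have hrun : scan v (a :: t) D U k =
        cond (isEdge a.vert v) (force (Nat.land D a.zero) fun D => scan v t D U k)
        (cond (isEdge v a.vert) (force (Nat.land U a.one) fun U => scan v t D U k)
          (scan v t D U k)) := rfl
    rw [hrun]
    cases h1 : isEdge a.vert v
    · cases h2 : isEdge v a.vert
      · obtain ⟨D', U', h, hD', hU'⟩ := ih D U k φ ψ hL' hD hU
        exact ⟨D', U', h, hD'.congr (by simp [h1]), hU'.congr (by simp [h2])⟩
      · obtain ⟨D', U', h, hD', hU'⟩ := ih D (Nat.land U a.one) k φ _ hL' hD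
          (hU.land (isMask_one hs h9 (hL a List.mem_cons_self (Or.inr h2))))
        refine ⟨D', U', ?_, hD'.congr (by simp [h1]), hU'.congr (by simp [h2, and_assoc])⟩
        simp only [cond_false, cond_true, force_eq, h]
    · have h2 : isEdge v a.vert = false := by
        rw [← Bool.not_eq_true]
        intro h2
        exact absurd ((isEdge_pos h1).2.trans (isEdge_pos h2).2) (lt_irrefl _)
      obtain ⟨D', U', h, hD', hU'⟩ := ih (Nat.land D a.zero) U k _ ψ hL'
        (hD.land (isMask_zero hs h9 (hL a List.mem_cons_self (Or.inl h1)))) hU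
      refine ⟨D', U', ?_, hD'.congr (by simp [h1, and_assoc]), hU'.congr (by simp [h2])⟩
      simp only [cond_true, force_eq, h]

lemma allFree_spec {u : ℕ} {L : List (ℕ × ℕ)} (h : allFree u L = true) :
    ∀ e ∈ L, ¬ isEdge u e.1 = true ∧ ¬ isEdge e.1 u = true := by
  induction L with
  | nil => simp
  | cons a t ih =>
    have hrun : allFree u (a :: t) =
        cond (isEdge u a.1) false (cond (isEdge a.1 u) false (allFree u t)) := rfl
    rw [hrun] at h
    cases h1 : isEdge u a.1
    · cases h2 : isEdge a.1 u
      · rw [h1, h2] at h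
        intro e he
        rcases List.mem_cons.1 he with rfl | he
        · simp [h1, h2]
        · exact ih h e he
      · simp [h1, h2] at h
    · simp [h1] at h

lemma mem_slots {l r : List Slot} {s : Slot} {v : ℕ} {x : Slot} :
    x ∈ l ++ ⟨v, s.shift, s.one, s.zero⟩ :: r ↔
      x = ⟨v, s.shift, s.one, s.zero⟩ ∨ x ∈ l ++ r := by
  simp only [List.mem_append, List.mem_cons]
  tauto

lemma code_congr {fr : List Slot} {p q : ℕ → Bool} (h : ∀ s ∈ fr, p s.vert = q s.vert) :
    code fr p = code fr q := by
  unfold code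
  congr 1
  exact List.map_congr_left fun s hs => by rw [h s hs]

lemma land_packed {hi D : ℕ} {fr : List Slot} {T : Finset (Finset ℕ)} {φ : (ℕ → Bool) → Prop}
    {χ : Finset ℕ → Prop} [DecidablePred χ] (hD : IsMask fr D φ) (hT : T.card < 2 ^ 128)
    (h : ∀ U ∈ T, (φ (on hi U) ↔ χ U)) :
    Nat.land (packed hi fr T) D = packed hi fr (T.filter χ) := by
  classical
  refine (hD T (on hi) hT).trans ?_
  unfold packed
  refine Finset.sum_congr ?_ fun _ _ => rfl
  ext U
  simp only [Finset.mem_filter]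
  exact and_congr_right fun hU => h U hU

/-- One step of the sweep: the content of slot `s` is forgotten and the slot is given to the new
vertex `v`. -/
lemma step_spec {l r : List Slot} {s : Slot} {v hi : ℕ} {P : Finset ℕ} {D U : ℕ}
    (hs : Shape 0 (l ++ s :: r)) (h9 : (l ++ s :: r).length = 9) (hv0 : v ≠ 0) (hvP : v ∉ P)
    (hhi : 0 < hi) (hP : ∀ u ∈ P, u ≠ 0 ∧ u < hi) (hcard : P.card < 128)
    (hslot : ∀ x ∈ l ++ s :: r, x.vert = 0 ∨ (x.vert ≠ v ∧ (x.vert < hi → x.vert ∈ P)))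
    (hcov : ∀ u ∈ P, isEdge u v = true ∨ isEdge v u = true → ∃ x ∈ l ++ s :: r, x.vert = u)
    (hfree : ¬ isEdge s.vert v = true ∧ ¬ isEdge v s.vert = true)
    (hD : IsMask (l ++ ⟨0, s.shift, s.one, s.zero⟩ :: r) D fun q =>
      ∀ x ∈ l ++ ⟨v, s.shift, s.one, s.zero⟩ :: r, isEdge x.vert v = true → q x.vert = false)
    (hU : IsMask (l ++ ⟨0, s.shift, s.one, s.zero⟩ :: r) U fun q =>
      ∀ x ∈ l ++ ⟨v, s.shift, s.one, s.zero⟩ :: r, isEdge v x.vert = true → q x.vert = true)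
    (k : ℕ → ℕ) :
    step hi ⟨v, s.shift, s.one, D, U⟩ (packed hi (l ++ s :: r) (edgeUps P)) k =
      k (packed hi (l ++ ⟨v, s.shift, s.one, s.zero⟩ :: r)
        (edgeUps (if v < hi then insert v P else P))) := by
  classical
  have hT : (edgeUps P).card < 2 ^ 128 :=
    (card_edgeUps_le P).trans_lt (Nat.pow_lt_pow_right (by norm_num) hcard)
  have h1 := packed_forget (hi := hi) (isMask_one hs h9 (s := s) (by simp)) hT
  have hrun : ∀ A, step hi ⟨v, s.shift, s.one, D, U⟩ A k =
      force (Nat.add (Nat.sub A (Nat.land A s.one)) (Nat.shiftRight (Nat.land A s.one) s.shift))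
        fun A => cond (Nat.ble hi v) (force (Nat.shiftLeft A s.shift) k)
          (force (Nat.add (Nat.land A D) (Nat.shiftLeft (Nat.land A U) s.shift)) k) :=
    fun A => rfl
  rw [hrun, force_eq]
  simp only at h1
  rw [h1, force_eq, force_eq]
  have h0U : ∀ W ∈ edgeUps P, on hi W 0 = false := fun W hW => by
    rw [on_false_iff]
    exact ⟨fun h0 => (hP 0 ((mem_edgeUps.1 hW).1 h0)).1 rfl, hhi⟩
  have hpk : ∀ T ⊆ edgeUps P, packed hi (l ++ r) T =
      packed hi (l ++ ⟨0, s.shift, s.one, s.zero⟩ :: r) T := fun T hTs => by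
    refine Finset.sum_congr rfl fun W hW => ?_
    rw [code_slot, if_neg (by rw [h0U W (hTs hW)]; simp), add_zero]
  have hlr : ∀ x ∈ l ++ r, x ∈ l ++ s :: r := by
    simp only [List.mem_append, List.mem_cons]
    tauto
  by_cases hv : v < hi
  · have hble : Nat.ble hi v = false := by
      rw [← Bool.not_eq_true, Nat.ble_eq]
      omega
    rw [hble, if_pos hv, cond_false]
    have hcov' : ∀ u ∈ P, isEdge u v = true ∨ isEdge v u = true →
        ∃ x ∈ l ++ ⟨v, s.shift, s.one, s.zero⟩ :: r, x.vert = u := by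
      intro u hu huv
      obtain ⟨x, hx, rfl⟩ := hcov u hu huv
      refine ⟨x, mem_slots.2 (Or.inr ?_), rfl⟩
      simp only [List.mem_append, List.mem_cons] at hx ⊢
      rcases hx with hx | rfl | hx
      · exact Or.inl hx
      · exact absurd huv (by tauto)
      · exact Or.inr hx
    have eD : Nat.land (packed hi (l ++ r) (edgeUps P)) D =
        packed hi (l ++ r) ((edgeUps P).filter fun W => ∀ a ∈ W, ¬ isEdge a v = true) := by
      rw [hpk _ subset_rfl, hpk _ (Finset.filter_subset _ _)]
      refine land_packed hD hT fun W hW => ⟨fun h a ha hav => ?_, fun h x hx hxv => ?_⟩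
      · obtain ⟨x, hx, rfl⟩ := hcov' a ((mem_edgeUps.1 hW).1 ha) (Or.inl hav)
        exact (on_false_iff.1 (h x hx hav)).1 ha
      · exact on_false_iff.2 ⟨fun hxW => h _ hxW hxv, (isEdge_pos hxv).2.trans hv⟩
    have eU : Nat.land (packed hi (l ++ r) (edgeUps P)) U =
        packed hi (l ++ r) ((edgeUps P).filter
          fun W => ∀ b ∈ P, isEdge v b = true → b ∈ W) := by
      rw [hpk _ subset_rfl, hpk _ (Finset.filter_subset _ _)]
      refine land_packed hU hT fun W hW => ⟨fun h b hb hvb => ?_, fun h x hx hvx => ?_⟩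
      · obtain ⟨x, hx, rfl⟩ := hcov' b hb (Or.inr hvb)
        exact (on_iff.1 (h x hx hvb)).resolve_right (not_le.2 (hP _ hb).2)
      · rw [on_iff]
        by_contra hcon
        rw [not_or, not_le] at hcon
        rcases mem_slots.1 hx with rfl | hx
        · exact isEdge_self _ hvx
        · rcases hslot x (hlr x hx) with h0 | ⟨-, hxP⟩
          · have := isEdge_pos hvx
            omega
          · exact hcon.1 (h _ (hxP hcon.2) hvx)
    rw [eD, eU]
    congr 1
    unfold packed
    rw [sum_edgeUps_insert hvP]
    refine congrArg₂ _ ?_ ?_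
    · refine Finset.sum_congr rfl fun W hW => ?_
      have hW := (mem_edgeUps.1 (Finset.mem_filter.1 hW).1).1
      rw [code_slot]
      have : on hi W v = false := on_false_iff.2 ⟨fun h => hvP (hW h), hv⟩
      rw [this]
      simp
    · refine (Nat.shiftLeft_eq _ _).trans ?_
      rw [Finset.sum_mul]
      refine Finset.sum_congr rfl fun W hW => ?_
      rw [code_slot, if_pos (on_iff.2 (Or.inl (Finset.mem_insert_self _ _))), pow_add]
      congr 2
      refine code_congr fun x hx => ?_
      have hxv : x.vert ≠ v := by
        rcases hslot x (hlr x hx) with h0 | h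
        · rw [h0]
          exact hv0.symm
        · exact h.1
      simp [on, hxv]
  · have hble : Nat.ble hi v = true := by
      rw [Nat.ble_eq]
      omega
    rw [hble, if_neg hv, cond_true]
    congr 1
    refine (Nat.shiftLeft_eq _ _).trans ?_
    unfold packed
    rw [Finset.sum_mul]
    refine Finset.sum_congr rfl fun W hW => ?_
    rw [code_slot, if_pos (on_iff.2 (Or.inr (not_lt.1 hv))), pow_add]

lemma baseZero_spec (fr : List Slot) (k : ℕ → ℕ) :
    baseZero fr k = 0 ∨ ∃ s ∈ fr, s.vert = 720 ∧ baseZero fr k = k s.zero := by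
  induction fr with
  | nil => exact Or.inl rfl
  | cons a t ih =>
    have hrun : baseZero (a :: t) k = cond (Nat.beq a.vert 720) (k a.zero) (baseZero t k) := rfl
    rw [hrun]
    cases h : Nat.beq a.vert 720
    · rcases ih with h' | ⟨s, hs, h1, h2⟩
      · exact Or.inl h'
      · exact Or.inr ⟨s, List.mem_cons_of_mem _ hs, h1, h2⟩
    · exact Or.inr ⟨a, List.mem_cons_self, Nat.eq_of_beq_eq_true h, rfl⟩

/-- As `2 ^ 128 ≡ 1` modulo `2 ^ 128 - 1`, reduction adds up all entries of the table. -/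
lemma packed_mod {hi : ℕ} {fr : List Slot} (hs : Shape 0 fr) (T : Finset (Finset ℕ))
    (hT : T.card < 2 ^ 128 - 1) : packed hi fr T % (2 ^ 128 - 1) = T.card := by
  have h1 : packed hi fr T ≡ ∑ U ∈ T, 1 [MOD 2 ^ 128 - 1] := by
    unfold packed
    refine Nat.ModEq.sum fun U _ => ?_
    rw [code_eq hs, pow_mul]
    have : 2 ^ 128 ≡ 1 [MOD 2 ^ 128 - 1] := by decide
    simpa using this.pow (stateOf fr (on hi U))
  rw [Finset.sum_const, smul_eq_mul, mul_one] at h1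
  exact Eq.trans h1 (Nat.mod_eq_of_lt hT)

/-- A successful `build` produces instructions and a mask from which, for every bound `hi`, both
closed-set counts can be read off. -/
lemma build_spec (L : List (ℕ × ℕ)) : ∀ (fr : List Slot) (k : List Ins → ℕ → ℕ) (V : Finset ℕ),
    Shape 0 fr → fr.length = 9 → (∀ s ∈ fr, s.vert = 0 ∨ s.vert ∈ V) →
    (∀ u ∈ V, (∃ s ∈ fr, s.vert = u) ∨
      ∀ e ∈ L, ¬ isEdge u e.1 = true ∧ ¬ isEdge e.1 u = true) →
    (∀ u ∈ V, u ≠ 0) → (∀ e ∈ L, e.1 ≠ 0 ∧ e.1 ∉ V) → (L.map Prod.fst).Nodup →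
    V.card + L.length < 128 →
    build full L fr k = 0 ∨ ∃ p z, build full L fr k = k p z ∧ ∀ hi, 720 < hi →
      run hi p (packed hi fr (edgeUps (V.filter (· < hi)))) % (2 ^ 128 - 1) =
        (edgeUps ((V ∪ (L.map Prod.fst).toFinset).filter (· < hi))).card ∧
      Nat.land (run hi p (packed hi fr (edgeUps (V.filter (· < hi))))) z % (2 ^ 128 - 1) =
        ((edgeUps ((V ∪ (L.map Prod.fst).toFinset).filter (· < hi))).filter
          (720 ∉ ·)).card := by
  classical
  induction L with
  | nil =>
    intro fr k V hs h9 _ _ _ _ _ hc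
    have hrun : build full [] fr k = baseZero fr fun z => k [] z := rfl
    rw [hrun]
    rcases baseZero_spec fr fun z => k [] z with h | ⟨s, hsf, hs7, h⟩
    · exact Or.inl h
    refine Or.inr ⟨[], s.zero, h, fun hi hhi => ?_⟩
    have hT : (edgeUps (V.filter (· < hi))).card < 2 ^ 128 - 1 := by
      refine (card_edgeUps_le _).trans_lt (lt_of_le_of_lt (Nat.pow_le_pow_right (by norm_num)
        ((Finset.card_filter_le _ _).trans (show V.card ≤ 127 by simpa using by omega))) ?_)
      norm_num
    have hr : ∀ A, run hi [] A = A := fun A => rfl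
    simp only [List.map_nil, List.toFinset_nil, Finset.union_empty, hr]
    refine ⟨packed_mod hs _ hT, ?_⟩
    rw [land_packed (χ := fun W => 720 ∉ W) (isMask_zero hs h9 hsf) (by omega) fun W _ => by
      rw [hs7, on_false_iff]
      tauto]
    exact packed_mod hs _ ((Finset.card_filter_le _ _).trans_lt hT)
  | cons e t ih =>
    intro fr k V hs h9 hslot hcov hV0 hL hnd hc
    have hrun : build full (e :: t) fr k = setSlot e.1 fr e.2 fun s fr' =>
        scan e.1 fr' full full fun D U => cond (allFree s.vert (e :: t))
          (build full t fr' fun p z => k (⟨e.1, s.shift, s.one, D, U⟩ :: p) z) 0 := rfl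
    rw [hrun]
    rcases setSlot_spec e.1 fr e.2 fun s fr' =>
        scan e.1 fr' full full fun D U => cond (allFree s.vert (e :: t))
          (build full t fr' fun p z => k (⟨e.1, s.shift, s.one, D, U⟩ :: p) z) 0
      with h | ⟨l, s, r, rfl, h⟩
    · exact Or.inl h
    rw [h]
    have hs0 := shape_set hs 0
    have h90 : (l ++ ⟨0, s.shift, s.one, s.zero⟩ :: r).length = 9 := by simpa using h9
    have h91 : (l ++ ⟨e.1, s.shift, s.one, s.zero⟩ :: r).length = 9 := by simpa using h9
    obtain ⟨D, U, hscan, hD, hU⟩ := scan_spec e.1 _ hs0 h90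
      (l ++ ⟨e.1, s.shift, s.one, s.zero⟩ :: r) full full
      (fun D U => cond (allFree s.vert (e :: t))
          (build full t (l ++ ⟨e.1, s.shift, s.one, s.zero⟩ :: r) fun p z =>
            k (⟨e.1, s.shift, s.one, D, U⟩ :: p) z) 0) _ _
      (fun x hx hxe => by
        rcases mem_slots.1 hx with rfl | hx
        · exact absurd hxe (by simp [isEdge_self])
        · exact mem_slots.2 (Or.inr hx))
      (isMask_full hs0 h90) (isMask_full hs0 h90)
    rw [hscan]
    simp only [true_and] at hD hU
    cases hfree : allFree s.vert (e :: t)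
    · exact Or.inl rfl
    have hfree := allFree_spec hfree
    rw [cond_true]
    have heV := (hL e List.mem_cons_self)
    have hlr : ∀ x ∈ l ++ r, x ∈ l ++ s :: r := by
      simp only [List.mem_append, List.mem_cons]
      tauto
    rw [List.map_cons, List.nodup_cons] at hnd
    rw [List.length_cons] at hc
    rcases ih (l ++ ⟨e.1, s.shift, s.one, s.zero⟩ :: r)
        (fun p z => k (⟨e.1, s.shift, s.one, D, U⟩ :: p) z) (insert e.1 V)
        (shape_set hs _) h91 (fun x hx => by
          rcases mem_slots.1 hx with rfl | hx
          · exact Or.inr (Finset.mem_insert_self _ _)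
          · exact (hslot x (hlr x hx)).imp_right Finset.mem_insert_of_mem)
        (fun u hu => by
          rcases Finset.mem_insert.1 hu with rfl | hu
          · exact Or.inl ⟨_, mem_slots.2 (Or.inl rfl), rfl⟩
          rcases hcov u hu with ⟨x, hx, rfl⟩ | h'
          · simp only [List.mem_append, List.mem_cons] at hx
            rcases hx with hx | rfl | hx
            · exact Or.inl ⟨x, mem_slots.2 (Or.inr (List.mem_append_left _ hx)), rfl⟩
            · exact Or.inr fun e' he' => hfree e' (List.mem_cons_of_mem _ he')
            · exact Or.inl ⟨x, mem_slots.2 (Or.inr (List.mem_append_right _ hx)), rfl⟩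
          · exact Or.inr fun e' he' => h' e' (List.mem_cons_of_mem _ he'))
        (fun u hu => by
          rcases Finset.mem_insert.1 hu with rfl | hu
          · exact heV.1
          · exact hV0 u hu)
        (fun e' he' => ⟨(hL e' (List.mem_cons_of_mem _ he')).1, fun hmem => by
          rcases Finset.mem_insert.1 hmem with heq | hmem
          · exact hnd.1 (heq ▸ List.mem_map_of_mem he')
          · exact (hL e' (List.mem_cons_of_mem _ he')).2 hmem⟩)
        hnd.2 (by rw [Finset.card_insert_of_notMem heV.2]; omega)
      with h0 | ⟨p, z, hpz, hspec⟩
    · exact Or.inl h0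
    refine Or.inr ⟨_, z, hpz, fun hi hhi => ?_⟩
    have hstep : run hi (⟨e.1, s.shift, s.one, D, U⟩ :: p)
        (packed hi (l ++ s :: r) (edgeUps (V.filter (· < hi)))) =
        run hi p (packed hi (l ++ ⟨e.1, s.shift, s.one, s.zero⟩ :: r)
          (edgeUps ((insert e.1 V).filter (· < hi)))) := by
      have hr : ∀ A, run hi (⟨e.1, s.shift, s.one, D, U⟩ :: p) A =
        step hi ⟨e.1, s.shift, s.one, D, U⟩ A (run hi p) := fun A => rfl
      rw [hr, step_spec hs h9 heV.1 (fun h => heV.2 (Finset.mem_filter.1 h).1) (by omega)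
        (fun u hu => ⟨hV0 u (Finset.mem_filter.1 hu).1, (Finset.mem_filter.1 hu).2⟩)
        (lt_of_le_of_lt (Finset.card_filter_le _ _) (by omega))
        (fun x hx => (hslot x hx).imp_right fun hxV => ⟨fun heq => heV.2 (heq ▸ hxV),
          fun hlt => Finset.mem_filter.2 ⟨hxV, hlt⟩⟩)
        (fun u hu hue => by
          rcases hcov u (Finset.mem_filter.1 hu).1 with h' | h'
          · exact h'
          · have := h' e List.mem_cons_self
            exact absurd hue (by tauto))
        (hfree e List.mem_cons_self) hD hU, Finset.filter_insert]
    rw [hstep]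
    have hset : V ∪ ((e :: t).map Prod.fst).toFinset =
        insert e.1 V ∪ (t.map Prod.fst).toFinset := by
      rw [List.map_cons, List.toFinset_cons, Finset.union_insert, Finset.insert_union]
    rw [hset]
    exact hspec hi hhi

lemma slots_succ (F n j : ℕ) (k : List Slot → ℕ) : slots F (n + 1) j k =
    slots F n (j + 1) fun t =>
      k (⟨0, 128 * 2 ^ j, F - F / (2 ^ (128 * 2 ^ j) + 1), F / (2 ^ (128 * 2 ^ j) + 1)⟩ :: t) := by
  have hrun : slots F (n + 1) j k =
    force (128 * 2 ^ j) fun sh => force (F / (2 ^ sh + 1)) fun z =>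
    force (F - z) fun o => slots F n (j + 1) fun t => k (⟨0, sh, o, z⟩ :: t) := rfl
  rw [hrun, force_eq, force_eq, force_eq]

lemma slots_spec (n : ℕ) : ∀ (j : ℕ) (k : List Slot → ℕ), ∃ fr,
    slots full n j k = k fr ∧ Shape j fr ∧ fr.length = n ∧ ∀ s ∈ fr, s.vert = 0 := by
  induction n with
  | zero => exact fun j k => ⟨[], rfl, trivial, rfl, by simp⟩
  | succ n ih =>
    intro j k
    obtain ⟨fr, h1, h2, h3, h4⟩ := ih (j + 1) fun t =>
      k (⟨0, 128 * 2 ^ j, full - zeroMask j, zeroMask j⟩ :: t)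
    refine ⟨⟨0, 128 * 2 ^ j, full - zeroMask j, zeroMask j⟩ :: fr, ?_, ⟨⟨rfl, rfl, rfl⟩, h2⟩,
      by simp [h3], ?_⟩
    · rw [← h1, slots_succ]
      rfl
    · intro s hs
      rcases List.mem_cons.1 hs with rfl | hs
      · rfl
      · exact h4 s hs

/-! ### Reading the entropy of a class off the sweep -/

/-- Every vertex is at least `720`, and all multiples below `hi` are present. -/
def MulClosed (P : Finset ℕ) (hi : ℕ) : Prop :=
  ∀ v ∈ P, 720 ≤ v ∧ ∀ t, 0 < t → v * t < hi → v * t ∈ P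

lemma prime_mem_list {q : ℕ} (hq : q.Prime) (h : q < 19) : q ∈ [2, 3, 5, 7, 11, 13, 17] := by
  interval_cases q <;> first | decide | exact absurd hq (by norm_num)

lemma exists_prime_mul {v t hi : ℕ} (hv : 720 ≤ v) (hhi : hi ≤ 720 * 19) (h : v * t < hi)
    (ht : 1 < t) : ∃ q ∈ [2, 3, 5, 7, 11, 13, 17], ∃ s, 0 < s ∧ s < t ∧ t = q * s := by
  have hq := Nat.minFac_prime ht.ne'
  obtain ⟨s, hs⟩ := Nat.minFac_dvd t
  have hs0 : 0 < s := Nat.pos_of_ne_zero fun h0 => by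
    rw [h0, mul_zero] at hs
    omega
  have ht19 : t < 19 := by nlinarith
  refine ⟨t.minFac, prime_mem_list hq ((Nat.minFac_le (by omega)).trans_lt ht19), s, hs0, ?_, hs⟩
  have := hq.two_le
  nlinarith

lemma mul_mem_of_primes {S : ℕ → Prop} {hi : ℕ} (hhi : hi ≤ 720 * 19) (h7 : ∀ v, S v → 720 ≤ v)
    (hS : ∀ v, S v → ∀ q ∈ [2, 3, 5, 7, 11, 13, 17], v * q < hi → S (v * q)) (t : ℕ) :
    ∀ v, S v → 0 < t → v * t < hi → S (v * t) := by
  induction t using Nat.strong_induction_on with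
  | _ t ih =>
    intro v hv ht hlt
    rcases Nat.lt_or_ge 1 t with h1 | h1
    · obtain ⟨q, hq, s, hs0, hst, rfl⟩ := exists_prime_mul (h7 v hv) hhi hlt h1
      rw [← mul_assoc] at hlt ⊢
      exact ih s hst _ (hS v hv q hq ((Nat.le_mul_of_pos_right _ hs0).trans_lt hlt)) hs0 hlt
    · have : t = 1 := by omega
      rwa [this, mul_one]

/-- Below `720 * 19` the covering relations are multiplications by the seven primes of `isEdge`. -/
lemma edgeUps_eq {P : Finset ℕ} {hi : ℕ} (hhi : hi ≤ 720 * 19) (hP : MulClosed P hi)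
    (hlt : ∀ v ∈ P, v < hi) : edgeUps P = ups P := by
  ext U
  rw [mem_edgeUps, mem_ups]
  refine and_congr_right fun hU => ⟨fun h a ha b hb hab => ?_, fun h a ha b hb hab => ?_⟩
  · obtain ⟨t, rfl⟩ := hab
    have h7 := fun v (hv : v ∈ U) => (hP v (hU hv)).1
    have ht : 0 < t := Nat.pos_of_ne_zero fun h0 => by
      have := (hP _ hb).1
      rw [h0] at this
      omega
    refine mul_mem_of_primes hhi h7 (fun v hv q hq hvq => ?_) t a ha ht (hlt _ hb)
    have hv0 : v ≠ 0 := by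
      have := h7 v hv
      omega
    have hedge : isEdge v (v * q) = true := isEdge_iff.2 ⟨hv0, q, hq, rfl⟩
    have hq0 : 0 < q := by
      have := isEdge_pos hedge
      exact Nat.pos_of_ne_zero fun h0 => by
        rw [h0] at this
        omega
    exact h v hv _ ((hP v (hU hv)).2 q hq0 hvq) hedge
  · obtain ⟨-, q, -, rfl⟩ := isEdge_iff.1 hab
    exact h a ha _ hb (Dvd.intro _ rfl)

lemma filter_ups_erase {P : Finset ℕ} (hP : ∀ v ∈ P, 720 ≤ v) :
    (ups P).filter (720 ∉ ·) = ups (P.erase 720) := by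
  ext U
  rw [Finset.mem_filter, mem_ups, mem_ups, Finset.subset_erase]
  constructor
  · rintro ⟨⟨h1, h2⟩, h3⟩
    exact ⟨⟨h1, h3⟩, fun a ha b hb => h2 a ha b (Finset.mem_of_mem_erase hb)⟩
  · rintro ⟨⟨h1, h3⟩, h2⟩
    refine ⟨⟨h1, fun a ha b hb hab => h2 a ha b (Finset.mem_erase.2 ⟨?_, hb⟩) hab⟩, h3⟩
    rintro rfl
    have := Nat.le_of_dvd (by norm_num) hab
    have := hP a (h1 ha)
    have : a = 720 := by omega
    exact h3 (this ▸ ha)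

lemma logCell_le {a b lo hi : ℕ} (hb : 0 < b) (hba : b ≤ a) (hlo : 0 < lo) (hhi : lo ≤ hi) :
    (logCell a b lo hi : ℝ) ≤
      scale * ((1 / lo - 1 / hi) * (Real.log a - Real.log b)) := by
  have hb' : (0 : ℝ) < b := by exact_mod_cast hb
  have hba' : (b : ℝ) ≤ a := by exact_mod_cast hba
  have ha' : (0 : ℝ) < a := hb'.trans_le hba'
  have hlo' : (0 : ℝ) < lo := by exact_mod_cast hlo
  have hhi' : (lo : ℝ) ≤ hi := by exact_mod_cast hhi
  have hhi0 : (0 : ℝ) < hi := hlo'.trans_le hhi'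
  obtain ⟨z, hz⟩ : ∃ z : ℝ, z = (a - b) / (a + b) := ⟨_, rfl⟩
  have hz0 : 0 ≤ z := hz ▸ div_nonneg (sub_nonneg.2 hba') (by positivity)
  have hz1 : z < 1 := by
    rw [hz, div_lt_one (by positivity)]
    linarith
  have hlog := Real.sum_range_le_log_div hz0 hz1 7
  have hq : (1 + z) / (1 - z) = a / b := by
    rw [div_eq_div_iff (by linarith) hb'.ne', hz]
    field_simp
    ring
  rw [hq, Real.log_div ha'.ne' hb'.ne'] at hlog
  refine (Nat.cast_div_le).trans ?_
  rw [logNum]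
  push_cast [Nat.cast_sub hba, Nat.cast_sub hhi]
  have e1 : (a : ℝ) - b = z * (a + b) := by
    rw [hz]
    field_simp
  rw [e1]
  have hab : (a : ℝ) + b ≠ 0 := by positivity
  have e2 : 2 * ((hi : ℝ) - lo) * (scale : ℝ) *
      (45045 * (z * (a + b)) * (a + b) ^ 12 + 15015 * (z * (a + b)) ^ 3 * (a + b) ^ 10 +
        9009 * (z * (a + b)) ^ 5 * (a + b) ^ 8 + 6435 * (z * (a + b)) ^ 7 * (a + b) ^ 6 +
        5005 * (z * (a + b)) ^ 9 * (a + b) ^ 4 + 4095 * (z * (a + b)) ^ 11 * (a + b) ^ 2 +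
        3465 * (z * (a + b)) ^ 13) / (lo * hi * 45045 * (a + b) ^ 13) =
      scale * ((1 / lo - 1 / hi) * (2 * ∑ i ∈ Finset.range 7, z ^ (2 * i + 1) / (2 * i + 1))) := by
    simp only [Finset.sum_range_succ, Finset.sum_range_zero]
    field_simp
    push_cast
    ring
  rw [e2]
  have h1 : (0 : ℝ) ≤ 1 / lo - 1 / hi := sub_nonneg.2 (one_div_le_one_div_of_le hlo' hhi')
  gcongr
  linarith

/-- The numbers `p`, `z` describe the class model with vertex set `V`. -/
def Reads (p : List Ins) (z : ℕ) (V : Finset ℕ) : Prop :=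
  ∀ hi, 720 < hi → run hi p 1 % (2 ^ 128 - 1) = (edgeUps (V.filter (· < hi))).card ∧
    Nat.land (run hi p 1) z % (2 ^ 128 - 1) =
      ((edgeUps (V.filter (· < hi))).filter (720 ∉ ·)).card

lemma Reads.cell {p : List Ins} {z : ℕ} {V : Finset ℕ} (h : Reads p z V) {c φ lo hi top : ℕ}
    (hφ : Nat.count (fun m => classOf m = c) 720 = φ) (hV : MulClosed V top)
    (hc : ∀ v ∈ V, c ∣ v) (h720 : 720 ∈ V) (htop : top ≤ 720 * 19) (hlt : hi ≤ top)
    (hlo : 720 ≤ lo) (hhi : lo ≤ hi) (h7 : 720 < hi) (hgap : ∀ v ∈ V, v < hi → v ≤ lo) :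
    Dense (fun m => classOf m = c) lo hi (φ * (cellVal z p lo hi / scale)) := by
  obtain ⟨P, hP⟩ : ∃ P, P = V.filter (· < hi) := ⟨_, rfl⟩
  have hmem : ∀ {v}, v ∈ P ↔ v ∈ V ∧ v < hi := by simp [hP]
  have hcl : MulClosed P hi := fun v hv => ⟨(hV v (hmem.1 hv).1).1, fun t ht hvt =>
    hmem.2 ⟨(hV v (hmem.1 hv).1).2 t ht (hvt.trans_le hlt), hvt⟩⟩
  obtain ⟨h1, h2⟩ := h hi h7
  rw [← hP, edgeUps_eq (hlt.trans htop) hcl fun v hv => (hmem.1 hv).2] at h1 h2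
  rw [filter_ups_erase fun v hv => (hcl v hv).1] at h2
  have hle : (ups (P.erase 720)).card ≤ (ups P).card := by
    rw [← filter_ups_erase fun v hv => (hcl v hv).1]
    exact Finset.card_filter_le _ _
  refine (Dense.cell hφ (L := P) (fun j hj => ⟨hc j (hmem.1 hj).1, (hcl j hj).1,
    hgap j (hmem.1 hj).1 (hmem.1 hj).2⟩) (hmem.2 ⟨h720, h7⟩) (fun j hj => (hcl j hj).2)
    (by omega) hle).mono ?_
  have hval : cellVal z p lo hi = logCell (ups P).card (ups (P.erase 720)).card lo hi := by
    unfold cellVal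
    rw [force_eq, force_eq, force_eq, h1, h2]
  have hsc : (0 : ℝ) < scale := by norm_num [scale]
  rw [hval]
  refine mul_le_mul_of_nonneg_left ?_ (Nat.cast_nonneg _)
  rw [div_le_iff₀ hsc, mul_comm _ (scale : ℝ)]
  exact logCell_le (ups_card_pos _) hle (by omega) hhi

lemma Reads.cells {p : List Ins} {z : ℕ} {V : Finset ℕ} (h : Reads p z V) {c φ top : ℕ}
    (hφ : Nat.count (fun m => classOf m = c) 720 = φ) (hV : MulClosed V top)
    (hc : ∀ v ∈ V, c ∣ v) (h720 : 720 ∈ V) (htop : top ≤ 720 * 19) (Y : List ℕ) :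
    ∀ lo, 720 ≤ lo → lo ≤ top → 720 < top → Y.Pairwise (· ≤ ·) →
    (∀ y ∈ Y, 720 < y ∧ lo ≤ y ∧ y ≤ top) → (∀ v ∈ V, v < top → v ≤ lo ∨ v ∈ Y) →
    Dense (fun m => classOf m = c) lo top (φ * (cells z p top Y lo / scale)) := by
  induction Y with
  | nil =>
    intro lo hlo hlt h7 _ _ hgap
    exact h.cell hφ hV hc h720 htop le_rfl hlo hlt h7 fun v hv hvt => by
      simpa using hgap v hv hvt
  | cons y Y ih =>
    intro lo hlo hlt h7 hs hy hgap
    obtain ⟨hy7, hly, hyt⟩ := hy y List.mem_cons_self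
    rw [List.pairwise_cons] at hs
    have hrun : PrimitiveCount.cells z p top (y :: Y) lo =
      cellVal z p lo y + PrimitiveCount.cells z p top Y y := rfl
    rw [hrun, Nat.cast_add, add_div, mul_add]
    refine (h.cell hφ hV hc h720 htop hyt hlo hly hy7 fun v hv hvy => ?_).split
      (ih y (by omega) hyt h7 hs.2 (fun x hx => ?_) fun v hv hvt => ?_) hly hyt
    · refine (hgap v hv (hvy.trans_le hyt)).resolve_right fun hmem => ?_
      rcases List.mem_cons.1 hmem with rfl | hmem
      · omega
      · have := hs.1 v hmem
        omega
    · have := hy x (List.mem_cons_of_mem _ hx)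
      exact ⟨this.1, hs.1 x hx, this.2.2⟩
    · rcases hgap v hv hvt with h' | h'
      · exact Or.inl (h'.trans hly)
      · rcases List.mem_cons.1 h' with rfl | h'
        · exact Or.inl le_rfl
        · exact Or.inr h'

lemma mem_ins {a x : ℕ} {L : List ℕ} : x ∈ ins a L ↔ x = a ∨ x ∈ L := by
  induction L with
  | nil => simp [ins]
  | cons b t ih =>
    have hrun : ins a (b :: t) = cond (Nat.ble a b) (a :: b :: t) (b :: ins a t) := rfl
    rw [hrun]
    cases Nat.ble a b
    · simp only [cond_false, List.mem_cons, ih]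
      tauto
    · simp

lemma pairwise_ins {a : ℕ} {L : List ℕ} (h : L.Pairwise (· ≤ ·)) :
    (ins a L).Pairwise (· ≤ ·) := by
  induction L with
  | nil => simp [ins]
  | cons b t ih =>
    have hrun : ins a (b :: t) = cond (Nat.ble a b) (a :: b :: t) (b :: ins a t) := rfl
    rw [hrun]
    rw [List.pairwise_cons] at h
    cases hab : Nat.ble a b
    · rw [cond_false, List.pairwise_cons]
      refine ⟨fun x hx => ?_, ih h.2⟩
      rw [← Bool.not_eq_true, Nat.ble_eq] at hab
      rcases mem_ins.1 hx with rfl | hx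
      · omega
      · exact h.1 x hx
    · rw [Nat.ble_eq] at hab
      rw [cond_true, List.pairwise_cons, List.pairwise_cons]
      refine ⟨fun x hx => ?_, h⟩
      rcases List.mem_cons.1 hx with rfl | hx
      · exact hab
      · exact hab.trans (h.1 x hx)

lemma isort_spec (L : List (ℕ × ℕ)) :
    (isort L).Pairwise (· ≤ ·) ∧ ∀ x, x ∈ isort L ↔ x ∈ L.map Prod.fst := by
  induction L with
  | nil => exact ⟨List.Pairwise.nil, fun x => Iff.rfl⟩
  | cons a t ih =>
    have hrun : isort (a :: t) = ins a.1 (isort t) := rfl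
    rw [hrun]
    exact ⟨pairwise_ins ih.1, fun x => by rw [mem_ins, ih.2, List.map_cons, List.mem_cons]⟩

lemma filt_eq (p : ℕ × ℕ → Bool) (L : List (ℕ × ℕ)) :
    ∀ k : List (ℕ × ℕ) → ℕ, filt p L k = k (L.filter p) := by
  induction L with
  | nil => exact fun k => rfl
  | cons a t ih =>
    intro k
    have hrun : filt p (a :: t) k = cond (p a) (filt p t fun l => k (a :: l)) (filt p t k) := rfl
    rw [hrun, ih, ih, List.filter_cons]
    cases p a <;> rfl

lemma okList_spec {k : ℕ} {R : List (ℕ × ℕ)} (h : okList k R = true) :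
    R.length ≤ 126 ∧ (R.map Prod.fst).Nodup ∧ 720 ∈ R.map Prod.fst ∧
    ∀ v ∈ R.map Prod.fst, 720 ≤ v ∧ v < 720 * (k + 1) ∧
      ∀ q ∈ [2, 3, 5, 7, 11, 13, 17], v * q < 720 * (k + 1) → v * q ∈ R.map Prod.fst := by
  unfold okList at h
  rw [Bool.and_eq_true, Bool.and_eq_true, Bool.and_eq_true, decide_eq_true_eq, decide_eq_true_eq,
    List.contains_iff_mem, List.all_eq_true] at h
  obtain ⟨⟨⟨h1, h2⟩, h3⟩, h4⟩ := h
  refine ⟨h1, h2, h3, fun v hv => ?_⟩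
  have := h4 v hv
  rw [Bool.and_eq_true, Bool.and_eq_true, Nat.ble_eq, Nat.blt_eq, List.all_eq_true] at this
  obtain ⟨⟨h5, h6⟩, h7⟩ := this
  refine ⟨h5, h6, fun q hq hlt => ?_⟩
  have := h7 q hq
  rw [Bool.or_eq_true, Nat.ble_eq, List.contains_iff_mem] at this
  exact this.resolve_left (not_le.2 hlt)

lemma edgeUps_empty : edgeUps ∅ = {∅} := by
  ext U
  rw [mem_edgeUps, Finset.mem_singleton, Finset.subset_empty]
  constructor
  · exact fun h => h.1
  · rintro rfl
    simp

/-- The value computed for a divisor class is a lower bound for the contribution of the class. -/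
lemma classSum_dense {k c φ : ℕ} {R : List (ℕ × ℕ)} {fr : List Slot} (hk : 0 < k) (hk' : k < 19)
    (hR : okList k R = true) (hs : Shape 0 fr) (h9 : fr.length = 9) (h0 : ∀ s ∈ fr, s.vert = 0)
    (hφ : Nat.count (fun m => classOf m = c) 720 = φ) (hc : c ∣ 720) :
    Dense (fun m => classOf m = c) (720 * k) (720 * (k + 1))
      (φ * (classSum full fr k c R / scale)) := by
  classical
  obtain ⟨hlen, hnd, h720, hcl⟩ := okList_spec hR
  unfold classSum
  rw [filt_eq, filt_eq]
  obtain ⟨Rc, hRc⟩ : ∃ Rc, Rc = R.filter fun e => Nat.beq (Nat.mod e.1 c) 0 := ⟨_, rfl⟩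
  rw [← hRc]
  obtain ⟨V, hV⟩ : ∃ V, V = (Rc.map Prod.fst).toFinset := ⟨_, rfl⟩
  have hsub : Rc.Sublist R := hRc ▸ List.filter_sublist
  have hmem : ∀ v, v ∈ Rc.map Prod.fst ↔ v ∈ R.map Prod.fst ∧ c ∣ v := by
    intro v
    have hdvd : ∀ v, Nat.beq (Nat.mod v c) 0 = true ↔ c ∣ v := fun v =>
      ⟨fun h => Nat.dvd_of_mod_eq_zero (Nat.eq_of_beq_eq_true h), fun h => by
        rw [Nat.beq_eq]
        exact Nat.mod_eq_zero_of_dvd h⟩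
    simp only [hRc, List.mem_map, List.mem_filter, hdvd]
    constructor
    · rintro ⟨e, ⟨h1, h2⟩, rfl⟩
      exact ⟨⟨e, h1, rfl⟩, h2⟩
    · rintro ⟨⟨e, h1, rfl⟩, h2⟩
      exact ⟨e, ⟨h1, h2⟩, rfl⟩
  have hmemV : ∀ v, v ∈ V ↔ v ∈ R.map Prod.fst ∧ c ∣ v := fun v => by
    rw [hV, List.mem_toFinset, hmem]
  have hb := build_spec Rc fr (fun p z => cells z p (720 * (k + 1))
    (isort (Rc.filter fun e => Nat.ble (Nat.succ (720 * k)) e.1)) (720 * k)) ∅ hs h9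
    (fun s hs => Or.inl (h0 s hs)) (by simp) (by simp)
    (fun e he => ⟨by
      have := (hcl e.1 (List.mem_map_of_mem (hsub.subset he))).1
      omega, by simp⟩) (hnd.sublist (hsub.map _)) (by
        have := hsub.length_le
        simp only [Finset.card_empty]
        omega)
  rcases hb with hb | ⟨p, z, hb, hread⟩
  · rw [hb]
    simpa using Dense.zero _ _ _
  rw [hb]
  have hreads : Reads p z V := by
    intro hi hhi
    have h1 : packed hi fr (edgeUps ((∅ : Finset ℕ).filter (· < hi))) = 1 := by
      rw [Finset.filter_empty, edgeUps_empty, packed, Finset.sum_singleton]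
      have : code fr (on hi ∅) = code fr fun _ => false := code_congr fun s hs => by
        rw [h0 s hs, on_false_iff]
        exact ⟨by simp, by omega⟩
      rw [this]
      simp [code]
    have := hread hi hhi
    rwa [h1, Finset.empty_union, ← hV] at this
  refine hreads.cells hφ (fun v hv => ⟨(hcl v ((hmemV v).1 hv).1).1, fun t ht hlt => ?_⟩)
    (fun v hv => ((hmemV v).1 hv).2) ((hmemV 720).2 ⟨h720, hc⟩) (by omega) _ _ (by omega)
    (by omega) (by omega) (isort_spec _).1 (fun y hy => ?_) fun v hv hvt => ?_
  · rw [hmemV]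
    refine ⟨mul_mem_of_primes (S := fun v => v ∈ R.map Prod.fst) (hi := 720 * (k + 1)) (by omega)
      (fun v hv => (hcl v hv).1) (fun v hv => (hcl v hv).2.2) t v ((hmemV v).1 hv).1 ht hlt,
      ((hmemV v).1 hv).2.mul_right _⟩
  · rw [(isort_spec _).2, List.mem_map] at hy
    obtain ⟨e, he, rfl⟩ := hy
    rw [List.mem_filter, Nat.ble_eq] at he
    have := (hcl e.1 (List.mem_map_of_mem (hsub.subset he.1))).2.1
    omega
  · rcases Nat.lt_or_ge (720 * k) v with h | h
    · refine Or.inr ?_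
      rw [(isort_spec _).2, List.mem_map]
      obtain ⟨e, he, rfl⟩ := List.mem_map.1 ((hmem v).2 ((hmemV v).1 hv))
      exact ⟨e, List.mem_filter.2 ⟨he, by rw [Nat.ble_eq]; exact h⟩, rfl⟩
    · exact Or.inl h

lemma classesSum_dense {k : ℕ} {R : List (ℕ × ℕ)} {fr : List Slot} (hk : 0 < k) (hk' : k < 19)
    (hR : okList k R = true) (hs : Shape 0 fr) (h9 : fr.length = 9) (h0 : ∀ s ∈ fr, s.vert = 0)
    (cs : List (ℕ × ℕ))
    (hcs : ∀ d ∈ cs, Nat.count (fun m => classOf m = d.1) 720 = d.2 ∧ d.1 ∣ 720)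
    (hnd : (cs.map Prod.fst).Nodup) :
    Dense (fun m => classOf m ∈ cs.map Prod.fst) (720 * k) (720 * (k + 1))
      (classesSum full fr k R cs / scale) := by
  induction cs with
  | nil =>
    have : (classesSum full fr k R [] : ℝ) / scale = 0 := by simp [classesSum]
    rw [this]
    exact Dense.zero _ _ _
  | cons d cs ih =>
    rw [List.map_cons, List.nodup_cons] at hnd
    have hd := hcs d List.mem_cons_self
    have hrun : classesSum full fr k R (d :: cs) =
      d.2 * classSum full fr k d.1 R + classesSum full fr k R cs := rfl
    rw [hrun, Nat.cast_add, Nat.cast_mul, add_div, mul_div_assoc]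
    refine (classSum_dense hk hk' hR hs h9 h0 hd.1 hd.2).union
      (ih (fun d hd => hcs d (List.mem_cons_of_mem _ hd)) hnd.2) (fun m hm h => ?_)
      (fun m hm => ?_) fun m hm => ?_
    · exact hnd.1 (hm ▸ h)
    · simp [hm]
    · exact List.mem_cons_of_mem _ hm

/-- The positive integers whose divisor class occurs in `classes`. -/
def Listed (m : ℕ) : Prop := classOf m ∈ classes.map Prod.fst

lemma classes_spec :
    (∀ d ∈ classes, Nat.count (fun m => classOf m = d.1) 720 = d.2 ∧ d.1 ∣ 720) ∧
      (classes.map Prod.fst).Nodup := by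
  decide +kernel

lemma levelSum_dense {k B lo hi : ℕ} {R : List (ℕ × ℕ)} (hlo : lo = 720 * k)
    (hhi : hi = 720 * (k + 1)) (hk : 0 < k) (hk' : k < 19) (hR : okList k R = true)
    (hB : Nat.ble B (levelSum k R) = true) : Dense Listed lo hi (B / 10 ^ 15) := by
  obtain ⟨fr, h1, h2, h3, h4⟩ := slots_spec 9 0 fun fr => classesSum full fr k R classes
  have h5 : levelSum k R = classesSum full fr k R classes := by
    unfold levelSum
    rw [force_eq, h1]
  rw [Nat.ble_eq, h5] at hB
  rw [hlo, hhi]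
  refine (classesSum_dense hk hk' hR h2 h3 h4 classes classes_spec.1 classes_spec.2).mono ?_
  have hsc : (scale : ℝ) = 10 ^ 15 := by norm_num [scale]
  rw [hsc]
  gcongr

/-! ### The eighteen levels -/

/-- The vertices of level `1`, in the order in which the sweep adds them; the second component is
the slot that a vertex takes over. The lists `R2`, …, `R18` do the same for the other levels. -/
def R1 : List (ℕ × ℕ) :=
  [(720, 8)]

def R2 : List (ℕ × ℕ) :=
  [(720, 8), (1440, 0)]

def R3 : List (ℕ × ℕ) :=
  [(1080, 0), (2160, 1), (720, 8), (1440, 0)]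

def R4 : List (ℕ × ℕ) :=
  [(1215, 0), (2430, 1), (810, 0), (1620, 1), (3240, 0), (1080, 1), (2160, 0), (720, 8), (1440, 0),
   (2880, 1), (960, 0), (1920, 1)]

def R5 : List (ℕ × ℕ) :=
  [(3456, 0), (1152, 1), (2304, 0), (768, 1), (1536, 0), (3072, 2), (3840, 0), (1280, 1),
   (2560, 2), (1920, 1), (960, 0), (2880, 1), (1440, 0), (720, 8), (2160, 0), (3600, 1), (1080, 2),
   (3240, 0), (1620, 2), (810, 0), (2430, 2), (1215, 3), (3645, 2), (4050, 2), (2025, 0),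
   (1350, 0), (2700, 2), (900, 0), (1800, 2), (1200, 0), (2400, 1), (800, 0), (1600, 1), (3200, 2),
   (4000, 1), (2000, 0), (1000, 1), (3000, 0)]

def R6 : List (ℕ × ℕ) :=
  [(3000, 0), (1500, 1), (4500, 0), (750, 2), (3750, 1), (2250, 1), (1125, 2), (3375, 1), (900, 1),
   (2700, 0), (1350, 2), (4050, 0), (2025, 2), (810, 2), (1800, 0), (3600, 1), (2430, 0),
   (1620, 3), (1215, 2), (3645, 4), (4860, 2), (3240, 0), (1080, 3), (972, 0), (2916, 2),
   (1944, 2), (3888, 0), (2160, 2), (1296, 3), (2592, 0), (864, 3), (720, 8), (4320, 0), (1440, 2),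
   (2880, 0), (1200, 2), (2400, 1), (960, 2), (1728, 0), (3456, 3), (1152, 0), (2304, 3),
   (4800, 0), (1920, 4), (800, 2), (1600, 1), (3200, 0), (3840, 0), (4000, 1), (2000, 2),
   (1280, 1), (2560, 2), (768, 1), (1536, 0), (4608, 1), (3072, 1)]

def R7 : List (ℕ × ℕ) :=
  [(1944, 0), (3888, 1), (1296, 0), (2592, 1), (5184, 0), (864, 2), (1728, 1), (3456, 0),
   (1152, 1), (2304, 0), (4608, 1), (4320, 0), (1440, 1), (2160, 2), (2880, 0), (720, 8), (960, 1),
   (1080, 0), (1920, 2), (3840, 3), (1280, 2), (2560, 3), (5120, 2), (4800, 2), (3240, 1),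
   (1620, 3), (5400, 1), (4860, 0), (2430, 4), (810, 0), (1215, 3), (3645, 4), (1600, 3),
   (3200, 4), (2400, 4), (800, 2), (1200, 3), (3600, 4), (1800, 3), (900, 4), (2700, 3), (1350, 1),
   (4050, 3), (2025, 1), (4500, 1), (5040, 3), (5670, 4), (1500, 0), (2250, 5), (3000, 1),
   (1000, 0), (5000, 1), (2000, 1), (4000, 0), (1125, 0), (3375, 1), (5625, 1), (5600, 0),
   (2800, 1), (1400, 2), (1120, 1), (4200, 0), (2100, 2), (840, 2), (1680, 0), (3360, 5),
   (2240, 0), (4480, 1), (2520, 0), (1260, 1), (1008, 0), (3780, 2), (1890, 1), (945, 3),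
   (2835, 1), (4725, 1), (1134, 1), (3402, 3), (2268, 3), (756, 1), (5292, 2), (4536, 2),
   (1512, 3), (3024, 1), (2016, 1), (4032, 0), (1344, 1), (2688, 0), (5376, 1)]

def R8 : List (ℕ × ℕ) :=
  [(2940, 0), (5880, 1), (1960, 0), (3920, 2), (840, 0), (4200, 1), (2100, 2), (1050, 1),
   (5250, 3), (3150, 3), (6300, 1), (1575, 2), (4725, 3), (945, 2), (2835, 3), (1890, 4),
   (5670, 2), (3780, 3), (810, 4), (1260, 2), (2520, 5), (1680, 2), (5040, 0), (3360, 5),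
   (1120, 2), (756, 5), (5292, 3), (900, 3), (2240, 1), (4480, 6), (5600, 1), (800, 2), (2268, 1),
   (4536, 6), (1512, 1), (3024, 5), (1008, 1), (2016, 6), (6048, 1), (4032, 5), (1344, 6),
   (2688, 5), (5376, 6), (720, 8), (864, 0), (2430, 1), (4860, 5), (1620, 1), (3240, 5), (1080, 1),
   (4050, 5), (1350, 4), (2025, 6), (6075, 5), (2700, 5), (5400, 4), (1800, 5), (2160, 4),
   (3600, 1), (4320, 5), (1440, 4), (1200, 5), (2880, 1), (4500, 4), (1500, 3), (2250, 6),
   (3000, 4), (6000, 3), (2000, 4), (4000, 3), (2400, 3), (1125, 4), (3375, 5), (5625, 5),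
   (1600, 4), (4800, 2), (960, 3), (3200, 2), (6400, 4), (1280, 2), (1920, 4), (3840, 3),
   (5760, 3), (2560, 1), (5120, 2), (1152, 1), (2304, 2), (4608, 3), (3456, 2), (1728, 1),
   (5184, 2), (2592, 1), (1296, 0), (3888, 1)]

def R9 : List (ℕ × ℕ) :=
  [(2916, 0), (5832, 1), (1944, 0), (3888, 1), (1296, 0), (2592, 1), (6480, 2), (5184, 0),
   (1728, 3), (864, 0), (3456, 1), (6912, 3), (1152, 4), (2304, 1), (4608, 3), (1536, 1),
   (3072, 3), (6144, 1), (5760, 1), (1920, 3), (2880, 4), (3840, 1), (960, 5), (1280, 3),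
   (1440, 1), (2560, 4), (5120, 6), (6400, 4), (3200, 3), (1600, 4), (4320, 3), (2160, 6),
   (720, 8), (1080, 1), (3240, 3), (1620, 2), (5400, 3), (6048, 1), (4800, 0), (2400, 6), (800, 0),
   (5600, 4), (4000, 4), (2000, 0), (1200, 4), (6000, 6), (3000, 0), (1500, 6), (3600, 0),
   (1800, 4), (2700, 0), (900, 3), (4500, 4), (2250, 6), (1350, 4), (6750, 0), (3375, 6),
   (4050, 0), (5040, 4), (6300, 6), (6720, 3), (2025, 5), (6075, 7), (810, 5), (4860, 0),
   (2430, 2), (1215, 0), (3645, 2), (5670, 0), (1890, 2), (3780, 0), (1260, 2), (2520, 0),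
   (840, 2), (1680, 0), (3360, 5), (1008, 0), (2016, 4), (3024, 5), (1512, 1), (4536, 5),
   (4032, 1), (1344, 4), (2240, 1), (4480, 3), (2688, 1), (5376, 3), (7056, 1), (3528, 0),
   (4200, 0), (2100, 1), (1050, 0), (5250, 1), (3150, 1), (1575, 0), (4725, 1), (5880, 0),
   (2940, 1), (1960, 1), (3920, 0)]

def R10 : List (ℕ × ℕ) :=
  [(3528, 0), (7056, 1), (2352, 0), (4704, 2), (1008, 0), (2016, 1), (4032, 2), (1344, 3),
   (6048, 2), (2688, 1), (5376, 4), (6720, 1), (2240, 3), (4480, 4), (3024, 3), (1512, 4),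
   (4536, 3), (864, 3), (5040, 2), (7560, 0), (3360, 4), (1680, 5), (840, 4), (5880, 5), (960, 5),
   (2520, 1), (4200, 6), (2100, 4), (1260, 6), (3780, 1), (6300, 1), (720, 8), (1080, 2),
   (3150, 0), (1575, 4), (4725, 0), (7875, 0), (900, 0), (2700, 1), (5400, 4), (1800, 1),
   (3600, 4), (4500, 1), (2250, 0), (6750, 6), (1500, 0), (7500, 1), (3000, 1), (6000, 0),
   (1200, 1), (2000, 6), (4000, 0), (7200, 6), (2400, 4), (800, 1), (5600, 0), (4800, 0),
   (1600, 4), (3200, 0), (6400, 1), (1280, 0), (1440, 1), (2160, 4), (4320, 6), (2880, 6),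
   (1920, 1), (5760, 5), (3840, 6), (7680, 1), (2560, 6), (5120, 0), (1152, 0), (3240, 1),
   (6480, 2), (1296, 4), (1620, 2), (1728, 1), (2592, 5), (5184, 3), (3456, 3), (6912, 1),
   (2304, 3), (4608, 0), (7776, 0), (3888, 1), (1944, 0), (5832, 1), (2916, 3), (972, 1),
   (6804, 0), (4860, 0), (810, 1), (5670, 2), (2430, 2), (4050, 0), (2025, 1), (6075, 0),
   (1215, 1), (3645, 0), (7290, 1)]

def R11 : List (ℕ × ℕ) :=
  [(3000, 0), (6000, 1), (1200, 0), (2400, 1), (4800, 2), (7200, 3), (960, 1), (1920, 2),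
   (3840, 4), (5760, 5), (2880, 2), (7680, 5), (2560, 4), (5120, 5), (1440, 4), (3600, 2),
   (6720, 3), (8400, 1), (2800, 0), (5600, 5), (1120, 0), (2240, 5), (4480, 6), (3360, 5),
   (7840, 3), (3920, 0), (1960, 3), (5880, 0), (1680, 3), (840, 5), (4200, 0), (2100, 1),
   (5040, 0), (2520, 3), (720, 8), (1800, 0), (4320, 2), (6300, 4), (3150, 1), (1260, 1), (900, 5),
   (3780, 4), (5400, 1), (7560, 0), (1890, 3), (5670, 4), (810, 3), (4500, 4), (2250, 6),
   (6750, 4), (1350, 6), (2700, 4), (4050, 5), (8100, 6), (1080, 4), (1512, 1), (4536, 0),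
   (3024, 0), (6048, 1), (864, 0), (2160, 1), (1620, 2), (3240, 5), (6480, 4), (4860, 1),
   (2430, 2), (1296, 1), (7290, 3), (3645, 2), (1458, 2), (4374, 3), (2916, 3), (5832, 2),
   (1944, 3), (3888, 2), (7776, 3), (2592, 2), (5184, 1), (1728, 2), (3456, 0), (6912, 1),
   (2304, 0), (4608, 1), (7920, 0), (1584, 1), (3168, 2), (6336, 3), (4752, 2), (2376, 3),
   (792, 2), (5544, 1), (7128, 1), (3564, 3), (3960, 1), (2640, 2), (1320, 0), (1980, 3),
   (6600, 1), (3300, 0), (2200, 0), (4400, 1), (880, 0), (5280, 1), (1760, 2), (3520, 1),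
   (7040, 2), (6160, 1), (3080, 0), (5940, 0), (2970, 1), (990, 0), (1485, 2), (4455, 1),
   (7425, 1), (2475, 2), (4950, 1), (6930, 1), (3465, 0)]

def R12 : List (ℕ × ℕ) :=
  [(3150, 0), (6300, 1), (900, 0), (1260, 2), (8820, 1), (4410, 3), (2205, 1), (6615, 3),
   (3780, 1), (2520, 3), (1890, 2), (5670, 4), (2835, 2), (8505, 4), (7560, 2), (1080, 1),
   (3240, 2), (6480, 4), (1620, 5), (2160, 2), (5400, 4), (4860, 1), (2430, 6), (7290, 1),
   (8100, 1), (2700, 5), (1350, 6), (4050, 5), (2025, 1), (6075, 5), (1800, 1), (6750, 4),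
   (3375, 5), (2250, 5), (4500, 4), (9000, 0), (1500, 5), (7500, 4), (3000, 4), (6000, 0),
   (3600, 4), (2000, 1), (4000, 5), (8000, 1), (1200, 1), (2400, 0), (8400, 5), (2800, 1),
   (5600, 6), (4200, 1), (840, 6), (5880, 1), (1680, 1), (5040, 5), (3360, 3), (6720, 1),
   (9240, 3), (720, 8), (7200, 5), (4800, 4), (960, 0), (1440, 1), (4320, 4), (2880, 2), (1920, 1),
   (5760, 0), (3840, 0), (7680, 1), (2560, 0), (5120, 1), (8640, 0), (864, 1), (6048, 2),
   (1728, 2), (2592, 0), (5184, 1), (3456, 1), (6912, 2), (7776, 1), (3888, 0), (1320, 0),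
   (7920, 1), (2640, 2), (5280, 3), (6600, 2), (3300, 3), (3960, 2), (1584, 0), (1980, 1),
   (5940, 3), (792, 1), (5544, 2), (8712, 2), (2376, 2), (4752, 1), (7128, 1), (3168, 1),
   (6336, 0)]

def R13 : List (ℕ × ℕ) :=
  [(3645, 0), (7290, 1), (2430, 0), (4860, 1), (810, 2), (5670, 0), (9720, 0), (1620, 3),
   (3240, 1), (8100, 0), (4050, 3), (2025, 4), (6075, 3), (2700, 3), (8910, 0), (4455, 2),
   (2970, 2), (5940, 0), (990, 4), (6930, 2), (1980, 2), (4950, 0), (9900, 4), (3960, 0),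
   (7920, 2), (900, 0), (5400, 4), (2640, 3), (5280, 5), (720, 8), (4500, 2), (9000, 3), (1800, 2),
   (6300, 3), (1080, 0), (6480, 4), (2160, 1), (3600, 4), (4320, 2), (7560, 1), (1260, 0),
   (3780, 3), (2520, 3), (8820, 1), (4410, 0), (5040, 0), (1680, 1), (840, 0), (5880, 3),
   (9240, 3), (4200, 3), (8400, 0), (3360, 3), (6720, 1), (960, 3), (2800, 1), (5600, 5),
   (1200, 1), (6000, 0), (2400, 0), (7200, 1), (1440, 4), (2880, 1), (8640, 4), (5760, 2),
   (1728, 1), (5184, 4), (3456, 4), (6912, 1), (1920, 1), (4800, 2), (9360, 0), (9600, 3),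
   (1600, 4), (3200, 2), (6400, 3), (8000, 2), (4000, 4), (3840, 2), (1280, 1), (7680, 3),
   (2560, 2), (5120, 3), (8960, 2), (4480, 1), (3120, 1), (6240, 2), (2080, 3), (4160, 2),
   (8320, 3), (1560, 2), (7800, 1), (3900, 3), (4680, 1), (1872, 2), (3744, 0), (7488, 3),
   (5616, 0), (936, 3), (6552, 2), (2808, 2), (8424, 0), (2340, 0), (7020, 1), (3510, 2),
   (1170, 1), (5850, 0), (8190, 0), (4095, 1)]

def R14 : List (ℕ × ℕ) :=
  [(3645, 0), (7290, 1), (2430, 0), (4860, 1), (1620, 0), (9720, 2), (1944, 1), (5832, 3),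
   (3888, 3), (7776, 1), (3240, 1), (8100, 2), (4050, 0), (1350, 3), (2700, 0), (6480, 2),
   (1080, 4), (2160, 1), (5400, 2), (7560, 5), (1800, 4), (900, 2), (6750, 0), (2250, 6),
   (4500, 0), (9000, 6), (3600, 0), (9450, 4), (4725, 3), (3150, 3), (6300, 6), (1890, 3),
   (5670, 4), (3780, 4), (1260, 3), (2520, 4), (8820, 5), (4410, 3), (9900, 3), (3300, 2),
   (6600, 5), (4950, 2), (990, 5), (6930, 2), (1980, 2), (2970, 3), (5940, 5), (8910, 5),
   (3960, 3), (7920, 2), (2640, 3), (5280, 5), (10560, 3), (960, 5), (1584, 3), (720, 8),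
   (4320, 2), (4752, 1), (9504, 6), (3168, 1), (6336, 3), (8640, 1), (2880, 3), (1440, 1),
   (5760, 2), (1920, 3), (3840, 2), (7680, 6), (9600, 2), (3200, 3), (6400, 6), (4800, 3),
   (2400, 2), (7200, 3), (1200, 3), (6000, 0), (6720, 0), (8400, 2), (10080, 3), (2240, 1),
   (3360, 5), (4480, 0), (8960, 1), (1680, 0), (2800, 1), (5600, 5), (4200, 1), (840, 2),
   (5040, 1), (5880, 0), (9240, 0), (1008, 0), (7056, 1), (2016, 1), (3024, 2), (6048, 0),
   (4032, 0), (8064, 1), (9072, 0), (4536, 1), (9360, 0), (1872, 1), (3744, 2), (7488, 3),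
   (5616, 2), (2808, 1), (8424, 2), (3120, 1), (6240, 2), (1560, 2), (4680, 1), (2340, 0),
   (7020, 1), (7800, 0), (3900, 1), (1950, 0), (5850, 1), (9750, 1)]

def R15 : List (ℕ × ℕ) :=
  [(4725, 0), (9450, 1), (3150, 0), (6300, 2), (1350, 0), (6750, 1), (4050, 1), (8100, 3),
   (2700, 1), (2100, 0), (10500, 3), (4200, 3), (8400, 0), (900, 3), (5400, 2), (4500, 1),
   (9000, 4), (1800, 1), (9900, 4), (3600, 3), (10800, 1), (1080, 5), (2160, 2), (6480, 1),
   (3240, 6), (7560, 1), (2520, 5), (9720, 1), (4860, 6), (2430, 1), (7290, 6), (5040, 1),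
   (1680, 5), (1200, 6), (6000, 0), (2400, 0), (3360, 6), (6720, 5), (10080, 7), (720, 8),
   (7200, 1), (1440, 3), (4320, 1), (8640, 2), (2880, 1), (2016, 2), (6048, 3), (4032, 3),
   (8064, 2), (4800, 2), (960, 0), (5760, 3), (1920, 1), (9600, 3), (3200, 2), (6400, 3),
   (3840, 2), (7680, 1), (2560, 2), (5120, 1), (10240, 2), (10560, 1), (3520, 0), (7040, 2),
   (5280, 0), (2640, 1), (7920, 0), (3960, 2), (1320, 0), (1980, 1), (5940, 2), (2970, 1),
   (8910, 2), (9360, 1), (3120, 2), (6240, 3), (4680, 2), (2340, 1), (7020, 2), (3510, 1),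
   (10530, 2), (5265, 1), (6600, 1), (3300, 2), (9240, 1), (4620, 0), (2310, 1), (4950, 0),
   (1650, 3), (2475, 2), (7425, 0), (825, 0), (9075, 2), (10725, 2), (8250, 2), (4125, 3),
   (5775, 2), (1155, 0), (8085, 2), (6930, 2), (3465, 1), (10395, 0)]

def R16 : List (ℕ × ℕ) :=
  [(4410, 0), (8820, 1), (1260, 0), (6300, 1), (3150, 2), (9450, 1), (4725, 2), (1890, 2),
   (5670, 1), (3780, 3), (11340, 2), (2520, 1), (7560, 0), (5040, 3), (1620, 1), (1080, 2),
   (4860, 0), (9720, 4), (3240, 0), (6480, 4), (8100, 0), (2700, 1), (5400, 0), (2160, 1),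
   (11880, 4), (10800, 2), (1800, 5), (3600, 0), (9000, 2), (4500, 5), (2250, 2), (6750, 5),
   (11250, 5), (7200, 2), (720, 8), (4320, 0), (1440, 1), (8640, 2), (10080, 0), (2880, 3),
   (3360, 1), (5760, 0), (960, 2), (4800, 3), (9600, 5), (1920, 3), (11520, 5), (3840, 0),
   (7680, 3), (6720, 0), (10560, 3), (1120, 2), (7840, 1), (2240, 1), (5600, 0), (11200, 2),
   (4480, 0), (8960, 1), (3520, 0), (7040, 1), (5280, 0), (2640, 1), (7920, 0), (3960, 2),
   (1320, 0), (6600, 1), (9240, 1), (1980, 0), (5940, 1), (2970, 2), (8910, 1), (9900, 1),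
   (4950, 0), (9360, 0), (4680, 1), (1560, 2), (7800, 1), (10920, 1), (3120, 1), (6240, 2),
   (1872, 1), (5616, 0), (11232, 2), (3744, 0), (7488, 1)]

def R17 : List (ℕ × ℕ) :=
  [(4950, 0), (9900, 1), (3300, 0), (6600, 2), (1980, 0), (1320, 1), (9240, 2), (2640, 2),
   (3960, 3), (5940, 1), (2970, 0), (8910, 4), (11880, 0), (7920, 1), (5280, 3), (10560, 2),
   (1080, 2), (720, 8), (7560, 0), (3780, 1), (11340, 0), (5670, 1), (1620, 1), (3240, 0),
   (6480, 3), (9720, 4), (4860, 0), (2160, 4), (2430, 3), (7290, 0), (5400, 0), (8100, 2),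
   (2700, 1), (10800, 1), (3600, 0), (4050, 1), (12150, 2), (6075, 3), (2025, 2), (10125, 1),
   (4320, 1), (8640, 2), (2880, 3), (1440, 2), (5760, 1), (7200, 3), (1200, 4), (2400, 0),
   (10080, 3), (4800, 2), (9600, 5), (1920, 2), (11520, 5), (3840, 1), (7680, 2), (12000, 1),
   (6000, 0), (8400, 0), (1680, 1), (5040, 0), (3360, 0), (6720, 2), (11760, 0), (5880, 1),
   (2016, 0), (6048, 1), (12096, 2), (4032, 1), (8064, 0), (9360, 0), (12240, 1), (4680, 2),
   (1872, 3), (2340, 0), (7020, 2), (11700, 2), (5850, 0), (2925, 2), (8775, 0), (5616, 0),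
   (11232, 2), (3744, 0), (7488, 2), (2448, 0), (7344, 2), (4896, 2), (9792, 0), (4080, 0),
   (8160, 2), (2040, 2), (10200, 0), (6120, 0), (3060, 1), (9180, 0), (4590, 1), (2295, 0),
   (6885, 1), (11475, 1)]

def R18 : List (ℕ × ℕ) :=
  [(4725, 0), (9450, 1), (3150, 0), (6300, 1), (2100, 0), (10500, 2), (4200, 2), (8400, 0),
   (12600, 0), (2520, 1), (1800, 2), (9000, 0), (3000, 3), (6000, 0), (12000, 3), (2400, 0),
   (4800, 3), (9600, 4), (7200, 3), (3600, 0), (5400, 4), (1440, 2), (10080, 3), (5040, 5),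
   (7560, 3), (720, 8), (10800, 1), (1080, 0), (3780, 4), (2160, 3), (11340, 1), (5670, 4),
   (1620, 4), (8100, 1), (4860, 1), (9720, 5), (3240, 1), (6480, 4), (12960, 1), (4320, 4),
   (8640, 1), (2880, 3), (5760, 1), (11520, 2), (3840, 1), (7680, 2), (11880, 1), (7920, 0),
   (3960, 2), (1980, 0), (5940, 2), (2970, 1), (8910, 2), (9900, 1), (4950, 0), (9360, 0),
   (12240, 1), (3120, 2), (4680, 3), (6240, 0), (12480, 4), (1560, 0), (7800, 2), (10920, 2),
   (2340, 0), (7020, 2), (11700, 2), (5850, 0), (4080, 0), (8160, 2), (2040, 2), (10200, 0),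
   (6120, 0), (3060, 1), (9180, 0), (4590, 2), (1530, 0), (7650, 1), (10710, 1)]

lemma level1 : Dense Listed 720 1440 ((346573243726409 : ℕ) / 10 ^ 15) :=
  levelSum_dense (k := 1) (R := R1) (by norm_num) (by norm_num) (by norm_num)
    (by norm_num) (by decide +kernel) (by decide +kernel)

lemma level2 : Dense Listed 1440 2160 ((67577450442481 : ℕ) / 10 ^ 15) :=
  levelSum_dense (k := 2) (R := R2) (by norm_num) (by norm_num) (by norm_num)
    (by norm_num) (by decide +kernel) (by decide +kernel)

lemma level3 : Dense Listed 2160 2880 ((21284379705599 : ℕ) / 10 ^ 15) :=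
  levelSum_dense (k := 3) (R := R3) (by norm_num) (by norm_num) (by norm_num)
    (by norm_num) (by decide +kernel) (by decide +kernel)

lemma level4 : Dense Listed 2880 3600 ((9040200886790 : ℕ) / 10 ^ 15) :=
  levelSum_dense (k := 4) (R := R4) (by norm_num) (by norm_num) (by norm_num)
    (by norm_num) (by decide +kernel) (by decide +kernel)

lemma level5 : Dense Listed 3600 4320 ((3849088866907 : ℕ) / 10 ^ 15) :=
  levelSum_dense (k := 5) (R := R5) (by norm_num) (by norm_num) (by norm_num)
    (by norm_num) (by decide +kernel) (by decide +kernel)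

lemma level6 : Dense Listed 4320 5040 ((2158804223193 : ℕ) / 10 ^ 15) :=
  levelSum_dense (k := 6) (R := R6) (by norm_num) (by norm_num) (by norm_num)
    (by norm_num) (by decide +kernel) (by decide +kernel)

lemma level7 : Dense Listed 5040 5760 ((1040810958188 : ℕ) / 10 ^ 15) :=
  levelSum_dense (k := 7) (R := R7) (by norm_num) (by norm_num) (by norm_num)
    (by norm_num) (by decide +kernel) (by decide +kernel)

lemma level8 : Dense Listed 5760 6480 ((596049874949 : ℕ) / 10 ^ 15) :=
  levelSum_dense (k := 8) (R := R8) (by norm_num) (by norm_num) (by norm_num)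
    (by norm_num) (by decide +kernel) (by decide +kernel)

lemma level9 : Dense Listed 6480 7200 ((347977664121 : ℕ) / 10 ^ 15) :=
  levelSum_dense (k := 9) (R := R9) (by norm_num) (by norm_num) (by norm_num)
    (by norm_num) (by decide +kernel) (by decide +kernel)

lemma level10 : Dense Listed 7200 7920 ((211598362101 : ℕ) / 10 ^ 15) :=
  levelSum_dense (k := 10) (R := R10) (by norm_num) (by norm_num) (by norm_num)
    (by norm_num) (by decide +kernel) (by decide +kernel)

lemma level11 : Dense Listed 7920 8640 ((111676783923 : ℕ) / 10 ^ 15) :=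
  levelSum_dense (k := 11) (R := R11) (by norm_num) (by norm_num) (by norm_num)
    (by norm_num) (by decide +kernel) (by decide +kernel)

lemma level12 : Dense Listed 8640 9360 ((72926986282 : ℕ) / 10 ^ 15) :=
  levelSum_dense (k := 12) (R := R12) (by norm_num) (by norm_num) (by norm_num)
    (by norm_num) (by decide +kernel) (by decide +kernel)

lemma level13 : Dense Listed 9360 10080 ((38329095030 : ℕ) / 10 ^ 15) :=
  levelSum_dense (k := 13) (R := R13) (by norm_num) (by norm_num) (by norm_num)
    (by norm_num) (by decide +kernel) (by decide +kernel)

lemma level14 : Dense Listed 10080 10800 ((24756206453 : ℕ) / 10 ^ 15) :=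
  levelSum_dense (k := 14) (R := R14) (by norm_num) (by norm_num) (by norm_num)
    (by norm_num) (by decide +kernel) (by decide +kernel)

lemma level15 : Dense Listed 10800 11520 ((15088116251 : ℕ) / 10 ^ 15) :=
  levelSum_dense (k := 15) (R := R15) (by norm_num) (by norm_num) (by norm_num)
    (by norm_num) (by decide +kernel) (by decide +kernel)

lemma level16 : Dense Listed 11520 12240 ((9009727723 : ℕ) / 10 ^ 15) :=
  levelSum_dense (k := 16) (R := R16) (by norm_num) (by norm_num) (by norm_num)
    (by norm_num) (by decide +kernel) (by decide +kernel)

lemma level17 : Dense Listed 12240 12960 ((3656305434 : ℕ) / 10 ^ 15) :=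
  levelSum_dense (k := 17) (R := R17) (by norm_num) (by norm_num) (by norm_num)
    (by norm_num) (by decide +kernel) (by decide +kernel)

lemma level18 : Dense Listed 12960 13680 ((2954108980 : ℕ) / 10 ^ 15) :=
  levelSum_dense (k := 18) (R := R18) (by norm_num) (by norm_num) (by norm_num)
    (by norm_num) (by decide +kernel) (by decide +kernel)

lemma total : Dense Listed 720 13680 (452950 / 10 ^ 6) := by
  have h := level1
  replace h := h.split level2 (by norm_num) (by norm_num)
  replace h := h.split level3 (by norm_num) (by norm_num)
  replace h := h.split level4 (by norm_num) (by norm_num)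
  replace h := h.split level5 (by norm_num) (by norm_num)
  replace h := h.split level6 (by norm_num) (by norm_num)
  replace h := h.split level7 (by norm_num) (by norm_num)
  replace h := h.split level8 (by norm_num) (by norm_num)
  replace h := h.split level9 (by norm_num) (by norm_num)
  replace h := h.split level10 (by norm_num) (by norm_num)
  replace h := h.split level11 (by norm_num) (by norm_num)
  replace h := h.split level12 (by norm_num) (by norm_num)
  replace h := h.split level13 (by norm_num) (by norm_num)
  replace h := h.split level14 (by norm_num) (by norm_num)
  replace h := h.split level15 (by norm_num) (by norm_num)
  replace h := h.split level16 (by norm_num) (by norm_num)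
  replace h := h.split level17 (by norm_num) (by norm_num)
  replace h := h.split level18 (by norm_num) (by norm_num)
  refine h.mono ?_
  norm_num

/-! ### The lower limit -/

lemma log_Q_ge : ∃ C : ℝ, ∀ n : ℕ, 452950 / 10 ^ 6 * n - C ≤ Real.log (Q n) := by
  obtain ⟨C, hC⟩ := total
  refine ⟨C, fun n => (hC n).trans ?_⟩
  calc ∑ m ∈ window Listed 720 13680 n, gain n m
      ≤ ∑ m ∈ Finset.Icc 1 n, gain n m := by
        refine Finset.sum_le_sum_of_subset_of_nonneg (fun m hm => ?_) fun m hm _ => ?_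
        · exact Finset.mem_Icc.2 (mem_window.1 hm).1
        · exact gain_nonneg (Finset.mem_Icc.1 hm).1 (Finset.mem_Icc.1 hm).2
    _ = Real.log (ups (Finset.Icc 1 n)).card := sum_gain n
    _ ≤ Real.log (Q n) := Real.log_le_log (by exact_mod_cast ups_card_pos _)
        (by exact_mod_cast ups_card_le_Q n)

lemma Q_le (n : ℕ) : Q n ≤ 2 ^ n := by
  have h : Q n ≤ Nat.card {S : Finset ℕ // S ∈ (Finset.Icc 1 n).powerset} :=
    Nat.card_le_card_of_injective (fun S => ⟨S.1, Finset.mem_powerset.2 S.2.1⟩)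
      fun S T hST => Subtype.ext (congrArg (fun x => x.1) hST)
  refine h.trans_eq ?_
  rw [Nat.card_eq_fintype_card, Fintype.card_coe, Finset.card_powerset, Nat.card_Icc,
    Nat.add_sub_cancel]

lemma Q_pos (n : ℕ) : 0 < Q n := (ups_card_pos _).trans_le (ups_card_le_Q n)

lemma root_le (n : ℕ) : (Q n : ℝ) ^ ((n : ℝ)⁻¹) ≤ 2 := by
  rcases Nat.eq_zero_or_pos n with rfl | hn
  · norm_num
  · calc (Q n : ℝ) ^ ((n : ℝ)⁻¹) ≤ ((2 : ℝ) ^ n) ^ ((n : ℝ)⁻¹) :=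
          Real.rpow_le_rpow (Nat.cast_nonneg _) (by exact_mod_cast Q_le n) (by positivity)
      _ = 2 := Real.pow_rpow_inv_natCast (by norm_num) hn.ne'

lemma exp_gt : (1.572939 : ℝ) < Real.exp (452948 / 10 ^ 6) := by
  refine lt_of_lt_of_le ?_ (Real.sum_le_exp_of_nonneg (by norm_num) 10)
  norm_num [Finset.sum_range_succ, Nat.factorial]

lemma eventually_root_ge :
    ∀ᶠ n : ℕ in Filter.atTop, Real.exp (452948 / 10 ^ 6) ≤ (Q n : ℝ) ^ ((n : ℝ)⁻¹) := by
  obtain ⟨C, hC⟩ := log_Q_ge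
  obtain ⟨N, hN⟩ := exists_nat_ge (C * 500000)
  filter_upwards [Filter.eventually_ge_atTop (N + 1)] with n hn
  have hn0 : (0 : ℝ) < n := by exact_mod_cast (show 0 < n by omega)
  have hn' : (N : ℝ) ≤ n := by exact_mod_cast (show N ≤ n by omega)
  rw [Real.rpow_def_of_pos (by exact_mod_cast Q_pos n), Real.exp_le_exp, ← div_eq_mul_inv,
    le_div_iff₀ hn0]
  refine le_trans ?_ (hC n)
  linarith

end

end PrimitiveCount

theorem primitive_count_liminf_lower_bound :
    1.572939 < Filter.liminf (fun n : ℕ => (Q n : ℝ) ^ ((n : ℝ)⁻¹)) Filter.atTop := by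
  refine PrimitiveCount.exp_gt.trans_le (Filter.le_liminf_of_le ?_
    PrimitiveCount.eventually_root_ge)
  exact (Filter.isBoundedUnder_of ⟨2, PrimitiveCount.root_le⟩).isCoboundedUnder_ge
end
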